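/- Let k ≥ 3 be a natural number, let r be a natural number with 1 ≤ r ≤ k−1, and let s be a natural number with s > r(r−1)/2. Then for each ε > 0 there is a constant C = C(s,k,r,ε) such that for all sufficiently large X one has I_s(X) ≤ C·X^{2s−k+ε}·(X^{η*_r(s,k)−1/r} + X^{η*_r(s,k−1)}), where η*_r(s,w) = r^{−1}·η(s − r(r−1)/2, w). -/

import Mathlib

/-- Number of integral solutions of the Vinogradov system of degree k
in 2s variables from [1,X]. -/
noncomputable def Jcount (s k : ℕ) (X : ℝ) : ℕ :=
  Set.ncard {xy : (Fin s → ℤ) × (Fin s → ℤ) |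
    (∀ i, 1 ≤ xy.1 i ∧ (xy.1 i : ℝ) ≤ X) ∧
    (∀ i, 1 ≤ xy.2 i ∧ (xy.2 i : ℝ) ≤ X) ∧
    ∀ j ∈ Finset.Icc 1 k, ∑ i, ((xy.1 i) ^ j - (xy.2 i) ^ j) = 0}

/-- η(s,k): the least positive η such that, for each ε > 0,
J_{s,k}(X) ≤ C X^{2s - k(k+1)/2 + η + ε} for all sufficiently large X. -/
noncomputable def etaExp (s k : ℕ) : ℝ :=
  sInf {η : ℝ | 0 < η ∧ ∀ ε : ℝ, 0 < ε → ∃ C X₀ : ℝ, 0 < C ∧ ∀ X : ℝ, X₀ ≤ X →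
    (Jcount s k X : ℝ) ≤ C * X ^ (2*(s:ℝ) - (k:ℝ)*((k:ℝ)+1)/2 + η + ε)}

/-- e(z) = exp(2πiz). -/
noncomputable def ec (z : ℝ) : ℂ := Complex.exp (2 * Real.pi * Complex.I * z)

/-- The Weyl sum g_k(α;X) = ∑_{1 ≤ x ≤ X} e(α x^k). -/
noncomputable def gk (k : ℕ) (X : ℝ) (α : ℝ) : ℂ :=
  ∑ x ∈ Finset.Icc 1 ⌊X⌋₊, ec (α * (x:ℝ)^k)

/-- I_s(X) = ∫_0^1 |g_k(α;X)|^{2s} dα. -/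
noncomputable def Iint (s k : ℕ) (X : ℝ) : ℝ := ∫ α in (0:ℝ)..1, ‖gk k X α‖^(2*s)

/-- η*_r(s,w) = η(s - r(r-1)/2, w)/r. -/
noncomputable def etastar (r s w : ℕ) : ℝ := etaExp (s - r*(r-1)/2) w / r

namespace WeylMoment
open Finset

/-- Plancherel on a finite abelian group: additive energy through characters. -/
lemma card_mul_energy_eq_sum_norm_sq {G : Type*} [AddCommGroup G] [Fintype G] [DecidableEq G]
    {α : Type*} (S : Finset α) (g : α → G) :
    (Fintype.card G : ℝ) * #{z ∈ S ×ˢ S | g z.1 = g z.2} =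
      ∑ ψ : AddChar G ℂ, ‖∑ a ∈ S, ψ (g a)‖ ^ 2 := by
  have key : ((∑ ψ : AddChar G ℂ, ‖∑ a ∈ S, ψ (g a)‖ ^ 2 : ℝ) : ℂ) =
      (Fintype.card G : ℂ) * #{z ∈ S ×ˢ S | g z.1 = g z.2} := by
    push_cast
    have h1 : ∀ ψ : AddChar G ℂ, (‖∑ a ∈ S, ψ (g a)‖ : ℂ) ^ 2 =
        ∑ z ∈ S ×ˢ S, ψ (g z.1 - g z.2) := by
      intro ψ
      rw [← Complex.mul_conj', map_sum, sum_mul_sum, ← sum_product']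
      refine sum_congr rfl fun z _ => ?_
      rw [sub_eq_add_neg, AddChar.map_add_eq_mul, AddChar.map_neg_eq_conj]
    simp_rw [h1]
    rw [sum_comm]
    simp_rw [AddChar.sum_apply_eq_ite, sub_eq_zero]
    rw [← sum_filter, sum_const, nsmul_eq_mul, mul_comm]
  exact_mod_cast key.symm

lemma intCast_zmod_inj_of_abs_le {N : ℕ} {R : ℤ} (hN : 2 * R < N) {a b : ℤ}
    (ha : |a| ≤ R) (hb : |b| ≤ R) (h : (a : ZMod N) = b) : a = b := by
  have h1 := (ZMod.intCast_eq_intCast_iff_dvd_sub a b N).1 h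
  have h2 : |b - a| < N := by
    rw [abs_lt]; rw [abs_le] at ha hb; constructor <;> linarith [ha.1, ha.2, hb.1, hb.2]
  have := Int.eq_zero_of_abs_lt_dvd h1 h2
  linarith

/-- Plancherel for integer-vector valued maps, reduced modulo a large `N`. -/
lemma card_mul_energy_int {ι α : Type*} [Fintype ι] [DecidableEq ι] (S : Finset α)
    (f : α → ι → ℤ) (R : ℤ) (hf : ∀ a ∈ S, ∀ i, |f a i| ≤ R) (N : ℕ) [NeZero N]
    (hN : 2 * R < N) :
    (Fintype.card (ι → ZMod N) : ℝ) * #{z ∈ S ×ˢ S | f z.1 = f z.2} =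
      ∑ ψ : AddChar (ι → ZMod N) ℂ, ‖∑ a ∈ S, ψ (fun i => (f a i : ZMod N))‖ ^ 2 := by
  classical
  rw [← card_mul_energy_eq_sum_norm_sq]
  congr 3
  refine filter_congr fun z hz => ?_
  rw [mem_product] at hz
  constructor
  · intro h; rw [h]
  · intro h
    funext i
    exact intCast_zmod_inj_of_abs_le hN (hf _ hz.1 i) (hf _ hz.2 i) (congrFun h i)

/-- Number of pairs of points of `∏ A l` with equal power sums in every degree of `D`. -/
def powEnergy (D : Finset ℕ) {κ : Type} [Fintype κ] [DecidableEq κ] (A : κ → Finset ℤ) : ℕ :=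
  #{z ∈ Fintype.piFinset A ×ˢ Fintype.piFinset A | ∀ d ∈ D, ∑ l, z.1 l ^ d = ∑ l, z.2 l ^ d}

lemma addChar_sum {G ι : Type*} [AddCommGroup G] (ψ : AddChar G ℂ) (s : Finset ι) (f : ι → G) :
    ψ (∑ i ∈ s, f i) = ∏ i ∈ s, ψ (f i) := by
  classical
  induction s using Finset.induction_on with
  | empty => simp
  | insert a s ha ih => rw [sum_insert ha, prod_insert ha, AddChar.map_add_eq_mul, ih]

/-- All power energies of bounded sets in boundedly many variables are moments over one common
finite space of exponential sums. -/
lemma exists_powEnergy_model (D : Finset ℕ) (R σ : ℕ) :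
    ∃ (Ψ : Type) (_ : Fintype Ψ) (_ : Nonempty Ψ) (E : Ψ → ℤ → ℂ),
      ∀ (κ : Type) [Fintype κ] [DecidableEq κ], Fintype.card κ ≤ σ →
        ∀ A : κ → Finset ℤ, (∀ l, ∀ x ∈ A l, |x| ≤ (R : ℤ)) →
          (Fintype.card Ψ : ℝ) * powEnergy D A = ∑ ψ, ∏ l, ‖∑ x ∈ A l, E ψ x‖ ^ 2 := by
  classical
  obtain ⟨M, hM⟩ : ∃ M : ℕ, ∀ d ∈ D, d ≤ M := ⟨D.sup id, fun d hd => le_sup (f := id) hd⟩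
  set B : ℕ := σ * (R + 1) ^ M with hB
  let N : ℕ := 2 * B + 1
  refine ⟨AddChar (D → ZMod N) ℂ, inferInstance, inferInstance,
    fun ψ x => ψ (fun d => ((x ^ (d : ℕ) : ℤ) : ZMod N)), ?_⟩
  intro κ _ _ hκ A hA
  rw [AddChar.card_eq]
  have h := card_mul_energy_int (ι := D) (Fintype.piFinset A)
    (fun x d => ∑ l, x l ^ (d : ℕ)) (B : ℤ) ?_ N (by simp [N])
  · have h2 : powEnergy D A = #{z ∈ Fintype.piFinset A ×ˢ Fintype.piFinset A |
        (fun d : D => ∑ l, z.1 l ^ (d : ℕ)) = (fun d : D => ∑ l, z.2 l ^ (d : ℕ))} := by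
      unfold powEnergy
      congr 1
      refine filter_congr fun z _ => ?_
      rw [funext_iff]
      simp
    rw [h2, h]
    refine sum_congr rfl fun ψ _ => ?_
    rw [prod_pow, ← norm_prod, prod_univ_sum]
    congr 2
    refine sum_congr rfl fun x _ => ?_
    rw [← addChar_sum]
    congr 1
    funext d
    simp
  · intro x hx d
    rw [Fintype.mem_piFinset] at hx
    calc |∑ l, x l ^ (d : ℕ)| ≤ ∑ l, |x l ^ (d : ℕ)| := abs_sum_le_sum_abs _ _
      _ ≤ ∑ _l : κ, ((R : ℤ) + 1) ^ M := by
        refine sum_le_sum fun l _ => ?_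
        rw [abs_pow]
        calc |x l| ^ (d : ℕ) ≤ ((R : ℤ) + 1) ^ (d : ℕ) := by
              gcongr; linarith [hA l _ (hx l)]
          _ ≤ ((R : ℤ) + 1) ^ M := pow_le_pow_right₀ (by linarith [Int.natCast_nonneg R]) (hM _ d.2)
      _ ≤ B := by
        rw [sum_const, nsmul_eq_mul, hB]
        push_cast
        gcongr
        exact_mod_cast hκ

lemma exists_abs_bound (T : Finset ℤ) : ∃ R : ℕ, ∀ x ∈ T, |x| ≤ (R : ℤ) := by
  refine ⟨T.sup fun x => x.natAbs, fun x hx => ?_⟩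
  rw [Int.abs_eq_natAbs]
  exact_mod_cast le_sup (f := fun x : ℤ => x.natAbs) hx

lemma powEnergy_mono {D : Finset ℕ} {κ : Type} [Fintype κ] [DecidableEq κ] {A B : κ → Finset ℤ}
    (h : ∀ l, A l ⊆ B l) : powEnergy D A ≤ powEnergy D B := by
  refine card_le_card (filter_subset_filter _ ?_)
  exact product_subset_product (Fintype.piFinset_subset _ _ h) (Fintype.piFinset_subset _ _ h)

lemma pow_sum_le_card_mul {ρ : Type*} (R : Finset ρ) (a : ρ → ℝ) (ha : ∀ b ∈ R, 0 ≤ a b)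
    (n : ℕ) : (∑ b ∈ R, a b) ^ (n + 1) ≤ (#R : ℝ) ^ n * ∑ b ∈ R, a b ^ (n + 1) := by
  rcases R.eq_empty_or_nonempty with rfl | hR
  · simp
  · have h := pow_sum_div_card_le_sum_pow ha n
    have : (0 : ℝ) < (#R : ℝ) ^ n := by have := hR.card_pos; positivity
    rw [div_le_iff₀ this] at h
    linarith

lemma norm_sum_eq_fiberwise {ρ : Type*} [DecidableEq ρ] {A : Finset ℤ} {cls : ℤ → ρ} {R : Finset ρ}
    (hR : ∀ x ∈ A, cls x ∈ R) (e : ℤ → ℂ) :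
    ‖∑ x ∈ A, e x‖ ≤ ∑ b ∈ R, ‖∑ x ∈ A with cls x = b, e x‖ := by
  rw [← sum_fiberwise_of_maps_to hR]
  exact norm_sum_le _ _

/-- Splitting a set into classes, by Hölder's inequality. -/
lemma powEnergy_split {ρ : Type*} [DecidableEq ρ] (D : Finset ℕ) {κ : Type} [Fintype κ]
    [DecidableEq κ] (B : κ → Finset ℤ) (A : Finset ℤ) (cls : ℤ → ρ) (R : Finset ρ)
    (hR : ∀ x ∈ A, cls x ∈ R) (τ : ℕ) (hτ : 1 ≤ τ) :
    powEnergy D (Sum.elim B fun _ : Fin τ => A) ≤ #R ^ (2 * τ - 1) *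
      ∑ b ∈ R, powEnergy D (Sum.elim B fun _ : Fin τ => {x ∈ A | cls x = b}) := by
  classical
  obtain ⟨N, hN⟩ := exists_abs_bound (A ∪ univ.biUnion B)
  obtain ⟨Ψ, _, _, E, hE⟩ := exists_powEnergy_model D N (Fintype.card (κ ⊕ Fin τ))
  have hB : ∀ l, ∀ x ∈ B l, |x| ≤ (N : ℤ) := fun l x hx =>
    hN x (mem_union_right _ (mem_biUnion.2 ⟨l, mem_univ _, hx⟩))
  have hA : ∀ x ∈ A, |x| ≤ (N : ℤ) := fun x hx => hN x (mem_union_left _ hx)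
  have hpos : (0 : ℝ) < Fintype.card Ψ := by exact_mod_cast Fintype.card_pos
  have e1 := hE (κ ⊕ Fin τ) le_rfl (Sum.elim B fun _ : Fin τ => A) (by
    rintro (l | l) x hx
    · exact hB l x hx
    · exact hA x hx)
  have e2 := fun b => hE (κ ⊕ Fin τ) le_rfl (Sum.elim B fun _ : Fin τ => {x ∈ A | cls x = b}) (by
    rintro (l | l) x hx
    · exact hB l x hx
    · exact hA x (mem_filter.1 hx).1)
  rw [← Nat.cast_le (α := ℝ), ← mul_le_mul_iff_right₀ hpos, e1]
  push_cast
  rw [mul_left_comm, mul_sum]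
  simp_rw [e2]
  rw [sum_comm, mul_sum]
  refine sum_le_sum fun ψ _ => ?_
  simp only [Fintype.prod_sum_type, Sum.elim_inl, Sum.elim_inr, prod_const, card_univ,
    Fintype.card_fin]
  rw [← mul_sum, mul_left_comm]
  refine mul_le_mul_of_nonneg_left ?_ (prod_nonneg fun _ _ => by positivity)
  simp_rw [← pow_mul]
  obtain ⟨m, hm⟩ : ∃ m, 2 * τ = m + 1 := ⟨2 * τ - 1, by omega⟩
  rw [hm, Nat.add_sub_cancel]
  refine le_trans ?_ (pow_sum_le_card_mul R _ (fun b _ => norm_nonneg _) m)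
  gcongr
  exact norm_sum_eq_fiberwise hR _

/-- Relabelling the variables does not change the energy. -/
lemma powEnergy_equiv (D : Finset ℕ) {κ κ' : Type} [Fintype κ] [DecidableEq κ] [Fintype κ']
    [DecidableEq κ'] (e : κ ≃ κ') (A : κ' → Finset ℤ) :
    powEnergy D (fun l => A (e l)) = powEnergy D A := by
  symm
  refine card_bij' (fun z _ => (z.1 ∘ e, z.2 ∘ e)) (fun z _ => (z.1 ∘ e.symm, z.2 ∘ e.symm))
    ?_ ?_ ?_ ?_
  · intro z hz
    simp only [mem_filter, mem_product, Fintype.mem_piFinset, Function.comp] at hz ⊢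
    refine ⟨⟨fun l => hz.1.1 _, fun l => hz.1.2 _⟩, fun d hd => ?_⟩
    rw [e.sum_comp (fun l => z.1 l ^ d), e.sum_comp (fun l => z.2 l ^ d)]
    exact hz.2 d hd
  · intro z hz
    simp only [mem_filter, mem_product, Fintype.mem_piFinset, Function.comp] at hz ⊢
    refine ⟨⟨fun l => ?_, fun l => ?_⟩, fun d hd => ?_⟩
    · simpa using hz.1.1 (e.symm l)
    · simpa using hz.1.2 (e.symm l)
    · rw [e.symm.sum_comp (fun l => z.1 l ^ d), e.symm.sum_comp (fun l => z.2 l ^ d)]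
      exact hz.2 d hd
  · intro z _; ext <;> simp
  · intro z _; ext <;> simp

lemma powEnergy_split_const {ρ : Type*} [DecidableEq ρ] (D : Finset ℕ) (A : Finset ℤ)
    (cls : ℤ → ρ) (R : Finset ρ) (hR : ∀ x ∈ A, cls x ∈ R) (τ : ℕ) (hτ : 1 ≤ τ) :
    powEnergy D (fun _ : Fin τ => A) ≤ #R ^ (2 * τ - 1) *
      ∑ b ∈ R, powEnergy D (fun _ : Fin τ => {x ∈ A | cls x = b}) := by
  have h := powEnergy_split D (fun l : Empty => l.elim) A cls R hR τ hτ
  have e : ∀ A' : Finset ℤ, powEnergy D (Sum.elim (fun l : Empty => l.elim) fun _ : Fin τ => A') =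
      powEnergy D (fun _ : Fin τ => A') := fun A' => by
    rw [← powEnergy_equiv D (Equiv.emptySum Empty (Fin τ)) (fun _ => A')]
    congr 1
    funext l
    rcases l with l | l
    · exact l.elim
    · rfl
  simpa only [e] using h

lemma pow_le_broad_add_narrow {ρ : Type*} [DecidableEq ρ] (R : Finset ρ) (a : ρ → ℝ)
    (ha : ∀ b ∈ R, 0 ≤ a b) (F : ℝ) (hF0 : 0 ≤ F) (hF : F ≤ ∑ b ∈ R, a b) (j τ : ℕ)
    (hj : 1 ≤ j) :
    F ^ (2 * (j + τ)) ≤ (2 * j : ℝ) ^ (2 * (j + τ)) * ∑ b ∈ R, a b ^ (2 * (j + τ)) +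
      (2 * #R : ℝ) ^ (2 * j) *
        ∑ b ∈ Fintype.piFinset (fun _ : Fin j => R) with Function.Injective b,
        (∏ l, a (b l) ^ 2) * F ^ (2 * τ) := by
  set T := ∑ b ∈ R, a b with hT
  set G := {b ∈ R | T ≤ 2 * #R * a b} with hG
  have hT0 : 0 ≤ T := sum_nonneg ha
  have n1 : 0 ≤ (2 * j : ℝ) ^ (2 * (j + τ)) * ∑ b ∈ R, a b ^ (2 * (j + τ)) :=
    mul_nonneg (by positivity) (sum_nonneg fun b hb => pow_nonneg (ha b hb) _)
  have n2 : ∀ b ∈ {b ∈ Fintype.piFinset (fun _ : Fin j => R) | Function.Injective b},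
      0 ≤ (∏ l, a (b l) ^ 2) * F ^ (2 * τ) := fun b _ =>
    mul_nonneg (prod_nonneg fun _ _ => sq_nonneg _) (pow_nonneg hF0 _)
  rcases lt_or_ge (#G) j with h | h
  · have hle : T ≤ 2 * ∑ b ∈ G, a b := by
      have h1 : T = ∑ b ∈ G, a b + ∑ b ∈ R with ¬ T ≤ 2 * #R * a b, a b :=
        (sum_filter_add_sum_filter_not R _ _).symm
      have h2 : 2 * #R * ∑ b ∈ R with ¬ T ≤ 2 * #R * a b, a b ≤ #R * T := by
        rw [mul_sum]
        calc ∑ b ∈ R with ¬ T ≤ 2 * #R * a b, 2 * #R * a b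
            ≤ ∑ b ∈ R with ¬ T ≤ 2 * #R * a b, T :=
              sum_le_sum fun b hb => (not_le.1 (mem_filter.1 hb).2).le
          _ ≤ #R * T := by
            rw [sum_const, nsmul_eq_mul]
            gcongr
            exact filter_subset _ _
      rcases R.eq_empty_or_nonempty with rfl | hR
      · simp [hT, hG]
      · have : (0 : ℝ) < #R := by exact_mod_cast hR.card_pos
        have h3 : 2 * ∑ b ∈ R with ¬ T ≤ 2 * #R * a b, a b ≤ T := by
          by_contra hc
          rw [not_le] at hc
          nlinarith
        linarith
    refine le_trans ?_ (le_add_of_nonneg_right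
      (mul_nonneg (by positivity) (sum_nonneg n2)))
    obtain ⟨m, hm⟩ : ∃ m, 2 * (j + τ) = m + 1 := ⟨2 * (j + τ) - 1, by omega⟩
    rw [hm]
    have hG0 : ∀ b ∈ G, 0 ≤ a b := fun b hb => ha b (mem_filter.1 hb).1
    calc F ^ (m + 1) ≤ (2 * ∑ b ∈ G, a b) ^ (m + 1) := by gcongr; linarith
      _ = 2 ^ (m + 1) * (∑ b ∈ G, a b) ^ (m + 1) := mul_pow _ _ _
      _ ≤ 2 ^ (m + 1) * ((#G : ℝ) ^ m * ∑ b ∈ G, a b ^ (m + 1)) := by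
        gcongr; exact pow_sum_le_card_mul G a hG0 m
      _ ≤ 2 ^ (m + 1) * ((j : ℝ) ^ (m + 1) * ∑ b ∈ R, a b ^ (m + 1)) := by
        have hj1 : (1 : ℝ) ≤ j := by exact_mod_cast hj
        have : ∑ b ∈ G, a b ^ (m + 1) ≤ ∑ b ∈ R, a b ^ (m + 1) :=
          sum_le_sum_of_subset_of_nonneg (filter_subset _ _) fun b hb _ => pow_nonneg (ha b hb) _
        have h0 : 0 ≤ ∑ b ∈ G, a b ^ (m + 1) := sum_nonneg fun b hb => pow_nonneg (hG0 b hb) _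
        gcongr
        calc (#G : ℝ) ^ m ≤ (j : ℝ) ^ m := by gcongr
          _ ≤ (j : ℝ) ^ (m + 1) := pow_le_pow_right₀ hj1 (by omega)
      _ = _ := by rw [mul_pow]; ring
  · refine le_trans ?_ (le_add_of_nonneg_left n1)
    obtain ⟨G', hG', hc⟩ := exists_subset_card_eq h
    let e := (G'.equivFinOfCardEq hc).symm
    let b : Fin j → ρ := fun l => e l
    have hb : ∀ l, b l ∈ G := fun l => hG' (e l).2
    have hinj : Function.Injective b := fun x y hxy => e.injective (Subtype.ext hxy)
    have hmem : b ∈ {b ∈ Fintype.piFinset (fun _ : Fin j => R) | Function.Injective b} := by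
      rw [mem_filter, Fintype.mem_piFinset]
      exact ⟨fun l => (mem_filter.1 (hb l)).1, hinj⟩
    have h1 : F ^ (2 * j) ≤ (2 * #R : ℝ) ^ (2 * j) * ∏ l, a (b l) ^ 2 := by
      calc F ^ (2 * j) = ∏ _l : Fin j, F ^ 2 := by simp [pow_mul]
        _ ≤ ∏ l, (2 * #R * a (b l)) ^ 2 := by
          refine prod_le_prod (fun _ _ => sq_nonneg _) fun l _ => ?_
          have := (mem_filter.1 (hb l)).2
          gcongr
          linarith
        _ = _ := by simp [mul_pow, prod_mul_distrib, pow_mul]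
    calc F ^ (2 * (j + τ)) = F ^ (2 * j) * F ^ (2 * τ) := by rw [← pow_add]; ring_nf
      _ ≤ ((2 * #R : ℝ) ^ (2 * j) * ∏ l, a (b l) ^ 2) * F ^ (2 * τ) := by gcongr
      _ = (2 * #R : ℝ) ^ (2 * j) * ((∏ l, a (b l) ^ 2) * F ^ (2 * τ)) := by ring
      _ ≤ _ := by
        gcongr
        exact single_le_sum (f := fun b => (∏ l, a (b l) ^ 2) * F ^ (2 * τ)) n2 hmem

/-- The broad-narrow dichotomy for energies. -/
lemma powEnergy_broad_narrow {ρ : Type*} [DecidableEq ρ] (D : Finset ℕ) (A : Finset ℤ)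
    (cls : ℤ → ρ) (R : Finset ρ) (hR : ∀ x ∈ A, cls x ∈ R) (j τ : ℕ) (hj : 1 ≤ j) :
    powEnergy D (fun _ : Fin (j + τ) => A) ≤
      (2 * j) ^ (2 * (j + τ)) *
        ∑ b ∈ R, powEnergy D (fun _ : Fin (j + τ) => {x ∈ A | cls x = b}) +
      (2 * #R) ^ (2 * j) *
        ∑ b ∈ Fintype.piFinset (fun _ : Fin j => R) with Function.Injective b,
          powEnergy D (Sum.elim (fun l => {x ∈ A | cls x = b l}) fun _ : Fin τ => A) := by
  classical
  obtain ⟨N, hN⟩ := exists_abs_bound A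
  obtain ⟨Ψ, _, _, E, hE⟩ := exists_powEnergy_model D N (j + τ)
  have hpos : (0 : ℝ) < Fintype.card Ψ := by exact_mod_cast Fintype.card_pos
  have e1 := hE (Fin (j + τ)) (by simp) (fun _ => A) (fun _ => hN)
  have e2 := fun b => hE (Fin (j + τ)) (by simp) (fun _ => {x ∈ A | cls x = b})
    (fun _ x hx => hN x (mem_filter.1 hx).1)
  have e3 := fun b : Fin j → ρ => hE (Fin j ⊕ Fin τ) (by simp)
    (Sum.elim (fun l => {x ∈ A | cls x = b l}) fun _ : Fin τ => A) (by
      rintro (l | l) x hx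
      · exact hN x (mem_filter.1 hx).1
      · exact hN x hx)
  rw [← Nat.cast_le (α := ℝ), ← mul_le_mul_iff_right₀ hpos, e1]
  push_cast
  rw [mul_add, mul_left_comm, mul_left_comm _ (_ ^ (2 * j)),
    mul_sum _ _ (Fintype.card Ψ : ℝ), mul_sum _ _ (Fintype.card Ψ : ℝ),
    sum_congr rfl fun b _ => e2 b, sum_congr rfl fun b _ => e3 b, sum_comm, mul_sum,
    sum_comm (s := filter _ _), mul_sum, ← sum_add_distrib]
  refine sum_le_sum fun ψ _ => ?_
  simp only [Fintype.prod_sum_type, Sum.elim_inl, Sum.elim_inr, prod_const, card_univ,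
    Fintype.card_fin]
  simp_rw [← pow_mul]
  exact pow_le_broad_add_narrow R (fun b => ‖∑ x ∈ A with cls x = b, E ψ x‖)
    (fun _ _ => norm_nonneg _) _ (norm_nonneg _) (norm_sum_eq_fiberwise hR _) j τ hj

/-- A shifted correlation count is at most the unshifted one. -/
lemma card_sub_eq_le_energy {α G : Type*} [AddCommGroup G] [DecidableEq G] (S : Finset α)
    (f : α → G) (n : G) :
    #{z ∈ S ×ˢ S | f z.1 - f z.2 = n} ≤ #{z ∈ S ×ˢ S | f z.1 = f z.2} := by
  classical
  let c : G → ℕ := fun g => #{a ∈ S | f a = g}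
  have h1 : ∀ n : G, #{z ∈ S ×ˢ S | f z.1 - f z.2 = n} = ∑ b ∈ S, c (f b + n) := by
    intro n
    rw [card_filter, sum_product_right]
    refine sum_congr rfl fun b _ => ?_
    rw [← card_filter]
    refine congrArg _ (filter_congr fun a _ => ?_)
    exact sub_eq_iff_eq_add'
  have h2 : #{z ∈ S ×ˢ S | f z.1 = f z.2} = ∑ b ∈ S, c (f b) := by
    have := h1 0
    simpa [sub_eq_zero] using this
  have h3 : ∀ F : G → ℕ, ∑ b ∈ S, F (f b) = ∑ g ∈ S.image f, c g * F g := by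
    intro F
    rw [sum_comp F f]
    simp [c]
  rw [h1 n, h2, h3 (fun g => c (g + n)), h3 c]
  have h4 : ∑ g ∈ S.image f, c (g + n) * c (g + n) ≤ ∑ g ∈ S.image f, c g * c g := by
    have h5 : ∀ g ∉ S.image f, c g = 0 := by
      intro g hg
      rw [card_eq_zero, filter_eq_empty_iff]
      intro a ha h
      exact hg (h ▸ mem_image_of_mem f ha)
    calc ∑ g ∈ S.image f, c (g + n) * c (g + n)
        = ∑ g ∈ (S.image f).map (addRightEmbedding n), c g * c g := by simp
      _ = ∑ g ∈ (S.image f).map (addRightEmbedding n) with g ∈ S.image f, c g * c g := by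
        rw [sum_filter]
        refine sum_congr rfl fun g _ => ?_
        split_ifs with h
        · rfl
        · simp [h5 g h]
      _ ≤ _ := sum_le_sum_of_subset fun g hg => (mem_filter.1 hg).2
  have h6 : 2 * ∑ g ∈ S.image f, c g * c (g + n) ≤
      ∑ g ∈ S.image f, c g * c g + ∑ g ∈ S.image f, c (g + n) * c (g + n) := by
    rw [mul_sum, ← sum_add_distrib]
    refine sum_le_sum fun g _ => ?_
    zify
    nlinarith [sq_nonneg ((c g : ℤ) - c (g + n))]
  omega

open Polynomial in
lemma functional_add_C_pow (L : ℤ[X] →ₗ[ℤ] ℤ) (Y : ℤ[X]) (b : ℤ) (m : ℕ) :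
    L ((Y + C b) ^ m) = ∑ i ∈ range (m + 1), (m.choose i : ℤ) * b ^ (m - i) * L (Y ^ i) := by
  rw [add_pow, map_sum]
  refine sum_congr rfl fun i _ => ?_
  have : Y ^ i * C b ^ (m - i) * (m.choose i : ℤ[X]) =
      ((m.choose i : ℤ) * b ^ (m - i)) • Y ^ i := by
    rw [zsmul_eq_mul]
    push_cast
    rw [← C_eq_intCast]
    simp
    ring
  rw [this, map_smul, smul_eq_mul]

open Polynomial in
lemma functional_shift_eq_zero (L : ℤ[X] →ₗ[ℤ] ℤ) (c : ℤ) {j : ℕ}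
    (h : ∀ t < j, L (X ^ t) = 0) : ∀ i < j, L ((X + C (-c)) ^ i) = 0 := by
  intro i hi
  rw [functional_add_C_pow]
  refine sum_eq_zero fun t ht => ?_
  rw [h t (by rw [mem_range] at ht; omega), mul_zero]

open Polynomial in
lemma functional_shift_eq (L : ℤ[X] →ₗ[ℤ] ℤ) (c : ℤ) {j : ℕ}
    (h : ∀ t < j, L (X ^ t) = 0) : L ((X + C (-c)) ^ j) = L (X ^ j) := by
  rw [functional_add_C_pow, sum_range_succ, sum_eq_zero, zero_add]
  · simp
  · intro t ht
    rw [h t (mem_range.1 ht), mul_zero]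

open Polynomial in
lemma functional_shift_top (L : ℤ[X] →ₗ[ℤ] ℤ) (c : ℤ) {j k : ℕ}
    (h : ∀ t < j, L (X ^ t) = 0) (hk : L (X ^ k) = 0) :
    ∑ i ∈ Ico j (k + 1), (k.choose i : ℤ) * c ^ (k - i) * L ((X + C (-c)) ^ i) = 0 := by
  have e := functional_add_C_pow L (X + C (-c)) c k
  rw [show X + C (-c) + C c = (X : ℤ[X]) by simp, hk] at e
  rw [e]
  refine sum_subset_zero_on_sdiff (fun i hi => by simp at hi ⊢; omega) (fun i hi => ?_)
    fun _ _ => rfl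
  rw [functional_shift_eq_zero L c h i (by simp at hi; omega), mul_zero]

/-- The degrees of the Vinogradov-type system `1, …, j - 1, k`. -/
def degs (k j : ℕ) : Finset ℕ := insert k (Ico 1 j)

lemma degs_succ {k j : ℕ} (hj : 1 ≤ j) : degs k (j + 1) = insert j (degs k j) := by
  ext d; simp [degs]; omega

open Polynomial in
/-- The functional `P ↦ ∑ P(x l) - ∑ P(y l)`. -/
noncomputable def diffFunctional {κ : Type} [Fintype κ] (x y : κ → ℤ) : ℤ[X] →ₗ[ℤ] ℤ :=
  ∑ l, leval (x l) - ∑ l, leval (y l)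

open Polynomial in
lemma diffFunctional_apply {κ : Type} [Fintype κ] (x y : κ → ℤ) (P : ℤ[X]) :
    diffFunctional x y P = ∑ l, P.eval (x l) - ∑ l, P.eval (y l) := by
  simp [diffFunctional, LinearMap.sum_apply, leval_apply]

open Polynomial in
lemma dvd_diffFunctional_shift {κ : Type} [Fintype κ] {x y : κ → ℤ} {M c : ℤ}
    (hx : ∀ l, M ∣ x l - c) (hy : ∀ l, M ∣ y l - c) {i m : ℕ} (h : m ≤ i) :
    M ^ m ∣ diffFunctional x y ((X + C (-c)) ^ i) := by
  rw [diffFunctional_apply]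
  refine dvd_sub (dvd_sum fun l _ => ?_) (dvd_sum fun l _ => ?_)
  · simpa [sub_eq_add_neg] using (pow_dvd_pow M h).trans (pow_dvd_pow_of_dvd (hx l) i)
  · simpa [sub_eq_add_neg] using (pow_dvd_pow M h).trans (pow_dvd_pow_of_dvd (hy l) i)

open Polynomial in
/-- A functional which kills the degrees `< j` and `k`, and which is small on high powers of
`X - c`, is small in degree `j`. -/
lemma dvd_functional_pow (L : ℤ[X] →ₗ[ℤ] ℤ) {M c : ℤ} {j k : ℕ} (hjk : j < k)
    (h : ∀ t < j, L (X ^ t) = 0) (hk : L (X ^ k) = 0)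
    (hM : ∀ i, j + 1 ≤ i → M ^ (j + 1) ∣ L ((X + C (-c)) ^ i))
    (hcop : IsCoprime M ((k.choose j : ℤ) * c ^ (k - j))) : M ^ (j + 1) ∣ L (X ^ j) := by
  have e := functional_shift_top L c h hk
  rw [sum_eq_sum_Ico_succ_bot (by omega), functional_shift_eq L c h] at e
  have : M ^ (j + 1) ∣ (k.choose j : ℤ) * c ^ (k - j) * L (X ^ j) := by
    rw [eq_neg_of_add_eq_zero_left e, dvd_neg]
    refine dvd_sum fun i hi => Dvd.dvd.mul_left (hM i (mem_Ico.1 hi).1) _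
  exact (hcop.pow_left).dvd_of_dvd_mul_left this

/-- Solutions of an inhomogeneous system lie in few classes of the next power sum. -/
lemma card_shifted_le_mul_powEnergy {k j : ℕ} (hj : 1 ≤ j) (hjk : j < k) (A : Finset ℤ)
    (Y M : ℕ) (hM : 1 ≤ M) (c : ℤ) (hA : ∀ x ∈ A, 1 ≤ x ∧ x ≤ Y ∧ (M : ℤ) ∣ x - c)
    (hcop : IsCoprime (M : ℤ) ((k.choose j : ℤ) * c ^ (k - j))) (τ : ℕ) (n : ℕ → ℤ) :
    #{z ∈ Fintype.piFinset (fun _ : Fin τ => A) ×ˢ Fintype.piFinset (fun _ : Fin τ => A) |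
        ∀ d ∈ degs k j, ∑ l, z.1 l ^ d - ∑ l, z.2 l ^ d = n d} ≤
      (2 * τ * Y ^ j / M ^ (j + 1) + 1) * powEnergy (degs k (j + 1)) (fun _ : Fin τ => A) := by
  classical
  set P := Fintype.piFinset (fun _ : Fin τ => A) with hP
  set S := {z ∈ P ×ˢ P | ∀ d ∈ degs k j, ∑ l, z.1 l ^ d - ∑ l, z.2 l ^ d = n d} with hS
  let e : (Fin τ → ℤ) × (Fin τ → ℤ) → ℤ := fun z => ∑ l, z.1 l ^ j - ∑ l, z.2 l ^ j
  have hM' : (0 : ℤ) < (M : ℤ) ^ (j + 1) := by positivity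
  have hAP : ∀ x ∈ P, ∀ l, x l ∈ A := fun x hx => by rwa [hP, Fintype.mem_piFinset] at hx
  have hcong : ∀ z ∈ S, ∀ z' ∈ S, (M : ℤ) ^ (j + 1) ∣ e z - e z' := by
    intro z hz z' hz'
    rw [hS, mem_filter, mem_product] at hz hz'
    have key := dvd_functional_pow (diffFunctional z.1 z.2 - diffFunctional z'.1 z'.2)
      (M := M) (c := c) hjk ?_ ?_ ?_ hcop
    · simpa [diffFunctional_apply] using key
    · intro t ht
      rcases Nat.eq_zero_or_pos t with rfl | h0
      · simp [diffFunctional_apply]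
      · have ht' : t ∈ degs k j := by simp [degs]; omega
        simp [diffFunctional_apply, hz.2 t ht', hz'.2 t ht']
    · have ht' : k ∈ degs k j := by simp [degs]
      simp [diffFunctional_apply, hz.2 k ht', hz'.2 k ht']
    · intro i hi
      rw [LinearMap.sub_apply]
      exact dvd_sub
        (dvd_diffFunctional_shift (fun l => (hA _ (hAP _ hz.1.1 l)).2.2)
          (fun l => (hA _ (hAP _ hz.1.2 l)).2.2) hi)
        (dvd_diffFunctional_shift (fun l => (hA _ (hAP _ hz'.1.1 l)).2.2)
          (fun l => (hA _ (hAP _ hz'.1.2 l)).2.2) hi)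
  have hbd : ∀ x ∈ P, 0 ≤ ∑ l, x l ^ j ∧ ∑ l, x l ^ j ≤ τ * (Y : ℤ) ^ j := by
    intro x hx
    have hx' := fun l => hA _ (hAP x hx l)
    refine ⟨sum_nonneg fun l _ => pow_nonneg (by linarith [(hx' l).1]) _, ?_⟩
    calc ∑ l, x l ^ j ≤ ∑ _l : Fin τ, (Y : ℤ) ^ j := sum_le_sum fun l _ =>
          pow_le_pow_left₀ (by linarith [(hx' l).1]) (hx' l).2.1 _
      _ = _ := by simp
  have himg : #(S.image e) ≤ 2 * τ * Y ^ j / M ^ (j + 1) + 1 := by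
    have : ∀ v ∈ S.image e, 0 ≤ v + τ * (Y : ℤ) ^ j ∧ v + τ * (Y : ℤ) ^ j ≤ 2 * τ * Y ^ j := by
      intro v hv
      obtain ⟨z, hz, rfl⟩ := mem_image.1 hv
      rw [hS, mem_filter, mem_product] at hz
      have h1 := hbd _ hz.1.1
      have h2 := hbd _ hz.1.2
      simp only [e]
      constructor <;> linarith
    calc #(S.image e)
        ≤ #(range (2 * τ * Y ^ j / M ^ (j + 1) + 1)) := by
          refine card_le_card_of_injOn
            (fun v => ((v + τ * (Y : ℤ) ^ j) / (M : ℤ) ^ (j + 1)).toNat) ?_ ?_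
          · intro v hv
            have h := this v hv
            simp only [coe_range, Set.mem_Iio]
            zify
            rw [Int.toNat_of_nonneg (Int.ediv_nonneg h.1 hM'.le)]
            have := Int.ediv_le_ediv hM' h.2
            omega
          · intro v hv v' hv' hvv
            have h := this v hv
            have h' := this v' hv'
            have h1 := Int.ediv_nonneg h.1 hM'.le
            have h2 := Int.ediv_nonneg h'.1 hM'.le
            simp only at hvv
            have h3 : (v + τ * (Y : ℤ) ^ j) / (M : ℤ) ^ (j + 1) =
              (v' + τ * (Y : ℤ) ^ j) / (M : ℤ) ^ (j + 1) := by omega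
            obtain ⟨z, hz, rfl⟩ := mem_image.1 hv
            obtain ⟨z', hz', rfl⟩ := mem_image.1 hv'
            have h4 : (e z + τ * (Y : ℤ) ^ j) % (M : ℤ) ^ (j + 1) =
                (e z' + τ * (Y : ℤ) ^ j) % (M : ℤ) ^ (j + 1) := by
              apply Int.emod_emod_of_dvd _ (dvd_refl _) |>.symm.trans
              rw [Int.emod_emod_of_dvd _ (dvd_refl _)]
              apply Int.ModEq.symm
              rw [Int.modEq_iff_dvd]
              simpa using hcong z hz z' hz'
            have h5 := Int.mul_ediv_add_emod (e z + τ * (Y : ℤ) ^ j) ((M : ℤ) ^ (j + 1))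
            have h6 := Int.mul_ediv_add_emod (e z' + τ * (Y : ℤ) ^ j) ((M : ℤ) ^ (j + 1))
            rw [h3, h4] at h5
            linarith
      _ = _ := card_range _
  have hfib : ∀ v ∈ S.image e, #{z ∈ S | e z = v} ≤
      powEnergy (degs k (j + 1)) (fun _ : Fin τ => A) := by
    intro v _
    let f : (Fin τ → ℤ) → (degs k (j + 1) → ℤ) := fun x d => ∑ l, x l ^ (d : ℕ)
    let m : degs k (j + 1) → ℤ := fun d => if (d : ℕ) = j then v else n d
    have h1 := card_sub_eq_le_energy P f m
    have h2 : #{z ∈ P ×ˢ P | f z.1 = f z.2} = powEnergy (degs k (j + 1)) (fun _ : Fin τ => A) := by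
      unfold powEnergy
      refine congrArg _ (filter_congr fun z _ => ?_)
      rw [funext_iff]
      simp [f]
    rw [← h2]
    refine le_trans (card_le_card ?_) h1
    intro z hz
    rw [mem_filter, hS, mem_filter] at hz
    rw [mem_filter]
    refine ⟨hz.1.1, funext fun d => ?_⟩
    by_cases hd : (d : ℕ) = j
    · simp only [f, m, Pi.sub_apply, hd, if_true]
      exact hz.2
    · simp only [f, m, Pi.sub_apply, hd, if_false]
      refine hz.1.2 d ?_
      have := mem_insert.1 ((degs_succ (k := k) hj).subset d.2)
      tauto
  calc #S ≤ powEnergy (degs k (j + 1)) (fun _ : Fin τ => A) * #(S.image e) :=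
        card_le_mul_card_image S _ hfib
    _ ≤ _ := by rw [mul_comm]; gcongr

lemma card_le_of_modEq (S : Finset ℤ) (a : ℤ) (M K : ℕ) (hM : 0 < M)
    (hS : ∀ x ∈ S, a ≤ x ∧ x < a + M * K) (hc : ∀ x ∈ S, ∀ y ∈ S, (M : ℤ) ∣ x - y) :
    #S ≤ K := by
  have hM' : (0 : ℤ) < M := by exact_mod_cast hM
  rw [← card_range K]
  refine card_le_card_of_injOn (fun x => ((x - a) / M).toNat) ?_ ?_
  · intro x hx
    have h := hS x hx
    simp only [coe_range, Set.mem_Iio]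
    zify
    rw [Int.toNat_of_nonneg (Int.ediv_nonneg (by linarith) hM'.le)]
    exact Int.ediv_lt_of_lt_mul hM' (by linarith)
  · intro x hx y hy hxy
    have h1 := Int.ediv_nonneg (sub_nonneg.2 (hS x hx).1) hM'.le
    have h2 := Int.ediv_nonneg (sub_nonneg.2 (hS y hy).1) hM'.le
    simp only at hxy
    have h3 : (x - a) / M = (y - a) / M := by omega
    obtain ⟨t, ht⟩ := hc x hx y hy
    have h4 : x - a = (y - a) + M * t := by linarith
    rw [h4, Int.add_mul_ediv_left _ _ hM'.ne'] at h3
    have : t = 0 := by linarith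
    subst this
    linarith

open Polynomial in
/-- Uniqueness of Hensel lifting for a system of power-sum type in distinct residues. -/
lemma dvd_sub_of_sum_eval_congr {p : ℕ} (hp : p.Prime) {j : ℕ} (P : Fin j → ℤ[X])
    (a : Fin j → ℤ) (ha : ∀ i, ¬ (p : ℤ) ∣ a i)
    (hP : ∀ i w, (p : ℤ) ∣ (derivative (P i)).eval w - a i * w ^ (i : ℕ))
    (w w' : Fin j → ℤ) (hw : ∀ l l', l ≠ l' → ¬ (p : ℤ) ∣ w l - w l')
    (hww : ∀ l, (p : ℤ) ∣ w' l - w l) (m : ℕ)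
    (hsum : ∀ i, (p : ℤ) ^ m ∣ ∑ l, (P i).eval (w' l) - ∑ l, (P i).eval (w l)) :
    ∀ l, (p : ℤ) ^ m ∣ w' l - w l := by
  have := Fact.mk hp
  have key : ∀ t, 1 ≤ t → t ≤ m → ∀ l, (p : ℤ) ^ t ∣ w' l - w l := by
    intro t ht
    induction t, ht using Nat.le_induction with
    | base => intro _ l; simpa using hww l
    | succ t ht ih =>
      intro htm
      choose h hh using ih (by omega)
      have hpt : (p : ℤ) ^ t ≠ 0 := pow_ne_zero _ (by exact_mod_cast hp.ne_zero)
      have h1 : ∀ i : Fin j, (p : ℤ) ∣ ∑ l, h l * w l ^ (i : ℕ) := by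
        intro i
        have h2 : (p : ℤ) ^ (t + 1) ∣ ∑ l, (P i).eval (w' l) - ∑ l, (P i).eval (w l) :=
          (pow_dvd_pow _ htm).trans (hsum i)
        have h3 : ∀ l, (p : ℤ) ^ (t + 1) ∣
            (P i).eval (w' l) - (P i).eval (w l) - (p : ℤ) ^ t * (h l * (a i * w l ^ (i : ℕ))) := by
          intro l
          obtain ⟨y, hy⟩ := Polynomial.binomExpansion (P i) (w l) (p ^ t * h l)
          rw [show w' l = w l + p ^ t * h l by linarith [hh l], hy]
          obtain ⟨z, hz⟩ := hP i (w l)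
          have : (p : ℤ) ^ (t + 1) ∣ ((p : ℤ) ^ t) ^ 2 := by
            rw [← pow_mul]; exact pow_dvd_pow _ (by omega)
          obtain ⟨g, hg⟩ := this
          refine ⟨h l * z + y * g * h l ^ 2, ?_⟩
          rw [show (derivative (P i)).eval (w l) = a i * w l ^ (i : ℕ) + p * z by linarith]
          have : y * ((p : ℤ) ^ t * h l) ^ 2 = y * (((p : ℤ) ^ (t + 1) * g) * h l ^ 2) := by
            rw [← hg]; ring
          rw [this]
          ring
        have h4 : (p : ℤ) ^ (t + 1) ∣ (p : ℤ) ^ t * (a i * ∑ l, h l * w l ^ (i : ℕ)) := by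
          have h5 := dvd_sub h2 (dvd_sum fun l (_ : l ∈ univ) => h3 l)
          rw [sum_sub_distrib, sum_sub_distrib, sub_sub_cancel, ← mul_sum] at h5
          rw [mul_sum]
          refine h5.trans (dvd_of_eq ?_)
          congr 1
          exact sum_congr rfl fun l _ => by ring
        rw [pow_succ] at h4
        have h5 := Int.dvd_of_mul_dvd_mul_left hpt h4
        exact ((Nat.prime_iff_prime_int.1 hp).dvd_mul.1 h5).resolve_left (ha i)
      have hV : IsUnit (Matrix.vandermonde fun l => (w l : ZMod p)).det := by
        rw [isUnit_iff_ne_zero, Matrix.det_vandermonde_ne_zero_iff]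
        intro l l' hll
        by_contra hne
        refine hw l' l (Ne.symm hne) ?_
        exact (ZMod.intCast_eq_intCast_iff_dvd_sub _ _ _).1 hll
      have h0 : (fun l => (h l : ZMod p)) = 0 := by
        refine Matrix.eq_zero_of_vecMul_eq_zero hV.ne_zero ?_
        funext i
        have := (ZMod.intCast_zmod_eq_zero_iff_dvd _ p).2 (h1 i)
        push_cast at this
        simpa [Matrix.vecMul, dotProduct, Matrix.vandermonde] using this
      intro l
      have : (p : ℤ) ∣ h l := (ZMod.intCast_zmod_eq_zero_iff_dvd _ p).1 (congrFun h0 l)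
      rw [hh l, pow_succ]
      exact mul_dvd_mul_left _ this
  rcases Nat.eq_zero_or_pos m with rfl | hm
  · simp
  · exact key m hm le_rfl

open Polynomial in
/-- Counting well-spaced solutions of a system of congruences to growing moduli. -/
lemma card_mul_pow_le_of_congr {p : ℕ} (hp : p.Prime) {j : ℕ} (P : Fin j → ℤ[X])
    (a : Fin j → ℤ) (ha : ∀ i, ¬ (p : ℤ) ∣ a i)
    (hP : ∀ i w, (p : ℤ) ∣ (derivative (P i)).eval w - a i * w ^ (i : ℕ))
    (U : Finset (Fin j → ℤ)) (b m : ℕ) (hbm : j * b ≤ m) (α : ℤ) (T : Fin j → ℤ)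
    (hU1 : ∀ w ∈ U, ∀ l l', l ≠ l' → ¬ (p : ℤ) ∣ w l - w l')
    (hU2 : ∀ w ∈ U, ∀ w' ∈ U, ∀ l, (p : ℤ) ∣ w' l - w l)
    (hU3 : ∀ w ∈ U, ∀ i : Fin j, (p : ℤ) ^ (((i : ℕ) + 1) * b) ∣ ∑ l, (P i).eval (w l) - T i)
    (hU4 : ∀ w ∈ U, ∀ l, α ≤ w l ∧ w l < α + (p : ℤ) ^ m) :
    #U * p ^ (b * ∑ i ∈ range j, (i + 1)) ≤ p ^ (j * m) := by
  classical
  have hp0 : 0 < p := hp.pos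
  have hpz : (0 : ℤ) < p := by exact_mod_cast hp0
  let φ : (Fin j → ℤ) → (Fin j → ℤ) := fun w i => (∑ l, (P i).eval (w l)) % (p : ℤ) ^ (j * b)
  have himg : #(U.image φ) ≤ ∏ i : Fin j, p ^ (j * b - ((i : ℕ) + 1) * b) := by
    calc #(U.image φ) ≤ #(Fintype.piFinset fun i : Fin j =>
          {t ∈ Ico (0 : ℤ) (p ^ (j * b)) | (p : ℤ) ^ (((i : ℕ) + 1) * b) ∣ t - T i}) := by
          refine card_le_card fun v hv => ?_
          obtain ⟨w, hw, rfl⟩ := mem_image.1 hv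
          rw [Fintype.mem_piFinset]
          intro i
          rw [mem_filter, mem_Ico]
          have hpos : (0 : ℤ) < (p : ℤ) ^ (j * b) := by positivity
          refine ⟨⟨Int.emod_nonneg _ hpos.ne', Int.emod_lt_of_pos _ hpos⟩, ?_⟩
          have h1 : (p : ℤ) ^ (((i : ℕ) + 1) * b) ∣ (p : ℤ) ^ (j * b) :=
            pow_dvd_pow _ (Nat.mul_le_mul_right _ (by omega))
          have h2 := hU3 w hw i
          have h3 := Int.mul_ediv_add_emod (∑ l, (P i).eval (w l)) ((p : ℤ) ^ (j * b))
          have h4 : φ w i - T i = (∑ l, (P i).eval (w l) - T i) -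
              (p : ℤ) ^ (j * b) * ((∑ l, (P i).eval (w l)) / (p : ℤ) ^ (j * b)) := by
            simp only [φ]; linarith
          rw [h4]
          exact dvd_sub h2 (h1.mul_right _)
      _ ≤ _ := by
        rw [Fintype.card_piFinset]
        refine prod_le_prod' fun i _ => ?_
        refine card_le_of_modEq _ 0 (p ^ (((i : ℕ) + 1) * b)) _ (by positivity) ?_ ?_
        · intro x hx
          rw [mem_filter, mem_Ico] at hx
          refine ⟨hx.1.1, ?_⟩
          have : ((p ^ (((i : ℕ) + 1) * b) : ℕ) : ℤ) * ((p ^ (j * b - ((i : ℕ) + 1) * b) : ℕ) : ℤ)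
              = (p : ℤ) ^ (j * b) := by
            push_cast
            rw [← pow_add, Nat.add_sub_cancel' (Nat.mul_le_mul_right _ (by omega))]
          rw [this]; linarith [hx.1.2]
        · intro x hx y hy
          push_cast
          have := dvd_sub (mem_filter.1 hx).2 (mem_filter.1 hy).2
          simpa using this
  have hfib : ∀ v ∈ U.image φ, #{w ∈ U | φ w = v} ≤ p ^ (j * (m - j * b)) := by
    intro v hv
    obtain ⟨w, hw, rfl⟩ := mem_image.1 hv
    have h1 : ∀ w' ∈ {w' ∈ U | φ w' = φ w}, ∀ l, (p : ℤ) ^ (j * b) ∣ w' l - w l := by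
      intro w' hw'
      rw [mem_filter] at hw'
      refine dvd_sub_of_sum_eval_congr hp P a ha hP w w' (hU1 w hw) (hU2 w hw w' hw'.1) _ ?_
      intro i
      exact Int.ModEq.dvd (congrFun hw'.2 i).symm
    calc #{w' ∈ U | φ w' = φ w} ≤ #(Fintype.piFinset fun l : Fin j =>
          {t ∈ Ico α (α + p ^ m) | (p : ℤ) ^ (j * b) ∣ t - w l}) := by
          refine card_le_card fun w' hw' => ?_
          rw [Fintype.mem_piFinset]
          intro l
          rw [mem_filter, mem_Ico]
          exact ⟨hU4 w' (mem_filter.1 hw').1 l, h1 w' hw' l⟩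
      _ ≤ ∏ _l : Fin j, p ^ (m - j * b) := by
        rw [Fintype.card_piFinset]
        refine prod_le_prod' fun l _ => ?_
        refine card_le_of_modEq _ α (p ^ (j * b)) _ (by positivity) ?_ ?_
        · intro x hx
          rw [mem_filter, mem_Ico] at hx
          refine ⟨hx.1.1, ?_⟩
          have : ((p ^ (j * b) : ℕ) : ℤ) * ((p ^ (m - j * b) : ℕ) : ℤ) = (p : ℤ) ^ m := by
            push_cast
            rw [← pow_add, Nat.add_sub_cancel' hbm]
          rw [this]; exact hx.1.2
        · intro x hx y hy
          push_cast
          have := dvd_sub (mem_filter.1 hx).2 (mem_filter.1 hy).2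
          simpa using this
      _ = _ := by simp [← pow_mul, mul_comm]
  calc #U * p ^ (b * ∑ i ∈ range j, (i + 1))
      ≤ (p ^ (j * (m - j * b)) * #(U.image φ)) * p ^ (b * ∑ i ∈ range j, (i + 1)) := by
        gcongr; exact card_le_mul_card_image U _ hfib
    _ ≤ (p ^ (j * (m - j * b)) * ∏ i : Fin j, p ^ (j * b - ((i : ℕ) + 1) * b)) *
          p ^ (b * ∑ i ∈ range j, (i + 1)) := by gcongr
    _ = p ^ (j * m) := by
      rw [prod_pow_eq_pow_sum, ← pow_add, ← pow_add]
      congr 1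
      rw [mul_sum, ← Fin.sum_univ_eq_sum_range (fun i => b * (i + 1)), add_assoc,
        ← sum_add_distrib]
      have : ∀ i ∈ (univ : Finset (Fin j)),
          (j * b - ((i : ℕ) + 1) * b) + b * ((i : ℕ) + 1) = j * b := by
        intro i _
        rw [mul_comm b, Nat.sub_add_cancel (Nat.mul_le_mul_right _ (by omega))]
      rw [sum_congr rfl this]
      simp only [sum_const, card_univ, Fintype.card_fin, smul_eq_mul]
      rw [← mul_add, Nat.sub_add_cancel hbm]

lemma diffFunctional_sum_elim {κ κ' : Type} [Fintype κ] [Fintype κ'] (x y : κ ⊕ κ' → ℤ) :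
    diffFunctional x y = diffFunctional (x ∘ Sum.inl) (y ∘ Sum.inl) +
      diffFunctional (x ∘ Sum.inr) (y ∘ Sum.inr) := by
  ext P
  simp only [diffFunctional, Fintype.sum_sum_type, Function.comp]
  simp
  ring

open Polynomial in
lemma diffFunctional_shift_scale {κ : Type} [Fintype κ] {u v w w' : κ → ℤ} {c Q : ℤ}
    (hu : ∀ l, u l - c = Q * w l) (hv : ∀ l, v l - c = Q * w' l) (t : ℕ) :
    diffFunctional u v ((X + C (-c)) ^ t) = Q ^ t * diffFunctional w w' (X ^ t) := by
  simp only [diffFunctional_apply, eval_pow, eval_add, eval_X, eval_C, ← sub_eq_add_neg, hu, hv,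
    mul_pow, ← mul_sum, ← mul_sub]

open Polynomial in
/-- The rescaled polynomials `1 ≤ i < j` and the tail of the `k`-th power around `c`. -/
noncomputable def localPoly (k j : ℕ) (c Q : ℤ) (i : Fin j) : ℤ[X] :=
  if (i : ℕ) + 1 < j then X ^ ((i : ℕ) + 1)
  else ∑ t ∈ Ico j (k + 1), C ((k.choose t : ℤ) * c ^ (k - t) * Q ^ (t - j)) * X ^ t

/-- Leading coefficients modulo `p` of the derivatives of `localPoly`. -/
def localCoeff (k j : ℕ) (c : ℤ) (i : Fin j) : ℤ :=
  if (i : ℕ) + 1 < j then (i : ℕ) + 1 else (k.choose j : ℤ) * c ^ (k - j) * j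

lemma not_dvd_of_pos_of_lt {p m : ℕ} (h0 : 0 < m) (h : m < p) : ¬ (p : ℤ) ∣ (m : ℤ) := by
  intro hd
  exact absurd (Nat.le_of_dvd h0 (Int.natCast_dvd_natCast.1 hd)) (by omega)

lemma not_dvd_choose_mul_pow {p k j : ℕ} (hp : p.Prime) (hkp : k < p) (hjk : j ≤ k) {c : ℤ}
    (hc : ¬ (p : ℤ) ∣ c) (m : ℕ) : ¬ (p : ℤ) ∣ (k.choose j : ℤ) * c ^ m := by
  have hpp := Nat.prime_iff_prime_int.1 hp
  intro h
  rcases hpp.dvd_mul.1 h with h | h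
  · rw [Int.natCast_dvd_natCast] at h
    have h1 : p ∣ k.factorial := by
      rw [← Nat.choose_mul_factorial_mul_factorial hjk, mul_assoc]
      exact h.mul_right _
    exact absurd ((hp.dvd_factorial).1 h1) (by omega)
  · exact hc (hpp.dvd_of_dvd_pow h)

lemma not_dvd_localCoeff {p k j : ℕ} (hp : p.Prime) (hkp : k < p) (hj : 1 ≤ j) (hjk : j < k)
    {c : ℤ} (hc : ¬ (p : ℤ) ∣ c) (i : Fin j) : ¬ (p : ℤ) ∣ localCoeff k j c i := by
  unfold localCoeff
  split_ifs with h
  · exact_mod_cast not_dvd_of_pos_of_lt (p := p) (m := (i : ℕ) + 1) (by omega) (by omega)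
  · intro hd
    rcases (Nat.prime_iff_prime_int.1 hp).dvd_mul.1 hd with h | h
    · exact not_dvd_choose_mul_pow hp hkp hjk.le hc _ h
    · exact not_dvd_of_pos_of_lt (by omega) (by omega) h

open Polynomial in
lemma dvd_derivative_localPoly {p k j : ℕ} (hjk : j < k) {c Q : ℤ} (hQ : (p : ℤ) ∣ Q)
    (i : Fin j) (w : ℤ) :
    (p : ℤ) ∣ (derivative (localPoly k j c Q i)).eval w - localCoeff k j c i * w ^ (i : ℕ) := by
  unfold localPoly localCoeff
  split_ifs with h
  · simp
  · have hi : (i : ℕ) = j - 1 := by omega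
    rw [sum_eq_sum_Ico_succ_bot (by omega), derivative_add, eval_add, hi]
    simp only [derivative_C_mul_X_pow, derivative_sum, eval_finsetSum, eval_mul, eval_C,
      eval_pow, eval_X, Nat.sub_self, pow_zero, mul_one, add_sub_cancel_left]
    refine dvd_sum fun t ht => ?_
    rw [mem_Ico] at ht
    have : (p : ℤ) ∣ Q ^ (t - j) := hQ.trans (dvd_pow_self _ (by omega))
    exact (((this.mul_left _).mul_right _).mul_right _)

open Polynomial in
lemma dvd_sum_localPoly_sub {k j τ : ℕ}
    {z z' : Fin j ⊕ Fin τ → ℤ} (hz : ∀ d ∈ degs k j, ∑ l, z l ^ d = ∑ l, z' l ^ d)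
    {c Q g : ℤ} (hQ : Q ≠ 0) {w w' : Fin j → ℤ}
    (hw : ∀ l, z (Sum.inl l) - c = Q * w l) (hw' : ∀ l, z' (Sum.inl l) - c = Q * w' l)
    (hx : ∀ l, Q * g ∣ z (Sum.inr l) - c) (hy : ∀ l, Q * g ∣ z' (Sum.inr l) - c) (i : Fin j) :
    g ^ ((i : ℕ) + 1) ∣
      ∑ l, (localPoly k j c Q i).eval (w l) - ∑ l, (localPoly k j c Q i).eval (w' l) := by
  have hL0 : ∀ t < j, diffFunctional z z' (X ^ t) = 0 := by
    intro t ht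
    rcases Nat.eq_zero_or_pos t with rfl | h0
    · simp [diffFunctional_apply]
    · have ht' : t ∈ degs k j := by simp [degs]; omega
      simp only [diffFunctional_apply, eval_pow, eval_X, hz t ht', sub_self]
  have hLk : diffFunctional z z' (X ^ k) = 0 := by
    have ht' : k ∈ degs k j := by simp [degs]
    simp only [diffFunctional_apply, eval_pow, eval_X, hz k ht', sub_self]
  have hsplit : ∀ t, diffFunctional z z' ((X + C (-c)) ^ t) =
      Q ^ t * diffFunctional w w' (X ^ t) +
        diffFunctional (z ∘ Sum.inr) (z' ∘ Sum.inr) ((X + C (-c)) ^ t) := by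
    intro t
    rw [diffFunctional_sum_elim, LinearMap.add_apply,
      diffFunctional_shift_scale (u := z ∘ Sum.inl) (v := z' ∘ Sum.inl) hw hw']
  have hr : ∀ m t, m ≤ t → (Q * g) ^ m ∣
      diffFunctional (z ∘ Sum.inr) (z' ∘ Sum.inr) ((X + C (-c)) ^ t) :=
    fun m t h => dvd_diffFunctional_shift hx hy h
  rw [← diffFunctional_apply]
  refine Int.dvd_of_mul_dvd_mul_left (pow_ne_zero ((i : ℕ) + 1) hQ) ?_
  rw [← mul_pow]
  unfold localPoly
  split_ifs with h
  · have h1 := functional_shift_eq_zero _ c hL0 _ h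
    rw [hsplit] at h1
    rw [eq_neg_of_add_eq_zero_left h1, dvd_neg]
    exact hr _ _ le_rfl
  · have hi : (i : ℕ) + 1 = j := by omega
    have h1 := functional_shift_top _ c hL0 hLk
    simp_rw [hsplit, mul_add] at h1
    rw [sum_add_distrib] at h1
    rw [hi]
    have h2 : Q ^ j * diffFunctional w w'
        (∑ t ∈ Ico j (k + 1), C ((k.choose t : ℤ) * c ^ (k - t) * Q ^ (t - j)) * X ^ t) =
        ∑ t ∈ Ico j (k + 1), (k.choose t : ℤ) * c ^ (k - t) *
          (Q ^ t * diffFunctional w w' (X ^ t)) := by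
      rw [map_sum, mul_sum]
      refine sum_congr rfl fun t ht => ?_
      rw [← smul_eq_C_mul, map_smul, smul_eq_mul]
      have : Q ^ t = Q ^ j * Q ^ (t - j) := by
        rw [← pow_add, Nat.add_sub_cancel' (mem_Ico.1 ht).1]
      rw [this]
      ring
    rw [h2, eq_neg_of_add_eq_zero_left h1, dvd_neg]
    exact dvd_sum fun t ht => (hr j t (mem_Ico.1 ht).1).mul_left _

/-- Mixed energies: `j` variables in distinct classes, `τ` variables in one small class. -/
lemma powEnergy_mixed_le {p k j : ℕ} (hp : p.Prime) (hkp : k < p) (hj : 1 ≤ j) (hjk : j < k)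
    {q b n : ℕ} (hq : 1 ≤ q) (hqn : q + j * b ≤ n) {c : ℤ} (hc : ¬ (p : ℤ) ∣ c)
    (β : Fin j → ℤ) (hβ : ∀ l l', l ≠ l' → ¬ (p : ℤ) ^ (q + 1) ∣ β l - β l')
    (hβc : ∀ l, (p : ℤ) ^ q ∣ β l - c) (B : Fin j → Finset ℤ)
    (hB : ∀ l, ∀ x ∈ B l, 1 ≤ x ∧ x ≤ (p : ℤ) ^ n ∧ (p : ℤ) ^ (q + 1) ∣ x - β l)
    (A : Finset ℤ) (hA : ∀ x ∈ A, 1 ≤ x ∧ x ≤ (p : ℤ) ^ n ∧ (p : ℤ) ^ (q + b) ∣ x - c) (τ : ℕ) :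
    powEnergy (degs k j) (Sum.elim B fun _ : Fin τ => A) * p ^ (b * ∑ i ∈ range j, (i + 1)) ≤
      p ^ (2 * (j * (n - q))) * ((2 * τ * (p ^ n) ^ j / (p ^ (q + b)) ^ (j + 1) + 1) *
        powEnergy (degs k (j + 1)) fun _ : Fin τ => A) := by
  classical
  have hp0 : 0 < p := hp.pos
  have hpz : (0 : ℤ) < p := by exact_mod_cast hp0
  have hppos : ∀ t : ℕ, (0 : ℤ) < (p : ℤ) ^ t := fun t => by positivity
  set Q : ℤ := (p : ℤ) ^ q with hQ
  set F := (2 * τ * (p ^ n) ^ j / (p ^ (q + b)) ^ (j + 1) + 1) *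
        powEnergy (degs k (j + 1)) (fun _ : Fin τ => A) with hF
  set Z := {z ∈ Fintype.piFinset (Sum.elim B fun _ : Fin τ => A) ×ˢ
    Fintype.piFinset (Sum.elim B fun _ : Fin τ => A) |
      ∀ d ∈ degs k j, ∑ l, z.1 l ^ d = ∑ l, z.2 l ^ d} with hZ
  have hmem : ∀ z ∈ Z, (∀ l, z.1 (Sum.inl l) ∈ B l) ∧ (∀ l, z.2 (Sum.inl l) ∈ B l) ∧
      (∀ l, z.1 (Sum.inr l) ∈ A) ∧ (∀ l, z.2 (Sum.inr l) ∈ A) := by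
    intro z hz
    rw [hZ, mem_filter, mem_product, Fintype.mem_piFinset, Fintype.mem_piFinset] at hz
    exact ⟨fun l => hz.1.1 (Sum.inl l), fun l => hz.1.2 (Sum.inl l),
      fun l => hz.1.1 (Sum.inr l), fun l => hz.1.2 (Sum.inr l)⟩
  have hBc : ∀ l, ∀ x ∈ B l, Q ∣ x - c := by
    intro l x hx
    have h1 := (pow_dvd_pow (p : ℤ) (Nat.le_succ q)).trans (hB l x hx).2.2
    have := dvd_add h1 (hβc l)
    simpa using this
  let π : (Fin j ⊕ Fin τ → ℤ) × (Fin j ⊕ Fin τ → ℤ) → (Fin j → ℤ) × (Fin j → ℤ) :=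
    fun z => (z.1 ∘ Sum.inl, z.2 ∘ Sum.inl)
  set G := Z.image π with hG
  have hfibZ : ∀ g ∈ G, #{z ∈ Z | π z = g} ≤ F := by
    intro g _
    refine le_trans ?_ (card_shifted_le_mul_powEnergy hj hjk A (p ^ n) (p ^ (q + b))
      (Nat.one_le_pow _ _ hp0) c (fun x hx => by simpa using hA x hx) ?_ τ
      (fun d => ∑ l, g.2 l ^ d - ∑ l, g.1 l ^ d))
    · refine card_le_card_of_injOn (fun z => (z.1 ∘ Sum.inr, z.2 ∘ Sum.inr)) ?_ ?_
      · intro z hz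
        simp only [coe_filter, Set.mem_ofPred_eq] at hz
        obtain ⟨hz, rfl⟩ := hz
        have hm := hmem z hz
        rw [mem_coe, mem_filter, mem_product, Fintype.mem_piFinset, Fintype.mem_piFinset]
        refine ⟨⟨hm.2.2.1, hm.2.2.2⟩, fun d hd => ?_⟩
        have h1 := (mem_filter.1 hz).2 d hd
        simp only [Fintype.sum_sum_type] at h1
        simp only [π, Function.comp]
        linarith
      · intro z hz z' hz' h
        simp only [coe_filter, Set.mem_ofPred_eq] at hz hz'
        have h2 := hz.2.trans hz'.2.symm
        simp only [π, Prod.mk.injEq] at h h2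
        have hext : ∀ f f' : Fin j ⊕ Fin τ → ℤ, f ∘ Sum.inl = f' ∘ Sum.inl →
            f ∘ Sum.inr = f' ∘ Sum.inr → f = f' := by
          intro f f' h1 h2
          funext l
          rcases l with l | l
          · exact congrFun h1 l
          · exact congrFun h2 l
        exact Prod.ext (hext _ _ h2.1 h.1) (hext _ _ h2.2 h.2)
    · push_cast
      refine IsCoprime.pow_left
        ((Nat.prime_iff_prime_int.1 hp).irreducible.coprime_iff_not_dvd.2 ?_)
      exact not_dvd_choose_mul_pow hp hkp hjk.le hc _
  have hv : #(G.image Prod.snd) ≤ p ^ (j * (n - q)) := by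
    calc #(G.image Prod.snd) ≤ #(Fintype.piFinset B) := by
          refine card_le_card fun v hv => ?_
          obtain ⟨g, hg, rfl⟩ := mem_image.1 hv
          obtain ⟨z, hz, rfl⟩ := mem_image.1 hg
          rw [Fintype.mem_piFinset]
          exact (hmem z hz).2.1
      _ ≤ ∏ _l : Fin j, p ^ (n - q) := by
        rw [Fintype.card_piFinset]
        refine prod_le_prod' fun l _ => ?_
        refine card_le_of_modEq _ 1 (p ^ q) _ (by positivity) ?_ ?_
        · intro x hx
          have := hB l x hx
          push_cast
          rw [← pow_add, Nat.add_sub_cancel' (by omega)]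
          constructor <;> linarith
        · intro x hx y hy
          push_cast
          simpa using dvd_sub (hBc l x hx) (hBc l y hy)
      _ = _ := by simp [← pow_mul, mul_comm]
  have hu : ∀ v ∈ G.image Prod.snd, #{g ∈ G | g.2 = v} * p ^ (b * ∑ i ∈ range j, (i + 1)) ≤
      p ^ (j * (n - q)) := by
    intro v hv
    obtain ⟨g₀, hg₀, rfl⟩ := mem_image.1 hv
    obtain ⟨z₀, hz₀, rfl⟩ := mem_image.1 hg₀
    let sc : (Fin j → ℤ) → (Fin j → ℤ) := fun u l => (u l - c) / Q
    have hsc : ∀ u : Fin j → ℤ, (∀ l, u l ∈ B l) → ∀ l, u l - c = Q * sc u l := by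
      intro u hu l
      exact (Int.mul_ediv_cancel' (hBc l _ (hu l))).symm
    have hGB : ∀ g ∈ G, ∀ l, g.1 l ∈ B l := by
      intro g hg
      obtain ⟨z, hz, rfl⟩ := mem_image.1 hg
      exact (hmem z hz).1
    have hcard : #{g ∈ G | g.2 = (π z₀).2} =
        #({g ∈ G | g.2 = (π z₀).2}.image fun g => sc g.1) := by
      refine (card_image_of_injOn ?_).symm
      intro g hg g' hg' h
      simp only [coe_filter, Set.mem_ofPred_eq] at hg hg'
      refine Prod.ext (funext fun l => ?_) (hg.2.trans hg'.2.symm)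
      have h1 := hsc g.1 (hGB g hg.1) l
      have h2 := hsc g'.1 (hGB g' hg'.1) l
      have h3 : sc g.1 l = sc g'.1 l := congrFun h l
      rw [h3] at h1
      linarith
    rw [hcard]
    refine card_mul_pow_le_of_congr hp (localPoly k j c Q) (localCoeff k j c)
      (not_dvd_localCoeff hp hkp hj hjk hc)
      (dvd_derivative_localPoly hjk (dvd_pow_self _ (by omega))) _ b (n - q) (by omega)
      ((-c) / Q + 1)
      (fun i => ∑ l, (localPoly k j c Q i).eval (sc (π z₀).2 l)) ?_ ?_ ?_ ?_
    · intro w hw l l' hll hd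
      obtain ⟨g, hg, rfl⟩ := mem_image.1 hw
      have hgB := hGB g (mem_filter.1 hg).1
      refine hβ l l' hll ?_
      have h1 : (p : ℤ) ^ (q + 1) ∣ g.1 l - g.1 l' := by
        rw [show g.1 l - g.1 l' = Q * (sc g.1 l - sc g.1 l') by
          linarith [hsc g.1 hgB l, hsc g.1 hgB l'], pow_succ]
        exact mul_dvd_mul_left _ hd
      have h2 := (hB l _ (hgB l)).2.2
      have h3 := (hB l' _ (hgB l')).2.2
      have := dvd_add (dvd_sub h1 h2) h3
      simpa using this
    · intro w hw w' hw' l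
      obtain ⟨g, hg, rfl⟩ := mem_image.1 hw
      obtain ⟨g', hg', rfl⟩ := mem_image.1 hw'
      have hgB := hGB g (mem_filter.1 hg).1
      have hgB' := hGB g' (mem_filter.1 hg').1
      have h2 := dvd_sub (hB l _ (hgB' l)).2.2 (hB l _ (hgB l)).2.2
      rw [show g'.1 l - β l - (g.1 l - β l) = Q * (sc g'.1 l - sc g.1 l) by
          linarith [hsc g.1 hgB l, hsc g'.1 hgB' l], pow_succ] at h2
      exact Int.dvd_of_mul_dvd_mul_left (hppos q).ne' h2
    · intro w hw i
      obtain ⟨g, hg, rfl⟩ := mem_image.1 hw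
      rw [mem_filter] at hg
      obtain ⟨z, hz, rfl⟩ := mem_image.1 hg.1
      have hm := hmem z hz
      rw [← hg.2, mul_comm, pow_mul]
      refine dvd_sum_localPoly_sub (mem_filter.1 hz).2 (hppos q).ne'
        (hsc _ hm.1) (hsc _ hm.2.1) ?_ ?_ i
      · intro l; rw [← pow_add]; exact (hA _ (hm.2.2.1 l)).2.2
      · intro l; rw [← pow_add]; exact (hA _ (hm.2.2.2 l)).2.2
    · intro w hw l
      obtain ⟨g, hg, rfl⟩ := mem_image.1 hw
      have hgB := hGB g (mem_filter.1 hg).1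
      have h1 := hsc g.1 hgB l
      have h2 := hB l _ (hgB l)
      have hQ0 : 0 < Q := hppos q
      have h3 := Int.mul_ediv_add_emod (-c) Q
      have h4 := Int.emod_nonneg (-c) hQ0.ne'
      have h5 := Int.emod_lt_of_pos (-c) hQ0
      have h6 : (p : ℤ) ^ n = Q * (p : ℤ) ^ (n - q) := by
        rw [hQ, ← pow_add, Nat.add_sub_cancel' (by omega)]
      constructor
      · have : Q * ((-c) / Q) < Q * sc g.1 l := by linarith [h2.1]
        have := lt_of_mul_lt_mul_left this hQ0.le
        omega
      · have : Q * sc g.1 l < Q * ((-c) / Q + 1 + (p : ℤ) ^ (n - q)) := by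
          rw [mul_add, mul_add, ← h6]; linarith [h2.2.1]
        exact lt_of_mul_lt_mul_left this hQ0.le
  have hGc : #G * p ^ (b * ∑ i ∈ range j, (i + 1)) ≤ p ^ (j * (n - q)) * p ^ (j * (n - q)) := by
    rw [card_eq_sum_card_image Prod.snd G, sum_mul]
    calc _ ≤ ∑ _v ∈ G.image Prod.snd, p ^ (j * (n - q)) := sum_le_sum hu
      _ = #(G.image Prod.snd) * p ^ (j * (n - q)) := by simp
      _ ≤ _ := Nat.mul_le_mul_right _ hv
  calc #Z * p ^ (b * ∑ i ∈ range j, (i + 1))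
      ≤ (F * #G) * p ^ (b * ∑ i ∈ range j, (i + 1)) := by
        gcongr; exact card_le_mul_card_image Z _ hfibZ
    _ = F * (#G * p ^ (b * ∑ i ∈ range j, (i + 1))) := by ring
    _ ≤ F * (p ^ (j * (n - q)) * p ^ (j * (n - q))) := by gcongr
    _ = _ := by rw [← pow_add]; ring_nf

/-- Integers of `[1, p ^ n]` prime to `p` and congruent to `c` modulo `p ^ q`. -/
noncomputable def resSet (p n q : ℕ) (c : ℤ) : Finset ℤ :=
  {x ∈ Icc 1 ((p : ℤ) ^ n) | ¬ (p : ℤ) ∣ x ∧ (p : ℤ) ^ q ∣ x - c}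

/-- Total energy over all classes modulo `p ^ q`. -/
noncomputable def classEnergy (k p n j q σ : ℕ) : ℕ :=
  ∑ c ∈ range (p ^ q), powEnergy (degs k j) fun _ : Fin σ => resSet p n q c

/-- Lifts modulo `p ^ (q + b)` of the class `c` modulo `p ^ q`. -/
def lifts (p q b c : ℕ) : Finset ℕ := {c' ∈ range (p ^ (q + b)) | c' % p ^ q = c}

lemma card_lifts_le (p q b c : ℕ) : #(lifts p q b c) ≤ p ^ b := by
  rw [← card_range (p ^ b)]
  refine card_le_card_of_injOn (fun x => x / p ^ q) ?_ ?_
  · intro x hx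
    rw [lifts, mem_coe, mem_filter, mem_range, pow_add] at hx
    simp only [coe_range, Set.mem_Iio]
    exact Nat.div_lt_of_lt_mul hx.1
  · intro x hx y hy h
    rw [lifts, mem_coe, mem_filter] at hx hy
    have h1 := Nat.div_add_mod x (p ^ q)
    have h2 := Nat.div_add_mod y (p ^ q)
    simp only at h
    rw [hx.2, h] at h1
    rw [hy.2] at h2
    omega

lemma sum_lifts {M : Type*} [AddCommMonoid M] {p : ℕ} (hp : 0 < p) (q b : ℕ) (f : ℕ → M) :
    ∑ c ∈ range (p ^ q), ∑ c' ∈ lifts p q b c, f c' = ∑ c ∈ range (p ^ (q + b)), f c :=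
  sum_fiberwise_of_maps_to (fun _ _ => mem_range.2 (Nat.mod_lt _ (by positivity))) _

/-- The class of an integer modulo `p ^ t` as a natural number. -/
def classOf (p t : ℕ) (x : ℤ) : ℕ := (x % (p : ℤ) ^ t).toNat

lemma dvd_sub_classOf {p : ℕ} (hp : 0 < p) (t : ℕ) (x : ℤ) :
    (p : ℤ) ^ t ∣ x - classOf p t x := by
  have h : (0 : ℤ) < (p : ℤ) ^ t := by positivity
  rw [classOf, Int.toNat_of_nonneg (Int.emod_nonneg _ h.ne')]
  exact Int.dvd_self_sub_emod

lemma eq_of_dvd_sub_of_lt {M a b : ℕ} (ha : a < M) (hb : b < M) (h : (M : ℤ) ∣ (a : ℤ) - b) :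
    a = b := by
  have h2 : |(a : ℤ) - b| < M := by rw [abs_lt]; constructor <;> omega
  have := Int.eq_zero_of_abs_lt_dvd h h2
  omega

lemma classOf_lt {p : ℕ} (hp : 0 < p) (t : ℕ) (x : ℤ) : classOf p t x < p ^ t := by
  have h : (0 : ℤ) < (p : ℤ) ^ t := by positivity
  rw [classOf]
  zify
  rw [Int.toNat_of_nonneg (Int.emod_nonneg _ h.ne')]
  exact Int.emod_lt_of_pos _ h

lemma classOf_eq_iff {p : ℕ} (hp : 0 < p) {t : ℕ} {x : ℤ} {c : ℕ} (hc : c < p ^ t) :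
    classOf p t x = c ↔ (p : ℤ) ^ t ∣ x - c := by
  have h1 := dvd_sub_classOf hp t x
  constructor
  · rintro rfl; exact h1
  · intro h
    refine eq_of_dvd_sub_of_lt (classOf_lt hp t x) hc ?_
    have := dvd_sub h h1
    push_cast
    simpa using this

lemma dvd_sub_of_mem_lifts {p q b c c' : ℕ} (h : c' ∈ lifts p q b c) :
    (p : ℤ) ^ q ∣ (c' : ℤ) - c := by
  rw [lifts, mem_filter] at h
  rw [← h.2]
  have := Int.dvd_self_sub_emod (x := (c' : ℤ)) (m := (p : ℤ) ^ q)
  exact_mod_cast this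

lemma classOf_mem_lifts {p : ℕ} (hp : 0 < p) {n q b c : ℕ} (hc : c < p ^ q) :
    ∀ x ∈ resSet p n q c, classOf p (q + b) x ∈ lifts p q b c := by
  intro x hx
  rw [resSet, mem_filter] at hx
  rw [lifts, mem_filter, mem_range]
  refine ⟨classOf_lt hp _ x, ?_⟩
  refine eq_of_dvd_sub_of_lt (Nat.mod_lt _ (by positivity)) hc ?_
  have h1 := (pow_dvd_pow (p : ℤ) (Nat.le_add_right q b)).trans (dvd_sub_classOf hp (q + b) x)
  have h2 : (p : ℤ) ^ q ∣ (classOf p (q + b) x : ℤ) - (classOf p (q + b) x : ℤ) % (p : ℤ) ^ q :=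
    Int.dvd_self_sub_emod
  have := dvd_sub (dvd_sub hx.2.2 h1) h2
  push_cast
  simpa using this

lemma filter_resSet_eq {p : ℕ} (hp : 0 < p) {n q b c c' : ℕ} (hc' : c' ∈ lifts p q b c) :
    {x ∈ resSet p n q c | classOf p (q + b) x = c'} = resSet p n (q + b) c' := by
  ext x
  have h := dvd_sub_of_mem_lifts hc'
  rw [lifts, mem_filter, mem_range] at hc'
  simp only [resSet, mem_filter, classOf_eq_iff hp hc'.1]
  constructor
  · rintro ⟨⟨h1, h2, h3⟩, h4⟩; exact ⟨h1, h2, h4⟩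
  · rintro ⟨h1, h2, h4⟩
    refine ⟨⟨h1, h2, ?_⟩, h4⟩
    have := dvd_add ((pow_dvd_pow (p : ℤ) (Nat.le_add_right q b)).trans h4) h
    simpa using this

lemma powEnergy_eq_zero {D : Finset ℕ} {κ : Type} [Fintype κ] [DecidableEq κ] {A : κ → Finset ℤ}
    (l : κ) (h : A l = ∅) : powEnergy D A = 0 := by
  have : Fintype.piFinset A = ∅ := Fintype.piFinset_eq_empty.2 ⟨l, h⟩
  simp [powEnergy, this]

lemma resSet_eq_empty {p n q : ℕ} (hq : 1 ≤ q) {c : ℤ} (hc : (p : ℤ) ∣ c) :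
    resSet p n q c = ∅ := by
  refine filter_eq_empty_iff.2 fun x _ h => h.1 ?_
  have := dvd_add ((dvd_pow_self (p : ℤ) (by omega : q ≠ 0)).trans h.2) hc
  simpa using this

set_option maxHeartbeats 800000 in
/-- One step of the iteration, before choosing parameters. -/
lemma classEnergy_step {p k j : ℕ} (hp : p.Prime) (hkp : k < p) (hj : 1 ≤ j) (hjk : j < k)
    {q b n τ : ℕ} (hq : 1 ≤ q) (hqn : q + j * b ≤ n) (hτ : 1 ≤ τ)
    (hbig : n * j ≤ (q + b) * (j + 1)) :
    classEnergy k p n j q (j + τ) * p ^ (b * ∑ i ∈ range j, (i + 1)) ≤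
      (2 * j) ^ (2 * (j + τ)) * classEnergy k p n j (q + 1) (j + τ) *
          p ^ (b * ∑ i ∈ range j, (i + 1)) +
        ((2 * p) ^ (2 * j) * p ^ j * (2 * τ + 1)) * p ^ (b * (2 * τ - 1) + 2 * (j * (n - q))) *
          classEnergy k p n (j + 1) (q + b) τ := by
  classical
  have hp0 := hp.pos
  set Γ := p ^ (b * ∑ i ∈ range j, (i + 1)) with hΓ
  set D := degs k j with hD
  have hfac : 2 * τ * (p ^ n) ^ j / (p ^ (q + b)) ^ (j + 1) + 1 ≤ 2 * τ + 1 := by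
    have : (p ^ n) ^ j ≤ (p ^ (q + b)) ^ (j + 1) := by
      rw [← pow_mul, ← pow_mul]; exact Nat.pow_le_pow_right hp0 hbig
    have h2 : 2 * τ * (p ^ n) ^ j / (p ^ (q + b)) ^ (j + 1) ≤ 2 * τ := by
      refine Nat.div_le_of_le_mul ?_
      rw [mul_comm]
      exact Nat.mul_le_mul_right _ this
    omega
  have hmix : ∀ c ∈ range (p ^ q), ∀ β ∈ {β ∈ Fintype.piFinset (fun _ : Fin j => lifts p q 1 c) |
      Function.Injective β},
      powEnergy D (Sum.elim (fun l => {x ∈ resSet p n q c | classOf p (q + 1) x = β l})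
        fun _ : Fin τ => resSet p n q c) * Γ ≤
      (p ^ b) ^ (2 * τ - 1) * ∑ c' ∈ lifts p q b c, p ^ (2 * (j * (n - q))) * ((2 * τ + 1) *
        powEnergy (degs k (j + 1)) fun _ : Fin τ => resSet p n (q + b) c') := by
    intro c hc β hβ
    rw [mem_filter, Fintype.mem_piFinset] at hβ
    have h1 := powEnergy_split D (fun l => {x ∈ resSet p n q c | classOf p (q + 1) x = β l})
      (resSet p n q c) (classOf p (q + b)) (lifts p q b c)
      (classOf_mem_lifts hp0 (mem_range.1 hc)) τ hτ
    calc _ ≤ (#(lifts p q b c) ^ (2 * τ - 1) * ∑ c' ∈ lifts p q b c, powEnergy D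
          (Sum.elim (fun l => {x ∈ resSet p n q c | classOf p (q + 1) x = β l})
            fun _ : Fin τ => {x ∈ resSet p n q c | classOf p (q + b) x = c'})) * Γ :=
          Nat.mul_le_mul_right _ h1
      _ ≤ ((p ^ b) ^ (2 * τ - 1) * ∑ c' ∈ lifts p q b c, powEnergy D
          (Sum.elim (fun l => {x ∈ resSet p n q c | classOf p (q + 1) x = β l})
            fun _ : Fin τ => {x ∈ resSet p n q c | classOf p (q + b) x = c'})) * Γ := by
          gcongr; exact card_lifts_le p q b c
      _ = (p ^ b) ^ (2 * τ - 1) * ∑ c' ∈ lifts p q b c, powEnergy D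
          (Sum.elim (fun l => {x ∈ resSet p n q c | classOf p (q + 1) x = β l})
            fun _ : Fin τ => {x ∈ resSet p n q c | classOf p (q + b) x = c'}) * Γ := by
          rw [mul_assoc, sum_mul]
      _ ≤ _ := by
        refine Nat.mul_le_mul_left _ (sum_le_sum fun c' hc' => ?_)
        rw [filter_resSet_eq hp0 hc']
        by_cases hpc : (p : ℤ) ∣ (c' : ℤ)
        · rw [powEnergy_eq_zero (Sum.inr ⟨0, hτ⟩) (resSet_eq_empty (by omega) hpc), zero_mul]
          exact Nat.zero_le _
        · have hcc := dvd_sub_of_mem_lifts hc'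
          refine (powEnergy_mixed_le hp hkp hj hjk hq hqn hpc (fun l => (β l : ℤ)) ?_ ?_ _ ?_ _ ?_
            τ).trans ?_
          · intro l l' hll hd
            refine hll (hβ.2 ?_)
            have e1 := mem_range.1 (mem_filter.1 (hβ.1 l)).1
            have e2 := mem_range.1 (mem_filter.1 (hβ.1 l')).1
            exact eq_of_dvd_sub_of_lt e1 e2 (by push_cast; exact hd)
          · intro l
            have := dvd_sub (dvd_sub_of_mem_lifts (hβ.1 l)) hcc
            simpa using this
          · intro l x hx
            rw [filter_resSet_eq hp0 (hβ.1 l), resSet, mem_filter, mem_Icc] at hx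
            exact ⟨hx.1.1, hx.1.2, hx.2.2⟩
          · intro x hx
            rw [resSet, mem_filter, mem_Icc] at hx
            exact ⟨hx.1.1, hx.1.2, hx.2.2⟩
          · gcongr
  have hcls : ∀ c ∈ range (p ^ q), powEnergy D (fun _ : Fin (j + τ) => resSet p n q c) * Γ ≤
      (2 * j) ^ (2 * (j + τ)) * (∑ c' ∈ lifts p q 1 c,
        powEnergy D (fun _ : Fin (j + τ) => resSet p n (q + 1) c')) * Γ +
      (2 * p) ^ (2 * j) * (p ^ j * ((p ^ b) ^ (2 * τ - 1) * ∑ c' ∈ lifts p q b c,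
        p ^ (2 * (j * (n - q))) * ((2 * τ + 1) *
          powEnergy (degs k (j + 1)) fun _ : Fin τ => resSet p n (q + b) c'))) := by
    intro c hc
    have h1 := powEnergy_broad_narrow D (resSet p n q c) (classOf p (q + 1)) (lifts p q 1 c)
      (classOf_mem_lifts hp0 (mem_range.1 hc)) j τ hj
    refine (Nat.mul_le_mul_right Γ h1).trans ?_
    rw [add_mul]
    refine add_le_add (le_of_eq ?_) ?_
    · have e : ∑ c' ∈ lifts p q 1 c, powEnergy D (fun _ : Fin (j + τ) =>
          {x ∈ resSet p n q c | classOf p (q + 1) x = c'}) = ∑ c' ∈ lifts p q 1 c,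
          powEnergy D (fun _ : Fin (j + τ) => resSet p n (q + 1) c') :=
        sum_congr rfl fun c' hc' => by rw [filter_resSet_eq hp0 hc']
      rw [e]
    · have hl : #(lifts p q 1 c) ≤ p := by simpa using card_lifts_le p q 1 c
      rw [mul_assoc, sum_mul]
      refine Nat.mul_le_mul (by gcongr) ?_
      refine (sum_le_card_nsmul _ _ _ (hmix c hc)).trans ?_
      rw [smul_eq_mul]
      refine Nat.mul_le_mul_right _ ?_
      refine (card_filter_le _ _).trans ?_
      rw [Fintype.card_piFinset]
      simp only [prod_const, card_univ, Fintype.card_fin]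
      gcongr
  have hsum := sum_le_sum hcls
  rw [← sum_mul, sum_add_distrib] at hsum
  refine hsum.trans (le_of_eq ?_)
  simp only [← mul_sum, ← sum_mul]
  rw [sum_lifts hp0 q 1, sum_lifts hp0 q b]
  unfold classEnergy
  rw [pow_add, ← pow_mul]
  ring

lemma sum_powEnergy_fiber_le (D : Finset ℕ) {τ : ℕ} (hτ : 1 ≤ τ) (A : Finset ℤ) (cls : ℤ → ℕ)
    (R : Finset ℕ) :
    ∑ b ∈ R, powEnergy D (fun _ : Fin τ => {x ∈ A | cls x = b}) ≤
      powEnergy D (fun _ : Fin τ => A) := by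
  classical
  unfold powEnergy
  rw [← card_biUnion]
  · refine card_le_card fun z hz => ?_
    simp only [mem_biUnion, mem_filter, mem_product, Fintype.mem_piFinset] at hz ⊢
    obtain ⟨b, _, h⟩ := hz
    exact ⟨⟨fun l => (h.1.1 l).1, fun l => (h.1.2 l).1⟩, h.2⟩
  · intro b _ b' _ hbb
    refine disjoint_left.2 fun z hz hz' => hbb ?_
    simp only [mem_filter, mem_product, Fintype.mem_piFinset] at hz hz'
    exact (hz.1.1 ⟨0, hτ⟩).2.symm.trans (hz'.1.1 ⟨0, hτ⟩).2

lemma classEnergy_antitone {p : ℕ} (hp : 0 < p) (k n j τ : ℕ) (hτ : 1 ≤ τ) {q q' : ℕ}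
    (h : q ≤ q') : classEnergy k p n j q' τ ≤ classEnergy k p n j q τ := by
  obtain ⟨b, rfl⟩ := Nat.exists_eq_add_of_le h
  unfold classEnergy
  rw [← sum_lifts hp q b]
  refine sum_le_sum fun c _ => ?_
  refine le_trans (le_of_eq ?_) (sum_powEnergy_fiber_le _ hτ _ (classOf p (q + b)) (lifts p q b c))
  exact sum_congr rfl fun c' hc' => by rw [filter_resSet_eq hp hc']

lemma powEnergy_le_of_card_le_one (D D' : Finset ℕ) {σ τ : ℕ} (hσ : 1 ≤ σ) {A : Finset ℤ}
    (hA : #A ≤ 1) : powEnergy D (fun _ : Fin σ => A) ≤ powEnergy D' (fun _ : Fin τ => A) := by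
  classical
  rcases A.eq_empty_or_nonempty with rfl | ⟨a, ha⟩
  · rw [powEnergy_eq_zero (⟨0, hσ⟩ : Fin σ) rfl]; exact Nat.zero_le _
  · have h1 : powEnergy D (fun _ : Fin σ => A) ≤ 1 := by
      refine (card_filter_le _ _).trans ?_
      rw [card_product, Fintype.card_piFinset]
      simp only [prod_const]
      have := pow_le_one₀ (Nat.zero_le _) hA (n := #(univ : Finset (Fin σ)))
      exact mul_le_one₀ this (Nat.zero_le _) this
    refine h1.trans (card_pos.2 ⟨(fun _ => a, fun _ => a), ?_⟩)
    simp [ha]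

lemma classEnergy_top_le {p : ℕ} (hp : 0 < p) (k n j j' : ℕ) {σ τ : ℕ} (hσ : 1 ≤ σ) :
    classEnergy k p n j n σ ≤ classEnergy k p n j' n τ := by
  refine sum_le_sum fun c _ => powEnergy_le_of_card_le_one _ _ hσ ?_
  refine card_le_of_modEq _ 1 (p ^ n) 1 (by positivity) ?_ ?_
  · intro x hx
    rw [resSet, mem_filter, mem_Icc] at hx
    push_cast
    constructor <;> linarith [hx.1.1, hx.1.2]
  · intro x hx y hy
    rw [resSet, mem_filter] at hx hy
    have := dvd_sub hx.2.2 hy.2.2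
    push_cast
    simpa using this

lemma le_geom_of_recursion {f : ℕ → ℕ} {C B n : ℕ} (h : f n ≤ B) :
    ∀ m q₀, q₀ + m = n → (∀ q, q₀ ≤ q → q < n → f q ≤ C * f (q + 1) + B) →
      f q₀ ≤ B * (C + 1) ^ m := by
  intro m
  induction m with
  | zero => intro q₀ hq _; simp at hq; subst hq; simpa using h
  | succ m ih =>
    intro q₀ hq hrec
    have h1 := hrec q₀ le_rfl (by omega)
    have h2 := ih (q₀ + 1) (by omega) fun q hq => hrec q (by omega)
    have h3 : B ≤ B * (C + 1) ^ m := Nat.le_mul_of_pos_right _ (by positivity)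
    calc f q₀ ≤ C * f (q₀ + 1) + B := h1
      _ ≤ C * (B * (C + 1) ^ m) + B * (C + 1) ^ m := by gcongr
      _ = _ := by ring

/-- The full step from degrees `1, …, j - 1, k` to degrees `1, …, j, k`. -/
lemma classEnergy_le_succ {p k j : ℕ} (hp : p.Prime) (hkp : k < p) (hj : 1 ≤ j) (hjk : j < k)
    {q₀ a n τ : ℕ} (hn : n = j * (j + 1) * a) (hq : 1 ≤ q₀) (hq₀ : q₀ ≤ n)
    (hqn : n ≤ q₀ + (j + 1) * a) (hτ : 1 ≤ τ) :
    classEnergy k p n j q₀ (j + τ) ≤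
      (((2 * p) ^ (2 * j) * p ^ j * (2 * τ + 1)) *
          p ^ (a * (2 * τ - 1) + 3 * a * (∑ i ∈ range j, (i + 1)) + 2 * j ^ 2) *
          classEnergy k p n (j + 1) (j ^ 2 * a) τ) *
        ((2 * j) ^ (2 * (j + τ)) + 1) ^ (n - q₀) := by
  have hp0 := hp.pos
  set T := ∑ i ∈ range j, (i + 1) with hS
  have hSv : 2 * T = j * (j + 1) := by
    have := Finset.sum_range_id_mul_two (j + 1)
    rw [sum_range_succ'] at this
    simp only [Nat.add_sub_cancel, add_zero] at this
    rw [hS]; linarith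
  set B := ((2 * p) ^ (2 * j) * p ^ j * (2 * τ + 1)) *
          p ^ (a * (2 * τ - 1) + 3 * a * T + 2 * j ^ 2) *
          classEnergy k p n (j + 1) (j ^ 2 * a) τ with hB
  have hja : j ^ 2 * a ≤ n := by rw [hn]; gcongr; nlinarith
  refine le_geom_of_recursion (f := fun q => classEnergy k p n j q (j + τ)) (n := n) ?_ _ q₀
    (by omega) ?_
  · refine (classEnergy_top_le hp0 k n j (j + 1) (τ := τ) (by omega)).trans ?_
    refine (classEnergy_antitone hp0 k n (j + 1) τ hτ hja).trans ?_
    exact Nat.le_mul_of_pos_left _ (by positivity)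
  · intro q hq1 hq2
    obtain ⟨b, hb1, hb2, hb3⟩ : ∃ b, q + j * b ≤ n ∧ j ^ 2 * a ≤ q + b ∧
        b * (2 * τ - 1) + 2 * (j * (n - q)) ≤
          a * (2 * τ - 1) + 3 * a * T + 2 * j ^ 2 + b * T := by
      obtain ⟨l, hl⟩ := Nat.exists_eq_add_of_le hq2.le
      have hl' : n - q = l := by omega
      rw [hl']
      rcases le_or_gt (j * a) l with h | h
      · refine ⟨a, by omega, ?_, ?_⟩
        · have : n = j ^ 2 * a + j * a := by rw [hn]; ring
          have : (j + 1) * a = j * a + a := by ring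
          omega
        · have : l ≤ (j + 1) * a := by omega
          have h1 : 2 * (j * l) ≤ 2 * (j * ((j + 1) * a)) := by gcongr
          have h2 : 2 * (j * ((j + 1) * a)) = 3 * a * T + a * T := by
            calc _ = 2 * a * (j * (j + 1)) := by ring
              _ = _ := by rw [← hSv]; ring
          omega
      · refine ⟨l / j, ?_, ?_, ?_⟩
        · have := Nat.mul_div_le l j; omega
        · have : n = j ^ 2 * a + j * a := by rw [hn]; ring
          generalize l / j = b
          omega
        · have h1 : l / j ≤ a := Nat.div_le_of_le_mul h.le
          have h2 : l < j * (l / j) + j := by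
            have := Nat.div_add_mod l j; have := Nat.mod_lt l (by omega : j > 0); omega
          have h3 : l / j * (2 * τ - 1) ≤ a * (2 * τ - 1) := by gcongr
          have h4 : 2 * (j * l) ≤ 3 * a * T + 2 * j ^ 2 + l / j * T := by
            zify at *
            set b : ℤ := (l : ℤ) / j
            nlinarith
          omega
    have hstep := classEnergy_step hp hkp hj hjk (by omega : 1 ≤ q) hb1 hτ (by
      calc n * j = j ^ 2 * a * (j + 1) := by rw [hn]; ring
        _ ≤ _ := Nat.mul_le_mul_right _ hb2)
    have hΓ : 0 < p ^ (b * T) := by positivity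
    refine Nat.le_of_mul_le_mul_right ?_ hΓ
    refine hstep.trans ?_
    rw [add_mul]
    refine add_le_add_right ?_ _
    rw [hB]
    calc _ ≤ (2 * p) ^ (2 * j) * p ^ j * (2 * τ + 1) *
          p ^ (a * (2 * τ - 1) + 3 * a * T + 2 * j ^ 2 + b * T) *
          classEnergy k p n (j + 1) (j ^ 2 * a) τ := by
          gcongr
          exact classEnergy_antitone hp0 k n (j + 1) τ hτ hb2
      _ = _ := by rw [pow_add _ _ (b * T)]; ring

lemma classEnergy_le_pow_mul {p : ℕ} (hp : 0 < p) (k n j q b τ : ℕ) (hτ : 1 ≤ τ) :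
    classEnergy k p n j q τ ≤ (p ^ b) ^ (2 * τ - 1) * classEnergy k p n j (q + b) τ := by
  unfold classEnergy
  rw [← sum_lifts hp q b, mul_sum]
  refine sum_le_sum fun c hc => ?_
  refine (powEnergy_split_const _ _ (classOf p (q + b)) (lifts p q b c)
    (classOf_mem_lifts hp (mem_range.1 hc)) τ hτ).trans ?_
  refine Nat.mul_le_mul (by gcongr; exact card_lifts_le p q b c) (le_of_eq ?_)
  exact sum_congr rfl fun c' hc' => by rw [filter_resSet_eq hp hc']

lemma triangle_succ (j : ℕ) : (j + 1) * j / 2 = j * (j - 1) / 2 + j := by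
  have h := Nat.triangle_succ j
  simpa using h

/-- Iterating the step from degrees `k` to degrees `1, …, j - 1, k`. -/
lemma exists_classEnergy_iterate (k s : ℕ) : ∀ j : ℕ, 1 ≤ j → j < k → j * (j - 1) / 2 < s →
    ∃ K : ℕ, 1 ≤ K ∧ ∀ p : ℕ, p.Prime → k < p → ∃ C : ℕ, 1 ≤ C ∧ ∀ n : ℕ, 1 ≤ n → 2 ∣ n →
      (∀ i, 1 ≤ i → i < j → i * (i + 1) ∣ n) →
      classEnergy k p n 1 0 s ≤ C * K ^ n * p ^ ((2 * s - 1) * (n - n / j) + (j - 1) * (n / 2)) *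
        classEnergy k p n j (n - n / j) (s - j * (j - 1) / 2) := by
  intro j hj
  induction j, hj using Nat.le_induction with
  | base =>
    intro _ _
    refine ⟨1, le_rfl, fun p _ _ => ⟨1, le_rfl, fun n _ _ _ => ?_⟩⟩
    simp
  | succ j hj ih =>
    intro hjk hjs
    rw [Nat.add_sub_cancel, triangle_succ] at hjs
    obtain ⟨K, hK, ih⟩ := ih (by omega) (by omega)
    obtain ⟨τ, hτ⟩ : ∃ τ, s = j * (j - 1) / 2 + j + τ := Nat.exists_eq_add_of_le hjs.le
    have hτ1 : 1 ≤ τ := by omega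
    refine ⟨K * ((2 * j) ^ (2 * (j + τ)) + 1), Nat.mul_pos hK (by positivity),
      fun p hp hkp => ?_⟩
    obtain ⟨C, hC, ih⟩ := ih p hp hkp
    have hp0 := hp.pos
    refine ⟨C * (p ^ (2 * (j + τ) - 1) * ((2 * p) ^ (2 * j) * p ^ j * (2 * τ + 1) *
      p ^ (2 * j ^ 2))), Nat.mul_pos hC (by positivity), fun n hn h2 hdvd => ?_⟩
    refine (ih n hn h2 fun i hi hij => hdvd i hi (by omega)).trans ?_
    obtain ⟨a, ha⟩ := hdvd j hj (by omega)
    have hj0 : 0 < j := hj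
    have e1 : n / j = (j + 1) * a := by
      rw [ha, mul_assoc]; exact Nat.mul_div_cancel_left _ hj0
    have e2 : n / (j + 1) = j * a := by
      rw [ha, mul_right_comm]; exact Nat.mul_div_cancel _ (by omega)
    have ha1 : 1 ≤ a := by
      rcases Nat.eq_zero_or_pos a with rfl | h
      · omega
      · exact h
    have e3 : n - n / (j + 1) = j ^ 2 * a := by
      rw [e2, ha]; apply Nat.sub_eq_of_eq_add; ring
    have es : s - j * (j - 1) / 2 = j + τ := by omega
    have es' : s - (j + 1) * (j + 1 - 1) / 2 = τ := by
      rw [Nat.add_sub_cancel, triangle_succ]; omega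
    rw [es, es', e3]
    have hle : (j + 1) * a ≤ n := by rw [ha]; nlinarith [Nat.zero_le (j * a)]
    have h1 : classEnergy k p n j (n - n / j) (j + τ) ≤
        p ^ (2 * (j + τ) - 1) * classEnergy k p n j (max 1 (n - n / j)) (j + τ) := by
      rcases Nat.eq_zero_or_pos (n - n / j) with h | h
      · rw [h]
        simpa using classEnergy_le_pow_mul hp0 k n j 0 1 (j + τ) (by omega)
      · rw [max_eq_right h]
        exact Nat.le_mul_of_pos_left _ (by positivity)
    have h2' := classEnergy_le_succ hp hkp hj (by omega) ha (le_max_left 1 (n - n / j))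
      (max_le hn (Nat.sub_le _ _)) (by rw [e1]; omega) hτ1
    have hT : 2 * ∑ i ∈ range j, (i + 1) = j * (j + 1) := by
      have := Finset.sum_range_id_mul_two (j + 1)
      rw [sum_range_succ'] at this
      simp only [Nat.add_sub_cancel, add_zero] at this
      linarith
    set T := ∑ i ∈ range j, (i + 1)
    have eT : a * T = n / 2 := by
      have : n = 2 * (a * T) := by rw [ha, ← hT]; ring
      omega
    have eexp : (2 * s - 1) * (n - n / j) + (j - 1) * (n / 2) +
        (a * (2 * τ - 1) + 3 * a * T) = (2 * s - 1) * (j ^ 2 * a) + (j + 1 - 1) * (n / 2) := by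
      have e4 : n - n / j = j ^ 2 * a - a := by
        rw [e1, ha]
        have : j * (j + 1) * a = j ^ 2 * a + j * a := by ring
        have : (j + 1) * a = j * a + a := by ring
        omega
      have e5 : 2 * s - 1 = 2 * T + (2 * τ - 1) := by
        have := triangle_succ j
        have h3 : (j + 1) * j / 2 = T := by
          rw [mul_comm, ← hT]; omega
        omega
      have hja : a ≤ j ^ 2 * a := Nat.le_mul_of_pos_left _ (by positivity)
      rw [e4, ← eT]
      obtain ⟨i, rfl⟩ : ∃ i, j = i + 1 := ⟨j - 1, by omega⟩
      obtain ⟨w, hw⟩ := Nat.exists_eq_add_of_le hja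
      rw [hw, e5, Nat.add_sub_cancel_left, Nat.add_sub_cancel, Nat.add_sub_cancel]
      ring
    rw [← eexp, pow_add p (_ + _) (_ + _)]
    have hKle : ((2 * j) ^ (2 * (j + τ)) + 1) ^ (n - max 1 (n - n / j)) ≤
        ((2 * j) ^ (2 * (j + τ)) + 1) ^ n :=
      Nat.pow_le_pow_right (by omega) (Nat.sub_le _ _)
    set P := p ^ ((2 * s - 1) * (n - n / j) + (j - 1) * (n / 2))
    set V := classEnergy k p n (j + 1) (j ^ 2 * a) τ
    calc _ ≤ C * K ^ n * P * (p ^ (2 * (j + τ) - 1) *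
          ((((2 * p) ^ (2 * j) * p ^ j * (2 * τ + 1)) *
          p ^ (a * (2 * τ - 1) + 3 * a * T + 2 * j ^ 2) * V) *
          ((2 * j) ^ (2 * (j + τ)) + 1) ^ n)) := by
          refine Nat.mul_le_mul_left _ (h1.trans (Nat.mul_le_mul_left _ (h2'.trans ?_)))
          gcongr
      _ = _ := by rw [mul_pow K, pow_add p (a * (2 * τ - 1) + 3 * a * T) (2 * j ^ 2)]; ring

lemma conj_zpow_of_norm_eq_one {ω : ℂ} (hω : ‖ω‖ = 1) (n : ℤ) :
    (starRingEnd ℂ) (ω ^ n) = ω ^ (-n) := by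
  have h : (starRingEnd ℂ) ω = ω⁻¹ := by
    rw [Complex.inv_def, Complex.normSq_eq_norm_sq, hω]; simp
  rw [map_zpow₀, h, inv_zpow, zpow_neg]

/-- The Fejér kernel as a double sum. -/
lemma sum_zpow_mul_sub {ω : ℂ} (hω : ‖ω‖ = 1) (d : ℤ) (B : ℕ) :
    ∑ t ∈ range B ×ˢ range B, ω ^ (d * ((t.1 : ℤ) - t.2)) =
      ((‖∑ t ∈ range B, (ω ^ d) ^ t‖ ^ 2 : ℝ) : ℂ) := by
  have h0 : ω ≠ 0 := by rintro rfl; simp at hω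
  push_cast
  rw [← Complex.mul_conj', map_sum, sum_mul_sum, sum_product]
  refine sum_congr rfl fun t _ => sum_congr rfl fun t' _ => ?_
  rw [← zpow_natCast, ← zpow_natCast, ← zpow_mul, ← zpow_mul, conj_zpow_of_norm_eq_one hω,
    ← zpow_add₀ h0]
  ring_nf

/-- A large sieve type inequality for geometric sums at points in arithmetic progression. -/
lemma sum_norm_geom_sq_le {z ω : ℂ} (hz : ‖z‖ = 1) (hω : ‖ω‖ = 1) (M : Finset ℤ) (X : ℤ)
    (hM : ∀ m ∈ M, ∀ m' ∈ M, |m - m'| ≤ X) (B : ℕ) :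
    ∑ m ∈ M, ‖∑ t ∈ range B, (z * ω ^ m) ^ t‖ ^ 2 ≤
      ∑ d ∈ Icc (-X) X, ‖∑ t ∈ range (2 * B), (ω ^ d) ^ t‖ ^ 2 := by
  have h0 : ω ≠ 0 := by rintro rfl; simp at hω
  rcases Nat.eq_zero_or_pos B with rfl | hB
  · simp
  set a : ℤ → ℂ := fun m => ∑ t ∈ range B, (z * ω ^ m) ^ t with ha
  set G : ℤ → ℝ := fun d => ‖∑ t ∈ range (2 * B), (ω ^ d) ^ t‖ ^ 2 with hG
  have hG0 : ∀ d, 0 ≤ G d := fun d => by positivity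
  set S : ℝ := ∑ m ∈ M, ‖a m‖ ^ 2 with hS
  have hS0 : 0 ≤ S := sum_nonneg fun _ _ => by positivity
  set φ : ℤ → ℂ := fun t => ∑ m ∈ M, (starRingEnd ℂ) (a m) * ω ^ (m * t) with hφ
  have hGsymm : ∀ d, G (-d) = G d := fun d => by
    have h1 := sum_zpow_mul_sub hω d (2 * B)
    have h2 := sum_zpow_mul_sub hω (-d) (2 * B)
    have : ((G (-d) : ℝ) : ℂ) = (G d : ℝ) := by
      rw [← h1, ← h2]
      refine sum_nbij' (fun t => (t.2, t.1)) (fun t => (t.2, t.1)) ?_ ?_ ?_ ?_ ?_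
      · intro t ht; simp only [mem_product] at ht ⊢; exact ⟨ht.2, ht.1⟩
      · intro t ht; simp only [mem_product] at ht ⊢; exact ⟨ht.2, ht.1⟩
      · intro t _; rfl
      · intro t _; rfl
      · intro t _; congr 1; ring
    exact_mod_cast this
  have hSφ : S ≤ ∑ t ∈ range B, ‖φ t‖ := by
    have e : (S : ℂ) = ∑ t ∈ range B, z ^ t * φ t := by
      rw [hS]; push_cast
      simp only [hφ, mul_sum]
      rw [sum_comm]
      refine sum_congr rfl fun m _ => ?_
      rw [← Complex.mul_conj']
      conv_lhs => enter [1]; rw [ha]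
      simp only [sum_mul]
      refine sum_congr rfl fun t _ => ?_
      rw [mul_pow, zpow_mul, zpow_natCast]; ring
    calc S = ‖(S : ℂ)‖ := by rw [Complex.norm_real, Real.norm_of_nonneg hS0]
      _ ≤ ∑ t ∈ range B, ‖z ^ t * φ t‖ := by rw [e]; exact norm_sum_le _ _
      _ = _ := by simp [hz]
  have hcs : S ^ 2 ≤ B * ∑ t ∈ range B, ‖φ t‖ ^ 2 := by
    calc S ^ 2 ≤ (∑ t ∈ range B, ‖φ t‖) ^ 2 := by gcongr
      _ ≤ _ := by simpa using sq_sum_le_card_mul_sum_sq (s := range B) (f := fun t : ℕ => ‖φ t‖)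
  have hfej : B * ∑ t ∈ range B, ‖φ t‖ ^ 2 ≤
      ∑ t ∈ range (2 * B) ×ˢ range (2 * B), ‖φ ((t.1 : ℤ) - t.2)‖ ^ 2 := by
    have e : B * ∑ t ∈ range B, ‖φ t‖ ^ 2 = ∑ t ∈ range B ×ˢ range B, ‖φ t.1‖ ^ 2 := by
      rw [sum_product]; simp [mul_sum]
    rw [e]
    have e2 : ∑ t ∈ range B ×ˢ range B, ‖φ t.1‖ ^ 2 =
        ∑ t ∈ (range B ×ˢ range B).image (fun t : ℕ × ℕ => ((t.1 + t.2, t.2) : ℕ × ℕ)),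
          ‖φ ((t.1 : ℤ) - t.2)‖ ^ 2 := by
      rw [sum_image]
      · refine sum_congr rfl fun t _ => ?_
        congr 3; push_cast; ring
      · intro t _ t' _ h
        simp only [Prod.mk.injEq] at h
        ext <;> omega
    rw [e2]
    refine sum_le_sum_of_subset_of_nonneg ?_ fun _ _ _ => by positivity
    intro t ht
    simp only [mem_image, mem_product, mem_range] at ht ⊢
    obtain ⟨t', h, rfl⟩ := ht
    simp only
    omega
  have hexp : ∑ t ∈ range (2 * B) ×ˢ range (2 * B), ‖φ ((t.1 : ℤ) - t.2)‖ ^ 2 ≤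
      ∑ m ∈ M, ∑ m' ∈ M, ‖a m‖ * ‖a m'‖ * G (m - m') := by
    have e : ((∑ t ∈ range (2 * B) ×ˢ range (2 * B), ‖φ ((t.1 : ℤ) - t.2)‖ ^ 2 : ℝ) : ℂ) =
        ∑ m ∈ M, ∑ m' ∈ M, (starRingEnd ℂ) (a m) * a m' * (G (m - m') : ℝ) := by
      push_cast
      have : ∀ t ∈ range (2 * B) ×ˢ range (2 * B), (‖φ ((t.1 : ℤ) - t.2)‖ : ℂ) ^ 2 =
          ∑ m ∈ M, ∑ m' ∈ M, (starRingEnd ℂ) (a m) * a m' * ω ^ ((m - m') * ((t.1 : ℤ) - t.2)) := by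
        intro t _
        rw [← Complex.mul_conj']
        simp only [hφ, map_sum, sum_mul_sum]
        refine sum_congr rfl fun m _ => sum_congr rfl fun m' _ => ?_
        have e' : (m - m') * ((t.1 : ℤ) - t.2) =
            m * ((t.1 : ℤ) - t.2) + -(m' * ((t.1 : ℤ) - t.2)) := by ring
        rw [map_mul, Complex.conj_conj, conj_zpow_of_norm_eq_one hω, e', zpow_add₀ h0]
        ring
      rw [sum_congr rfl this, sum_comm]
      refine sum_congr rfl fun m _ => ?_
      rw [sum_comm]
      refine sum_congr rfl fun m' _ => ?_
      rw [← mul_sum, sum_zpow_mul_sub hω]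
    have h1 : 0 ≤ ∑ t ∈ range (2 * B) ×ˢ range (2 * B), ‖φ ((t.1 : ℤ) - t.2)‖ ^ 2 :=
      sum_nonneg fun _ _ => by positivity
    rw [← Real.norm_of_nonneg h1, ← Complex.norm_real, e]
    refine (norm_sum_le _ _).trans (sum_le_sum fun m _ => (norm_sum_le _ _).trans
      (sum_le_sum fun m' _ => ?_))
    rw [norm_mul, norm_mul, RCLike.norm_conj, Complex.norm_real, Real.norm_of_nonneg (hG0 _)]
  have hrow : ∀ m ∈ M, ∑ m' ∈ M, G (m - m') ≤ ∑ d ∈ Icc (-X) X, G d := by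
    intro m hm
    rw [← sum_image (f := G) (g := fun m' => m - m') (fun x _ y _ h => by simpa using h)]
    refine sum_le_sum_of_subset_of_nonneg ?_ fun _ _ _ => hG0 _
    intro d hd
    obtain ⟨m', hm', rfl⟩ := mem_image.1 hd
    rw [mem_Icc, ← abs_le]
    exact hM m hm m' hm'
  have hfin : ∑ m ∈ M, ∑ m' ∈ M, ‖a m‖ * ‖a m'‖ * G (m - m') ≤
      S * ∑ d ∈ Icc (-X) X, G d := by
    have h1 : ∑ m ∈ M, ∑ m' ∈ M, ‖a m‖ * ‖a m'‖ * G (m - m') ≤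
        ∑ m ∈ M, ∑ m' ∈ M, (‖a m‖ ^ 2 * G (m - m') / 2 + ‖a m'‖ ^ 2 * G (m' - m) / 2) := by
      refine sum_le_sum fun m _ => sum_le_sum fun m' _ => ?_
      rw [← neg_sub m m', hGsymm]
      nlinarith [mul_nonneg (hG0 (m - m')) (sq_nonneg (‖a m‖ - ‖a m'‖))]
    have h2 : ∑ m ∈ M, ∑ m' ∈ M, (‖a m‖ ^ 2 * G (m - m') / 2 + ‖a m'‖ ^ 2 * G (m' - m) / 2) =
        ∑ m ∈ M, ∑ m' ∈ M, ‖a m‖ ^ 2 * G (m - m') := by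
      simp only [sum_add_distrib]
      rw [sum_comm (f := fun m m' => ‖a m'‖ ^ 2 * G (m' - m) / 2), ← sum_add_distrib]
      refine sum_congr rfl fun m _ => ?_
      rw [← sum_add_distrib]
      exact sum_congr rfl fun m' _ => by ring
    rw [h2] at h1
    refine h1.trans ?_
    rw [hS, sum_mul]
    refine sum_le_sum fun m hm => ?_
    rw [← mul_sum]
    exact mul_le_mul_of_nonneg_left (hrow m hm) (by positivity)
  have hmain : S * S ≤ S * ∑ d ∈ Icc (-X) X, G d := by
    rw [← sq]; exact hcs.trans (hfej.trans (hexp.trans hfin))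
  rcases hS0.eq_or_lt with h | h
  · rw [← h]; exact sum_nonneg fun _ _ => hG0 _
  · exact le_of_mul_le_mul_left hmain h

/-- Number of pairs in `S` whose `f`-difference is `v`. -/
noncomputable def diffCount {α ι : Type*} [Fintype ι] (S : Finset α) (f : α → ι → ℤ)
    (v : ι → ℤ) : ℕ :=
  #{z ∈ S ×ˢ S | f z.1 - f z.2 = v}

lemma sum_addChar_sub_smul {ι α : Type*} [Fintype ι] [DecidableEq ι] (N : ℕ) (S : Finset α)
    (f : α → ι → ℤ) (w : ι → ℤ) (B : ℕ) (ψ : AddChar (ι → ZMod N) ℂ) :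
    ∑ a ∈ S ×ˢ range B, ψ (fun i => ((f a.1 i - (a.2 : ℤ) * w i : ℤ) : ZMod N)) =
      (∑ a ∈ S, ψ (fun i => (f a i : ZMod N))) *
        ∑ t ∈ range B, ψ (fun i => ((-w i : ℤ) : ZMod N)) ^ t := by
  rw [sum_mul_sum, sum_product]
  refine sum_congr rfl fun a _ => sum_congr rfl fun t _ => ?_
  rw [← AddChar.map_nsmul_eq_pow, ← AddChar.map_add_eq_mul]
  congr 1
  funext i
  simp only [Pi.add_apply, Pi.smul_apply]
  rw [nsmul_eq_mul]
  push_cast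
  ring

lemma addChar_linear {ι : Type*} [Fintype ι] [DecidableEq ι] (N : ℕ) (w₀ w₁ : ι → ℤ) (m : ℤ)
    (ψ : AddChar (ι → ZMod N) ℂ) :
    ψ (fun i => ((-(w₀ i + m * w₁ i) : ℤ) : ZMod N)) =
      ψ (fun i => ((-w₀ i : ℤ) : ZMod N)) * ψ (fun i => ((-w₁ i : ℤ) : ZMod N)) ^ m := by
  rw [← AddChar.map_zsmul_eq_zpow, ← AddChar.map_add_eq_mul]
  congr 1
  funext i
  simp only [Pi.add_apply, Pi.smul_apply]
  rw [zsmul_eq_mul]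
  push_cast
  ring

lemma exists_family_bound {β ι : Type*} [Fintype ι] (T : Finset β) (g : β → ι → ℤ) :
    ∃ R : ℕ, ∀ b ∈ T, ∀ i, |g b i| ≤ (R : ℤ) := by
  classical
  obtain ⟨R, hR⟩ := exists_abs_bound ((T ×ˢ univ).image fun b : β × ι => g b.1 b.2)
  exact ⟨R, fun b hb i => hR _ (mem_image.2 ⟨(b, i), by simp [hb], rfl⟩)⟩

/-- Replacing the lines `w₀ + m w₁` by the lines `d w₁`. -/
lemma sum_card_lines_le {ι α : Type*} [Fintype ι] [DecidableEq ι] (S : Finset α)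
    (f : α → ι → ℤ) (w₀ w₁ : ι → ℤ) (M : Finset ℤ) (X : ℤ)
    (hM : ∀ m ∈ M, ∀ m' ∈ M, |m - m'| ≤ X) (B : ℕ) :
    ∑ m ∈ M, #{z ∈ (S ×ˢ range B) ×ˢ (S ×ˢ range B) |
        (fun i => f z.1.1 i - (z.1.2 : ℤ) * (w₀ i + m * w₁ i)) =
          fun i => f z.2.1 i - (z.2.2 : ℤ) * (w₀ i + m * w₁ i)} ≤
      ∑ d ∈ Icc (-X) X, #{z ∈ (S ×ˢ range (2 * B)) ×ˢ (S ×ˢ range (2 * B)) |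
        (fun i => f z.1.1 i - (z.1.2 : ℤ) * (0 + d * w₁ i)) =
          fun i => f z.2.1 i - (z.2.2 : ℤ) * (0 + d * w₁ i)} := by
  classical
  obtain ⟨R₁, hR₁⟩ := exists_family_bound (M ×ˢ (S ×ˢ range B))
    (fun b i => f b.2.1 i - (b.2.2 : ℤ) * (w₀ i + b.1 * w₁ i))
  obtain ⟨R₂, hR₂⟩ := exists_family_bound (Icc (-X) X ×ˢ (S ×ˢ range (2 * B)))
    (fun b i => f b.2.1 i - (b.2.2 : ℤ) * (0 + b.1 * w₁ i))
  set N := 2 * (R₁ + R₂) + 1 with hN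
  have hN₁ : 2 * (R₁ : ℤ) < N := by omega
  have hN₂ : 2 * (R₂ : ℤ) < N := by omega
  have hcard : (0 : ℝ) < Fintype.card (ι → ZMod N) := by
    exact_mod_cast Fintype.card_pos
  have key : (Fintype.card (ι → ZMod N) : ℝ) * (∑ m ∈ M, #{z ∈ (S ×ˢ range B) ×ˢ (S ×ˢ range B) |
        (fun i => f z.1.1 i - (z.1.2 : ℤ) * (w₀ i + m * w₁ i)) =
          fun i => f z.2.1 i - (z.2.2 : ℤ) * (w₀ i + m * w₁ i)} : ℕ) ≤
      (Fintype.card (ι → ZMod N) : ℝ) *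
      (∑ d ∈ Icc (-X) X, #{z ∈ (S ×ˢ range (2 * B)) ×ˢ (S ×ˢ range (2 * B)) |
        (fun i => f z.1.1 i - (z.1.2 : ℤ) * (0 + d * w₁ i)) =
          fun i => f z.2.1 i - (z.2.2 : ℤ) * (0 + d * w₁ i)} : ℕ) := by
    push_cast
    rw [mul_sum, mul_sum]
    have e1 : ∀ m ∈ M, (Fintype.card (ι → ZMod N) : ℝ) *
        #{z ∈ (S ×ˢ range B) ×ˢ (S ×ˢ range B) |
        (fun i => f z.1.1 i - (z.1.2 : ℤ) * (w₀ i + m * w₁ i)) =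
          fun i => f z.2.1 i - (z.2.2 : ℤ) * (w₀ i + m * w₁ i)} =
        ∑ ψ : AddChar (ι → ZMod N) ℂ, ‖∑ a ∈ S, ψ (fun i => (f a i : ZMod N))‖ ^ 2 *
          ‖∑ t ∈ range B, (ψ (fun i => ((-w₀ i : ℤ) : ZMod N)) *
            ψ (fun i => ((-w₁ i : ℤ) : ZMod N)) ^ m) ^ t‖ ^ 2 := by
      intro m hm
      rw [card_mul_energy_int (S ×ˢ range B)
        (fun a i => f a.1 i - (a.2 : ℤ) * (w₀ i + m * w₁ i)) R₁
        (fun a ha i => hR₁ (m, a) (mem_product.2 ⟨hm, ha⟩) i) N hN₁]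
      refine sum_congr rfl fun ψ _ => ?_
      rw [sum_addChar_sub_smul, addChar_linear, norm_mul, mul_pow]
    have e2 : ∀ d ∈ Icc (-X) X, (Fintype.card (ι → ZMod N) : ℝ) *
        #{z ∈ (S ×ˢ range (2 * B)) ×ˢ (S ×ˢ range (2 * B)) |
        (fun i => f z.1.1 i - (z.1.2 : ℤ) * (0 + d * w₁ i)) =
          fun i => f z.2.1 i - (z.2.2 : ℤ) * (0 + d * w₁ i)} =
        ∑ ψ : AddChar (ι → ZMod N) ℂ, ‖∑ a ∈ S, ψ (fun i => (f a i : ZMod N))‖ ^ 2 *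
          ‖∑ t ∈ range (2 * B), (ψ (fun i => ((-w₁ i : ℤ) : ZMod N)) ^ d) ^ t‖ ^ 2 := by
      intro d hd
      rw [card_mul_energy_int (S ×ˢ range (2 * B))
        (fun a i => f a.1 i - (a.2 : ℤ) * (0 + d * w₁ i)) R₂
        (fun a ha i => hR₂ (d, a) (mem_product.2 ⟨hd, ha⟩) i) N hN₂]
      refine sum_congr rfl fun ψ _ => ?_
      rw [sum_addChar_sub_smul, addChar_linear N (fun _ => 0) w₁ d, norm_mul, mul_pow]
      have : ψ (fun i : ι => ((-0 : ℤ) : ZMod N)) = 1 := by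
        rw [← AddChar.map_zero_eq_one ψ]
        congr 1
      rw [this, one_mul]
    rw [sum_congr rfl e1, sum_congr rfl e2, sum_comm, sum_comm (s := Icc (-X) X)]
    refine sum_le_sum fun ψ _ => ?_
    rw [← mul_sum, ← mul_sum]
    exact mul_le_mul_of_nonneg_left
      (sum_norm_geom_sq_le (AddChar.norm_apply _ _) (AddChar.norm_apply _ _) M X hM B)
      (by positivity)
  exact_mod_cast le_of_mul_le_mul_left key hcard

open Classical in
lemma mul_card_line_le {ι α : Type*} [Fintype ι] [DecidableEq ι] (S : Finset α)
    (f : α → ι → ℤ) (w : ι → ℤ) (B : ℕ) :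
    B * #{z ∈ S ×ˢ S | ∃ t : ℤ, |t| ≤ B ∧ f z.1 - f z.2 = t • w} ≤
      #{z ∈ (S ×ˢ range (2 * B)) ×ˢ (S ×ˢ range (2 * B)) |
        (fun i => f z.1.1 i - (z.1.2 : ℤ) * w i) = fun i => f z.2.1 i - (z.2.2 : ℤ) * w i} := by
  classical
  set T := {z ∈ S ×ˢ S | ∃ t : ℤ, |t| ≤ B ∧ f z.1 - f z.2 = t • w} with hT
  have hex : ∀ z : α × α, ∃ t : ℤ, z ∈ T → |t| ≤ B ∧ f z.1 - f z.2 = t • w := by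
    intro z
    by_cases h : z ∈ T
    · obtain ⟨t, ht⟩ := (mem_filter.1 h).2
      exact ⟨t, fun _ => ht⟩
    · exact ⟨0, fun h' => (h h').elim⟩
  choose τ hτ using hex
  rw [← card_range B, ← card_product, card_range]
  refine card_le_card_of_injOn (fun y => ((y.2.1, y.1 + (τ y.2).toNat),
    (y.2.2, y.1 + (-τ y.2).toNat))) ?_ ?_
  · intro y hy
    rw [mem_coe, mem_product, mem_range] at hy
    have h := hτ y.2 hy.2
    have hS := mem_product.1 (mem_filter.1 hy.2).1
    rw [abs_le] at h
    simp only [coe_filter, mem_product, mem_range, Set.mem_ofPred_eq]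
    refine ⟨⟨⟨hS.1, by omega⟩, ⟨hS.2, by omega⟩⟩, ?_⟩
    funext i
    have hi := congrFun h.2 i
    simp only [Pi.sub_apply, Pi.smul_apply, smul_eq_mul] at hi
    have e : ((τ y.2).toNat : ℤ) - (-τ y.2).toNat = τ y.2 := by omega
    push_cast
    rw [← e] at hi
    linear_combination hi
  · intro y hy y' hy' h
    simp only [Prod.mk.injEq] at h
    have h2 : y.2 = y'.2 := Prod.ext h.1.1 h.2.1
    have h1 := h.1.2
    rw [h2] at h1
    exact Prod.ext (by omega) h2

lemma card_multiple_line_le {ι α : Type*} [Fintype ι] [DecidableEq ι] (S : Finset α)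
    (f : α → ι → ℤ) (w : ι → ℤ) (B : ℕ) :
    #{z ∈ (S ×ˢ range B) ×ˢ (S ×ˢ range B) |
        (fun i => f z.1.1 i - (z.1.2 : ℤ) * w i) = fun i => f z.2.1 i - (z.2.2 : ℤ) * w i} ≤
      B * ∑ t ∈ Icc (-(B : ℤ)) B, diffCount S f (t • w) := by
  classical
  have e : ∑ t ∈ Icc (-(B : ℤ)) B, diffCount S f (t • w) =
      #((Icc (-(B : ℤ)) B).sigma fun t => {z ∈ S ×ˢ S | f z.1 - f z.2 = t • w}) := by
    rw [card_sigma]; rfl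
  rw [e, ← card_range B, ← card_product, card_range]
  refine card_le_card_of_injOn
    (fun z => (z.1.2, ⟨(z.1.2 : ℤ) - z.2.2, (z.1.1, z.2.1)⟩)) ?_ ?_
  · intro z hz
    simp only [coe_filter, mem_product, mem_range, Set.mem_ofPred_eq] at hz
    simp only [coe_product, coe_range, Set.mem_prod, Set.mem_Iio, mem_coe, mem_sigma, mem_Icc,
      mem_filter, mem_product]
    refine ⟨hz.1.1.2, ⟨by omega, by omega⟩, ⟨hz.1.1.1, hz.1.2.1⟩, ?_⟩
    funext i
    have := congrFun hz.2 i
    simp only [Pi.sub_apply, Pi.smul_apply, smul_eq_mul] at this ⊢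
    linear_combination this
  · intro z _ z' _ h
    simp only [Prod.mk.injEq, Sigma.mk.injEq, heq_eq_eq] at h
    obtain ⟨h1, h2, h3, h4⟩ := h
    refine Prod.ext (Prod.ext h3 h1) (Prod.ext h4 ?_)
    omega

open Classical in
/-- Counting pairs along many lines reduces to counting along multiples of a single direction. -/
lemma sum_card_line_le {ι α : Type*} [Fintype ι] [DecidableEq ι] (S : Finset α)
    (f : α → ι → ℤ) (w₀ w₁ : ι → ℤ) (M : Finset ℤ) (X : ℕ)
    (hM : ∀ m ∈ M, ∀ m' ∈ M, |m - m'| ≤ X) (B : ℕ) (hB : 1 ≤ B) :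
    ∑ m ∈ M, #{z ∈ S ×ˢ S | ∃ t : ℤ, |t| ≤ B ∧ f z.1 - f z.2 = t • (w₀ + m • w₁)} ≤
      4 * ∑ y ∈ Icc (-(X : ℤ)) X ×ˢ Icc (-((4 * B : ℕ) : ℤ)) (4 * B : ℕ),
        diffCount S f ((y.1 * y.2) • w₁) := by
  refine Nat.le_of_mul_le_mul_left ?_ hB
  rw [mul_sum]
  calc _ ≤ ∑ m ∈ M, #{z ∈ (S ×ˢ range (2 * B)) ×ˢ (S ×ˢ range (2 * B)) |
        (fun i => f z.1.1 i - (z.1.2 : ℤ) * (w₀ i + m * w₁ i)) =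
          fun i => f z.2.1 i - (z.2.2 : ℤ) * (w₀ i + m * w₁ i)} :=
        sum_le_sum fun m _ => mul_card_line_le S f (w₀ + m • w₁) B
    _ ≤ _ := sum_card_lines_le S f w₀ w₁ M X hM (2 * B)
    _ ≤ ∑ d ∈ Icc (-(X : ℤ)) X, (2 * (2 * B)) *
          ∑ t ∈ Icc (-((2 * (2 * B) : ℕ) : ℤ)) (2 * (2 * B) : ℕ), diffCount S f ((d * t) • w₁) := by
        refine sum_le_sum fun d _ => ?_
        refine (card_multiple_line_le S f (fun i => 0 + d * w₁ i) (2 * (2 * B))).trans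
          (le_of_eq ?_)
        congr 1
        refine sum_congr rfl fun t _ => ?_
        congr 1
        funext i
        simp only [Pi.smul_apply, smul_eq_mul]
        ring
    _ = _ := by
        rw [← mul_sum, sum_product]
        have : 2 * (2 * B) = 4 * B := by ring
        rw [this]
        ring

open Classical in
lemma sum_diffCount_mul_le {ι α : Type*} [Fintype ι] [DecidableEq ι] (S : Finset α)
    (f : α → ι → ℤ) (w : ι → ℤ) (hw : w ≠ 0) (X B Δ : ℕ)
    (hΔ : ∀ b : ℤ, b ≠ 0 → diffCount S f (b • w) ≠ 0 →
      #{y ∈ Icc (-(X : ℤ)) X ×ˢ Icc (-(B : ℤ)) B | y.1 * y.2 = b} ≤ Δ) :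
    ∑ y ∈ Icc (-(X : ℤ)) X ×ˢ Icc (-(B : ℤ)) B, diffCount S f ((y.1 * y.2) • w) ≤
      (2 * X + 2 * B + 2) * diffCount S f 0 +
        Δ * #{z ∈ S ×ˢ S | ∃ b : ℤ, f z.1 - f z.2 = b • w} := by
  classical
  set P := Icc (-(X : ℤ)) X ×ˢ Icc (-(B : ℤ)) B with hP
  rw [← sum_filter_add_sum_filter_not P (fun y => y.1 * y.2 = 0)]
  refine add_le_add ?_ ?_
  · have h1 : ∑ y ∈ P with y.1 * y.2 = 0, diffCount S f ((y.1 * y.2) • w) =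
        #{y ∈ P | y.1 * y.2 = 0} * diffCount S f 0 := by
      rw [← smul_eq_mul, ← sum_const]
      refine sum_congr rfl fun y hy => ?_
      rw [(mem_filter.1 hy).2, zero_smul]
    rw [h1]
    refine Nat.mul_le_mul_right _ ?_
    have h2 : {y ∈ P | y.1 * y.2 = 0} ⊆
        ({0} ×ˢ Icc (-(B : ℤ)) B) ∪ (Icc (-(X : ℤ)) X ×ˢ {0}) := by
      intro y hy
      rw [mem_filter, hP, mem_product] at hy
      simp only [mem_union, mem_product, mem_singleton]
      rcases mul_eq_zero.1 hy.2 with h | h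
      · exact Or.inl ⟨h, hy.1.2⟩
      · exact Or.inr ⟨hy.1.1, h⟩
    refine (card_le_card h2).trans ((card_union_le _ _).trans ?_)
    rw [card_product, card_product, card_singleton, Int.card_Icc, Int.card_Icc]
    omega
  · set P' := {y ∈ P | ¬ y.1 * y.2 = 0} with hP'
    rw [← sum_fiberwise_of_maps_to (g := fun y : ℤ × ℤ => y.1 * y.2)
      (t := P'.image fun y => y.1 * y.2) (fun y hy => mem_image_of_mem _ hy)]
    have h1 : ∀ b ∈ P'.image (fun y => y.1 * y.2),
        ∑ y ∈ P' with y.1 * y.2 = b, diffCount S f ((y.1 * y.2) • w) ≤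
          Δ * diffCount S f (b • w) := by
      intro b hb
      obtain ⟨y₀, hy₀, rfl⟩ := mem_image.1 hb
      have hb0 := (mem_filter.1 hy₀).2
      have e : ∑ y ∈ P' with y.1 * y.2 = y₀.1 * y₀.2, diffCount S f ((y.1 * y.2) • w) =
          #{y ∈ P' | y.1 * y.2 = y₀.1 * y₀.2} * diffCount S f ((y₀.1 * y₀.2) • w) := by
        refine sum_const_nat fun y hy => ?_
        rw [(mem_filter.1 hy).2]
      rw [e]
      by_cases h : diffCount S f ((y₀.1 * y₀.2) • w) = 0
      · rw [h]; simp
      · refine Nat.mul_le_mul_right _ (le_trans (card_le_card ?_) (hΔ _ hb0 h))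
        exact filter_subset_filter _ (filter_subset _ _)
    refine (sum_le_sum h1).trans ?_
    rw [← mul_sum]
    refine Nat.mul_le_mul_left _ ?_
    unfold diffCount
    rw [← card_biUnion]
    · refine card_le_card fun z hz => ?_
      simp only [mem_biUnion, mem_filter] at hz ⊢
      obtain ⟨b, _, h⟩ := hz
      exact ⟨h.1, b, h.2⟩
    · intro b _ b' _ hbb
      refine disjoint_left.2 fun z hz hz' => hbb ?_
      have h := (mem_filter.1 hz).2.symm.trans (mem_filter.1 hz').2
      exact smul_left_injective ℤ hw h

lemma classEnergy_le_succ_of_large {p k r i : ℕ} (hp : p.Prime) (hkp : k < p) (hr : 1 ≤ r)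
    (hri : r ≤ i) (hik : i < k) (h : ℕ) {τ : ℕ} (hτ : 1 ≤ τ) :
    classEnergy k p (r * h) i ((r - 1) * h) τ ≤
      ((2 * τ + 1) * (p ^ h) ^ (i + 1 - r)) *
        classEnergy k p (r * h) (i + 1) ((r - 1) * h) τ := by
  have hp0 := hp.pos
  unfold classEnergy
  rw [mul_sum]
  refine sum_le_sum fun c _ => ?_
  have hcase : (r - 1) * h = 0 ∨ 1 ≤ (r - 1) * h := by omega
  by_cases hc : 1 ≤ (r - 1) * h ∧ (p : ℤ) ∣ (c : ℤ)
  · rw [powEnergy_eq_zero (⟨0, hτ⟩ : Fin τ) (resSet_eq_empty hc.1 hc.2)]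
    exact Nat.zero_le _
  have hcop : IsCoprime ((p ^ ((r - 1) * h) : ℕ) : ℤ) ((k.choose i : ℤ) * (c : ℤ) ^ (k - i)) := by
    rcases hcase with h0 | h1
    · rw [h0]; simpa using isCoprime_one_left
    · have hc' : ¬ (p : ℤ) ∣ (c : ℤ) := fun hh => hc ⟨h1, hh⟩
      push_cast
      refine IsCoprime.pow_left ?_
      exact (Nat.prime_iff_prime_int.1 hp).coprime_iff_not_dvd.2
        (not_dvd_choose_mul_pow hp hkp hik.le hc' (k - i))
  have hle := card_shifted_le_mul_powEnergy (by omega : 1 ≤ i) hik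
    (resSet p (r * h) ((r - 1) * h) c) (p ^ (r * h)) (p ^ ((r - 1) * h))
    (Nat.one_le_pow _ _ hp0) c (by
      intro x hx
      rw [resSet, mem_filter, mem_Icc] at hx
      exact ⟨hx.1.1, by exact_mod_cast hx.1.2, by exact_mod_cast hx.2.2⟩) hcop τ (fun _ => 0)
  simp only [sub_eq_zero] at hle
  refine le_trans hle (Nat.mul_le_mul_right _ ?_)
  have e : (p ^ (r * h)) ^ i ≤ (p ^ h) ^ (i + 1 - r) * (p ^ ((r - 1) * h)) ^ (i + 1) := by
    rw [← pow_mul, ← pow_mul, ← pow_mul, ← pow_add]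
    refine Nat.pow_le_pow_right hp0 (le_of_eq ?_)
    obtain ⟨r, rfl⟩ : ∃ r', r = r' + 1 := ⟨r - 1, by omega⟩
    obtain ⟨i', rfl⟩ := Nat.exists_eq_add_of_le hri
    have : r + 1 + i' + 1 - (r + 1) = i' + 1 := by omega
    rw [this, Nat.add_sub_cancel]
    ring
  have e2 : 2 * τ * (p ^ (r * h)) ^ i / (p ^ ((r - 1) * h)) ^ (i + 1) ≤
      2 * τ * (p ^ h) ^ (i + 1 - r) := by
    refine Nat.div_le_of_le_mul ?_
    calc _ ≤ 2 * τ * ((p ^ h) ^ (i + 1 - r) * (p ^ ((r - 1) * h)) ^ (i + 1)) := by gcongr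
      _ = _ := by ring
  have e3 : 1 ≤ (p ^ h) ^ (i + 1 - r) := Nat.one_le_pow _ _ (by positivity)
  nlinarith

/-- Increasing the number of equations from `r` to `k - 1`. -/
lemma classEnergy_le_of_large {p k r : ℕ} (hp : p.Prime) (hkp : k < p) (hr : 1 ≤ r)
    (h : ℕ) {τ : ℕ} (hτ : 1 ≤ τ) : ∀ b : ℕ, r + b < k →
    classEnergy k p (r * h) r ((r - 1) * h) τ ≤
      ((2 * τ + 1) ^ b * (p ^ h) ^ (∑ i ∈ range b, (i + 1))) *
        classEnergy k p (r * h) (r + b) ((r - 1) * h) τ := by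
  intro b
  induction b with
  | zero => intro _; simp
  | succ b ih =>
    intro hb
    refine (ih (by omega)).trans ?_
    have h1 := classEnergy_le_succ_of_large hp hkp hr (i := r + b) (by omega) (by omega) h hτ
    have e : r + b + 1 - r = b + 1 := by omega
    rw [e] at h1
    refine (Nat.mul_le_mul_left _ h1).trans (le_of_eq ?_)
    rw [sum_range_succ, pow_add _ _ (b + 1), ← add_assoc]
    ring

/-- The vector of power sums of degrees `1, …, k`. -/
def powVec (k : ℕ) {τ : ℕ} (u : Fin τ → ℤ) (i : Fin k) : ℤ := ∑ l, u l ^ ((i : ℕ) + 1)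

/-- The direction of degree `j`, scaled by `a`. -/
def degDir (k j : ℕ) (a : ℤ) (i : Fin k) : ℤ := if (i : ℕ) + 1 = j then a else 0

lemma sum_pow_affine {τ : ℕ} (m Q : ℤ) (u : Fin τ → ℤ) (d : ℕ) :
    ∑ l, (m + Q * u l) ^ d =
      ∑ i ∈ range (d + 1), Q ^ i * m ^ (d - i) * (d.choose i : ℤ) * ∑ l, u l ^ i := by
  simp only [mul_sum]
  rw [sum_comm]
  refine sum_congr rfl fun l _ => ?_
  rw [add_comm, add_pow]
  exact sum_congr rfl fun i _ => by rw [mul_pow]; ring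

lemma sum_pow_affine_sub {τ : ℕ} (m Q : ℤ) (u v : Fin τ → ℤ) (d : ℕ) :
    ∑ l, (m + Q * u l) ^ d - ∑ l, (m + Q * v l) ^ d =
      ∑ i ∈ range (d + 1), Q ^ i * m ^ (d - i) * (d.choose i : ℤ) *
        (∑ l, u l ^ i - ∑ l, v l ^ i) := by
  rw [sum_pow_affine, sum_pow_affine, ← sum_sub_distrib]
  exact sum_congr rfl fun i _ => by ring

lemma exists_line_of_affine {k : ℕ} (hk : 2 ≤ k) {τ : ℕ} {m Q : ℤ} (hQ : Q ≠ 0)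
    (hcop : IsCoprime Q ((k : ℤ) * m)) {u v : Fin τ → ℤ}
    (h : ∀ d ∈ degs k (k - 1), ∑ l, (m + Q * u l) ^ d = ∑ l, (m + Q * v l) ^ d) :
    ∃ t : ℤ, powVec k u - powVec k v = t • (degDir k (k - 1) Q + m • degDir k k (-k)) := by
  set H : ℕ → ℤ := fun i => ∑ l, u l ^ i - ∑ l, v l ^ i with hH
  have hH0 : H 0 = 0 := by simp [hH]
  have hlow : ∀ d, d < k - 1 → H d = 0 := by
    intro d
    induction d using Nat.strong_induction_on with
    | _ d ih =>
      intro hd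
      rcases Nat.eq_zero_or_pos d with rfl | hd0
      · exact hH0
      have h1 := sum_pow_affine_sub m Q u v d
      rw [h d (by simp [degs]; omega), sub_self, sum_range_succ, sum_eq_zero] at h1
      · have h2 : Q ^ d * H d = 0 := by simpa using h1.symm
        exact (mul_eq_zero.1 h2).resolve_left (pow_ne_zero _ hQ)
      · intro i hi
        rw [mem_range] at hi
        have := ih i hi (by omega)
        simp only [hH] at this
        rw [this, mul_zero]
  obtain ⟨k', rfl⟩ : ∃ k', k = k' + 2 := ⟨k - 2, by omega⟩
  have hk1 : k' + 2 - 1 = k' + 1 := by omega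
  rw [hk1] at h hlow ⊢
  have htop : ((k' + 2 : ℕ) : ℤ) * m * H (k' + 1) + Q * H (k' + 2) = 0 := by
    have h1 := sum_pow_affine_sub m Q u v (k' + 2)
    rw [h _ (by simp [degs]), sub_self, sum_range_succ, sum_range_succ, sum_eq_zero] at h1
    · have e1 : (k' + 2).choose (k' + 1) = k' + 2 := Nat.choose_succ_self_right _
      have e2 : k' + 2 - (k' + 1) = 1 := by omega
      rw [e1, e2, Nat.choose_self, Nat.sub_self] at h1
      have h2 : Q ^ (k' + 1) * (((k' + 2 : ℕ) : ℤ) * m * H (k' + 1) + Q * H (k' + 2)) = 0 := by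
        rw [h1]; simp only [hH]; push_cast; ring
      exact (mul_eq_zero.1 h2).resolve_left (pow_ne_zero _ hQ)
    · intro i hi
      rw [mem_range] at hi
      have := hlow i (by omega)
      simp only [hH] at this
      rw [this, mul_zero]
  obtain ⟨t, ht⟩ : Q ∣ H (k' + 1) :=
    hcop.dvd_of_dvd_mul_left ⟨-H (k' + 2), by linear_combination htop⟩
  refine ⟨t, ?_⟩
  have htop' : H (k' + 2) = -(((k' + 2 : ℕ) : ℤ) * m * t) := by
    rw [ht] at htop
    have : Q * (H (k' + 2) + ((k' + 2 : ℕ) : ℤ) * m * t) = 0 := by linear_combination htop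
    have := (mul_eq_zero.1 this).resolve_left hQ
    linear_combination this
  funext i
  have hi := i.2
  have e : (powVec (k' + 2) u - powVec (k' + 2) v) i = H ((i : ℕ) + 1) := rfl
  rw [e]
  simp only [Pi.smul_apply, Pi.add_apply, smul_eq_mul, degDir]
  by_cases h1 : (i : ℕ) + 1 = k' + 1
  · rw [h1, ht]
    simp
    ring
  · by_cases h2 : (i : ℕ) + 1 = k' + 2
    · rw [h2, htop']
      simp
      ring
    · rw [if_neg h1, if_neg h2, hlow _ (by omega)]
      simp

lemma abs_powSum_sub_le {τ : ℕ} {Y : ℤ} {u v : Fin τ → ℤ} (hu : ∀ l, 1 ≤ u l ∧ u l ≤ Y)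
    (hv : ∀ l, 1 ≤ v l ∧ v l ≤ Y) (d : ℕ) :
    |∑ l, u l ^ d - ∑ l, v l ^ d| ≤ τ * Y ^ d := by
  have hb : ∀ w : Fin τ → ℤ, (∀ l, 1 ≤ w l ∧ w l ≤ Y) →
      0 ≤ ∑ l, w l ^ d ∧ ∑ l, w l ^ d ≤ τ * Y ^ d := by
    intro w hw
    refine ⟨sum_nonneg fun l _ => pow_nonneg (by linarith [(hw l).1]) _, ?_⟩
    calc _ ≤ ∑ _l : Fin τ, Y ^ d :=
          sum_le_sum fun l _ => pow_le_pow_left₀ (by linarith [(hw l).1]) (hw l).2 _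
      _ = _ := by simp
  have h1 := hb u hu
  have h2 := hb v hv
  rw [abs_le]
  constructor <;> linarith [h1.1, h1.2, h2.1, h2.2]

open Classical in
lemma powEnergy_le_card_line {k : ℕ} (hk : 2 ≤ k) (τ : ℕ) {m : ℤ} {Q Y B : ℕ} (hQ : 1 ≤ Q)
    (hB : τ * Y ^ (k - 1) ≤ Q * B) (hcop : IsCoprime (Q : ℤ) ((k : ℤ) * m)) (A : Finset ℤ)
    (hA : ∀ x ∈ A, ∃ u ∈ Icc (1 : ℤ) Y, x = m + Q * u) :
    powEnergy (degs k (k - 1)) (fun _ : Fin τ => A) ≤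
      #{z ∈ Fintype.piFinset (fun _ : Fin τ => Icc (1 : ℤ) Y) ×ˢ
          Fintype.piFinset (fun _ : Fin τ => Icc (1 : ℤ) Y) |
        ∃ t : ℤ, |t| ≤ B ∧ powVec k z.1 - powVec k z.2 =
          t • (degDir k (k - 1) Q + m • degDir k k (-k))} := by
  have hQ0 : (Q : ℤ) ≠ 0 := by exact_mod_cast (by omega : Q ≠ 0)
  have hinv : ∀ x ∈ A, x = m + Q * ((x - m) / Q) ∧ (x - m) / (Q : ℤ) ∈ Icc (1 : ℤ) Y := by
    intro x hx
    obtain ⟨u, hu, rfl⟩ := hA x hx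
    rw [add_sub_cancel_left, Int.mul_ediv_cancel_left _ hQ0]
    exact ⟨rfl, hu⟩
  refine card_le_card_of_injOn
    (fun z => (fun l => (z.1 l - m) / (Q : ℤ), fun l => (z.2 l - m) / (Q : ℤ))) ?_ ?_
  · intro z hz
    simp only [coe_filter, mem_product, Fintype.mem_piFinset, Set.mem_ofPred_eq] at hz ⊢
    obtain ⟨⟨h1, h2⟩, h3⟩ := hz
    have m1 := fun l => (hinv _ (h1 l)).2
    have m2 := fun l => (hinv _ (h2 l)).2
    refine ⟨⟨m1, m2⟩, ?_⟩
    obtain ⟨t, ht⟩ := exists_line_of_affine (u := fun l => (z.1 l - m) / (Q : ℤ))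
      (v := fun l => (z.2 l - m) / (Q : ℤ)) hk hQ0 hcop (by
        intro d hd
        simp only [← (hinv _ (h1 _)).1, ← (hinv _ (h2 _)).1]
        exact h3 d hd)
    refine ⟨t, ?_, ht⟩
    have hi := congrFun ht ⟨k - 2, by omega⟩
    have ek : k - 2 + 1 = k - 1 := by omega
    simp only [Pi.sub_apply, Pi.smul_apply, Pi.add_apply, smul_eq_mul, degDir, powVec, ek,
      if_true, if_neg (by omega : ¬ k - 1 = k), mul_zero, add_zero] at hi
    have hb := abs_powSum_sub_le (fun l => mem_Icc.1 (m1 l)) (fun l => mem_Icc.1 (m2 l)) (k - 1)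
    rw [hi, abs_mul, Nat.abs_cast] at hb
    have hB' : (τ : ℤ) * (Y : ℤ) ^ (k - 1) ≤ Q * B := by exact_mod_cast hB
    have : |t| * (Q : ℤ) ≤ B * Q := by linarith
    exact le_of_mul_le_mul_right this (by positivity)
  · intro z hz z' hz' h
    simp only [coe_filter, mem_product, Fintype.mem_piFinset, Set.mem_ofPred_eq] at hz hz'
    simp only [Prod.mk.injEq] at h
    refine Prod.ext (funext fun l => ?_) (funext fun l => ?_)
    · rw [(hinv _ (hz.1.1 l)).1, (hinv _ (hz'.1.1 l)).1, congrFun h.1 l]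
    · rw [(hinv _ (hz.1.2 l)).1, (hinv _ (hz'.1.2 l)).1, congrFun h.2 l]

open Classical in
lemma mul_classEnergy_le_sum_line {p k : ℕ} (hp : p.Prime) (hkp : k < p) (hk : 2 ≤ k)
    (q h : ℕ) {τ B : ℕ} (hτ : 1 ≤ τ) (hB : τ * (2 * p ^ h) ^ (k - 1) ≤ p ^ q * B) :
    p ^ h * classEnergy k p (q + h) (k - 1) q τ ≤
      ∑ m ∈ Icc (-((p ^ (q + h) : ℕ) : ℤ)) (-1),
        #{z ∈ Fintype.piFinset (fun _ : Fin τ => Icc (1 : ℤ) (2 * p ^ h : ℕ)) ×ˢ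
            Fintype.piFinset (fun _ : Fin τ => Icc (1 : ℤ) (2 * p ^ h : ℕ)) |
          ∃ t : ℤ, |t| ≤ B ∧ powVec k z.1 - powVec k z.2 =
            t • (degDir k (k - 1) (p ^ q : ℕ) + m • degDir k k (-k))} := by
  have hp0 := hp.pos
  set Q := p ^ q with hQ
  set L := p ^ h with hL
  have hQ1 : 1 ≤ Q := Nat.one_le_pow _ _ hp0
  have hL1 : 1 ≤ L := Nat.one_le_pow _ _ hp0
  have hX : p ^ (q + h) = Q * L := pow_add _ _ _
  set E : ℤ → ℕ := fun m =>
    #{z ∈ Fintype.piFinset (fun _ : Fin τ => Icc (1 : ℤ) (2 * L : ℕ)) ×ˢ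
            Fintype.piFinset (fun _ : Fin τ => Icc (1 : ℤ) (2 * L : ℕ)) |
          ∃ t : ℤ, |t| ≤ B ∧ powVec k z.1 - powVec k z.2 =
            t • (degDir k (k - 1) Q + m • degDir k k (-k))} with hE
  have hcls : ∀ y ∈ range Q ×ˢ Icc 1 L, powEnergy (degs k (k - 1))
      (fun _ : Fin τ => resSet p (q + h) q y.1) ≤ E ((y.1 : ℤ) - Q * y.2) := by
    intro y hy
    rw [mem_product, mem_range, mem_Icc] at hy
    by_cases hc : 1 ≤ q ∧ (p : ℤ) ∣ (y.1 : ℤ)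
    · rw [powEnergy_eq_zero (⟨0, hτ⟩ : Fin τ) (resSet_eq_empty hc.1 hc.2)]
      exact Nat.zero_le _
    refine powEnergy_le_card_line hk τ hQ1 hB ?_ _ ?_
    · rcases Nat.eq_zero_or_pos q with h0 | h1
      · rw [hQ, h0]; simpa using isCoprime_one_left
      · have hc' : ¬ (p : ℤ) ∣ (y.1 : ℤ) := fun hh => hc ⟨h1, hh⟩
        have hpp := Nat.prime_iff_prime_int.1 hp
        rw [hQ]; push_cast
        refine IsCoprime.pow_left (hpp.coprime_iff_not_dvd.2 fun hd => ?_)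
        rcases hpp.dvd_or_dvd hd with hd | hd
        · have := Nat.le_of_dvd (by omega) (Int.natCast_dvd_natCast.1 hd)
          omega
        · refine hc' ?_
          have h2 : (p : ℤ) ∣ (p : ℤ) ^ q * y.2 := (dvd_pow_self _ (by omega)).mul_right _
          have := dvd_add hd h2
          simpa using this
    · intro x hx
      rw [resSet, mem_filter, mem_Icc] at hx
      obtain ⟨⟨hx1, hx2⟩, -, a, ha⟩ := hx
      have hQz : (0 : ℤ) < Q := by exact_mod_cast hQ1
      have hpX : (p : ℤ) ^ (q + h) = Q * L := by exact_mod_cast hX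
      have hpQ : (p : ℤ) ^ q = Q := by rw [hQ]; push_cast; rfl
      rw [hpX] at hx2
      rw [hpQ] at ha
      have hy1 : (y.1 : ℤ) < Q := by exact_mod_cast hy.1
      have ha0 : 0 ≤ a := by
        by_contra hneg
        have : a ≤ -1 := by omega
        nlinarith
      have haL : a ≤ L := by
        by_contra hneg
        have : (L : ℤ) + 1 ≤ a := by omega
        nlinarith
      refine ⟨a + y.2, ?_, ?_⟩
      · rw [mem_Icc]; push_cast; omega
      · linear_combination ha
  have hsum := sum_le_sum hcls
  rw [sum_product] at hsum
  simp only [sum_const, Nat.card_Icc, Nat.add_sub_cancel, smul_eq_mul, ← mul_sum] at hsum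
  refine hsum.trans ?_
  rw [← sum_image (f := E) (g := fun y : ℕ × ℕ => (y.1 : ℤ) - Q * y.2)]
  · refine sum_le_sum_of_subset ?_
    intro m hm
    obtain ⟨y, hy, rfl⟩ := mem_image.1 hm
    rw [mem_product, mem_range, mem_Icc] at hy
    rw [mem_Icc, hX]
    push_cast
    have hy1 : (y.1 : ℤ) < Q := by exact_mod_cast hy.1
    have hy2 : (1 : ℤ) ≤ y.2 := by exact_mod_cast hy.2.1
    have hy3 : (y.2 : ℤ) ≤ L := by exact_mod_cast hy.2.2
    have hQz : (0 : ℤ) < Q := by exact_mod_cast hQ1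
    constructor <;> nlinarith
  · intro y hy y' hy' he
    rw [mem_coe, mem_product, mem_range, mem_Icc] at hy hy'
    simp only at he
    have h1 : y.1 = y'.1 := eq_of_dvd_sub_of_lt hy.1 hy'.1
      ⟨(y.2 : ℤ) - y'.2, by linear_combination he⟩
    have hQz : (Q : ℤ) ≠ 0 := by exact_mod_cast (by omega : Q ≠ 0)
    rw [h1] at he
    have h2 : (Q : ℤ) * y.2 = Q * y'.2 := by linear_combination -he
    exact Prod.ext h1 (by exact_mod_cast mul_left_cancel₀ hQz h2)

/-- The number of solutions of the Vinogradov system of degree `w` in `[1, Y]`. -/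
noncomputable def vinoCount (τ w Y : ℕ) : ℕ :=
  powEnergy (Icc 1 w) fun _ : Fin τ => Icc (1 : ℤ) Y

lemma diffCount_powVec_zero (k τ Y : ℕ) :
    diffCount (Fintype.piFinset fun _ : Fin τ => Icc (1 : ℤ) Y) (powVec k) 0 =
      vinoCount τ k Y := by
  unfold diffCount vinoCount powEnergy
  congr 1
  refine filter_congr fun z _ => ?_
  rw [sub_eq_zero]
  constructor
  · intro h d hd
    rw [mem_Icc] at hd
    have := congrFun h ⟨d - 1, by omega⟩
    simpa [powVec, Nat.sub_add_cancel hd.1] using this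
  · intro h
    funext i
    exact h _ (by rw [mem_Icc]; have := i.2; omega)

open Classical in
lemma card_line_powVec_le (k τ Y : ℕ) (a : ℤ) :
    #{z ∈ (Fintype.piFinset fun _ : Fin τ => Icc (1 : ℤ) Y) ×ˢ
        (Fintype.piFinset fun _ : Fin τ => Icc (1 : ℤ) Y) |
      ∃ b : ℤ, powVec k z.1 - powVec k z.2 = b • degDir k k a} ≤ vinoCount τ (k - 1) Y := by
  unfold vinoCount powEnergy
  refine card_le_card (monotone_filter_right _ ?_)
  rintro z - ⟨b, hb⟩ d hd
  rw [mem_Icc] at hd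
  have := congrFun hb ⟨d - 1, by omega⟩
  simp only [Pi.sub_apply, Pi.smul_apply, powVec, degDir, Nat.sub_add_cancel hd.1,
    if_neg (by omega : ¬ d = k), smul_zero] at this
  linarith

lemma card_mul_eq_le_divisors (P : Finset (ℤ × ℤ)) {b : ℤ} (hb : b ≠ 0) :
    #{y ∈ P | y.1 * y.2 = b} ≤ 2 * #b.natAbs.divisors := by
  have : 2 * #b.natAbs.divisors = #((univ : Finset Bool) ×ˢ b.natAbs.divisors) := by
    rw [card_product]; simp
  rw [this]
  refine card_le_card_of_injOn (fun y => (decide (0 ≤ y.1), y.1.natAbs)) ?_ ?_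
  · intro y hy
    rw [mem_coe, mem_filter] at hy
    simp only [coe_product, Set.mem_prod, mem_coe, mem_univ, true_and, Nat.mem_divisors]
    refine ⟨?_, by omega⟩
    rw [← hy.2, Int.natAbs_mul]
    exact dvd_mul_right _ _
  · intro y hy y' hy' h
    rw [mem_coe, mem_filter] at hy hy'
    simp only [Prod.mk.injEq, decide_eq_decide] at h
    have h1 : y.1 = y'.1 := by omega
    have h0 : y.1 ≠ 0 := by rintro h0; rw [h0, zero_mul] at hy; exact hb hy.2.symm
    refine Prod.ext h1 (mul_left_cancel₀ h0 ?_)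
    rw [hy.2, h1, hy'.2]

lemma mul_classEnergy_le_vinoCount {p k : ℕ} (hp : p.Prime) (hkp : k < p) (hk : 2 ≤ k)
    (q h : ℕ) {τ B Δ : ℕ} (hτ : 1 ≤ τ) (hB1 : 1 ≤ B)
    (hB : τ * (2 * p ^ h) ^ (k - 1) ≤ p ^ q * B)
    (hΔ : ∀ b : ℕ, 1 ≤ b → b ≤ τ * (2 * p ^ h) ^ k → 2 * #b.divisors ≤ Δ) :
    p ^ h * classEnergy k p (q + h) (k - 1) q τ ≤
      4 * ((2 * p ^ (q + h) + 2 * (4 * B) + 2) * vinoCount τ k (2 * p ^ h) +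
        Δ * vinoCount τ (k - 1) (2 * p ^ h)) := by
  classical
  refine (mul_classEnergy_le_sum_line hp hkp hk q h hτ hB).trans ?_
  refine (sum_card_line_le (Fintype.piFinset fun _ : Fin τ => Icc (1 : ℤ) (2 * p ^ h : ℕ))
    (powVec k) (degDir k (k - 1) (p ^ q : ℕ)) (degDir k k (-k)) _ (p ^ (q + h)) ?_ B hB1).trans ?_
  · intro m hm m' hm'
    rw [mem_Icc] at hm hm'
    rw [abs_le]
    constructor <;> linarith [hm.1, hm.2, hm'.1, hm'.2]
  refine Nat.mul_le_mul_left _ ?_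
  refine (sum_diffCount_mul_le _ _ _ ?_ _ _ Δ ?_).trans ?_
  · intro h0
    have := congrFun h0 ⟨k - 1, by omega⟩
    simp only [degDir, Pi.zero_apply, Nat.sub_add_cancel (by omega : 1 ≤ k), if_true] at this
    omega
  · intro b hb hcount
    refine (card_mul_eq_le_divisors _ hb).trans (hΔ _ (by omega) ?_)
    obtain ⟨z, hz⟩ := card_pos.1 (Nat.pos_of_ne_zero hcount)
    simp only [mem_filter, mem_product, Fintype.mem_piFinset, mem_Icc] at hz
    have h1 := congrFun hz.2 ⟨k - 1, by omega⟩
    simp only [Pi.sub_apply, Pi.smul_apply, powVec, degDir,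
      Nat.sub_add_cancel (by omega : 1 ≤ k), if_true, smul_eq_mul] at h1
    have h2 := abs_powSum_sub_le hz.1.1 hz.1.2 k
    rw [h1, abs_mul, abs_neg, Nat.abs_cast] at h2
    have h3 : |b| ≤ |b| * k := le_mul_of_one_le_right (abs_nonneg _) (by exact_mod_cast (by omega))
    zify
    push_cast at h2
    linarith
  · rw [diffCount_powVec_zero]
    gcongr
    exact card_line_powVec_le _ _ _ _

/-- The energy over classes modulo `p ^ ((r - 1) h)` in terms of Vinogradov's system. -/
lemma classEnergy_le_vinoCount {p k r : ℕ} (hp : p.Prime) (hkp : k < p) (hk : 2 ≤ k) (hr : 1 ≤ r)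
    (hrk : r < k) (h : ℕ) {τ Δ : ℕ} (hτ : 1 ≤ τ)
    (hΔ : ∀ b : ℕ, 1 ≤ b → b ≤ τ * (2 * p ^ h) ^ k → 2 * #b.divisors ≤ Δ) :
    p ^ h * classEnergy k p (r * h) r ((r - 1) * h) τ ≤
      ((2 * τ + 1) ^ (k - 1 - r) * (4 * (4 + 8 * τ * 2 ^ (k - 1)))) *
        (p ^ h) ^ (∑ i ∈ range (k - 1 - r), (i + 1)) *
        ((p ^ h) ^ (k - 1) * vinoCount τ k (2 * p ^ h) +
          Δ * vinoCount τ (k - 1) (2 * p ^ h)) := by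
  have hp0 := hp.pos
  have hL1 : 1 ≤ p ^ h := Nat.one_le_pow _ _ hp0
  have h1 := classEnergy_le_of_large hp hkp hr h hτ (k - 1 - r) (by omega)
  have e1 : r + (k - 1 - r) = k - 1 := by omega
  rw [e1] at h1
  have e2 : (r - 1) * h + h = r * h := by
    obtain ⟨r', rfl⟩ : ∃ r', r = r' + 1 := ⟨r - 1, by omega⟩
    rw [Nat.add_sub_cancel]; ring
  have hpow : p ^ ((r - 1) * h) = (p ^ h) ^ (r - 1) := by rw [← pow_mul, mul_comm]
  have hpow' : p ^ (r * h) = (p ^ h) ^ r := by rw [← pow_mul, mul_comm]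
  have h2 := mul_classEnergy_le_vinoCount hp hkp hk ((r - 1) * h) h (Δ := Δ)
    (B := τ * 2 ^ (k - 1) * (p ^ h) ^ (k - r)) hτ (Nat.mul_pos (by positivity) (by positivity))
    (by
      rw [hpow, mul_pow]
      have : (p ^ h) ^ (k - 1) = (p ^ h) ^ (r - 1) * (p ^ h) ^ (k - r) := by
        rw [← pow_add]; congr 1; omega
      rw [this]
      exact le_of_eq (by ring)) hΔ
  rw [e2, hpow'] at h2
  set L := p ^ h with hL
  set Jk := vinoCount τ k (2 * L)
  set Jk' := vinoCount τ (k - 1) (2 * L)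
  have h3 : 2 * L ^ r + 2 * (4 * (τ * 2 ^ (k - 1) * L ^ (k - r))) + 2 ≤
      (4 + 8 * τ * 2 ^ (k - 1)) * L ^ (k - 1) := by
    have a1 : L ^ r ≤ L ^ (k - 1) := Nat.pow_le_pow_right hL1 (by omega)
    have a2 : τ * 2 ^ (k - 1) * L ^ (k - r) ≤ τ * 2 ^ (k - 1) * L ^ (k - 1) :=
      Nat.mul_le_mul_left _ (Nat.pow_le_pow_right hL1 (by omega))
    have a3 : 1 ≤ L ^ (k - 1) := Nat.one_le_pow _ _ hL1
    nlinarith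
  have h4 : L * classEnergy k p (r * h) (k - 1) ((r - 1) * h) τ ≤
      4 * (4 + 8 * τ * 2 ^ (k - 1)) * (L ^ (k - 1) * Jk + Δ * Jk') := by
    refine h2.trans ?_
    have b1 : (2 * L ^ r + 2 * (4 * (τ * 2 ^ (k - 1) * L ^ (k - r))) + 2) * Jk ≤
      (4 + 8 * τ * 2 ^ (k - 1)) * L ^ (k - 1) * Jk := Nat.mul_le_mul_right _ h3
    have b2 : Δ * Jk' ≤ (4 + 8 * τ * 2 ^ (k - 1)) * (Δ * Jk') :=
      Nat.le_mul_of_pos_left _ (by positivity)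
    nlinarith
  calc _ ≤ L * (((2 * τ + 1) ^ (k - 1 - r) * L ^ (∑ i ∈ range (k - 1 - r), (i + 1))) *
        classEnergy k p (r * h) (k - 1) ((r - 1) * h) τ) := Nat.mul_le_mul_left _ h1
    _ = ((2 * τ + 1) ^ (k - 1 - r) * L ^ (∑ i ∈ range (k - 1 - r), (i + 1))) *
        (L * classEnergy k p (r * h) (k - 1) ((r - 1) * h) τ) := by ring
    _ ≤ ((2 * τ + 1) ^ (k - 1 - r) * L ^ (∑ i ∈ range (k - 1 - r), (i + 1))) *
        (4 * (4 + 8 * τ * 2 ^ (k - 1)) * (L ^ (k - 1) * Jk + Δ * Jk')) := by gcongr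
    _ = _ := by ring

lemma exists_card_divisors_le {δ : ℝ} (hδ : 0 < δ) :
    ∃ C : ℝ, 1 ≤ C ∧ ∀ n : ℕ, 1 ≤ n → (#n.divisors : ℝ) ≤ C * (n : ℝ) ^ δ := by
  obtain ⟨M, hM⟩ := exists_nat_ge ((2 : ℝ) ^ (1 / δ))
  set a : ℝ := 2 ^ δ - 1 with ha
  have ha0 : 0 < a := by
    have := Real.one_lt_rpow (one_lt_two) hδ
    linarith
  set K : ℝ := 1 + 1 / a with hK
  have hK1 : 1 ≤ K := by
    have : 0 < 1 / a := by positivity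
    linarith
  refine ⟨K ^ M, one_le_pow₀ hK1, fun n hn => ?_⟩
  have hn0 : n ≠ 0 := by omega
  have hfac : ∀ p ∈ n.primeFactors, ((n.factorization p + 1 : ℕ) : ℝ) ≤
      (if p < M then K else 1) * ((p : ℝ) ^ δ) ^ n.factorization p := by
    intro p hp
    have hp2 : (2 : ℝ) ≤ p := by exact_mod_cast (Nat.prime_of_mem_primeFactors hp).two_le
    set e := n.factorization p
    split_ifs with h
    · have h1 : 1 + a ≤ (p : ℝ) ^ δ := by
        rw [ha, add_sub_cancel]
        exact Real.rpow_le_rpow (by norm_num) hp2 hδ.le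
      have h2 : 1 + e * a ≤ ((p : ℝ) ^ δ) ^ e :=
        (one_add_mul_le_pow (by linarith) e).trans (pow_le_pow_left₀ (by linarith) h1 e)
      have h3 : ((e + 1 : ℕ) : ℝ) ≤ K * (1 + e * a) := by
        have : K * (1 + e * a) = 1 + e + (e * a + 1 / a) := by
          rw [hK]; field_simp; ring
        rw [this]; push_cast
        have : 0 ≤ e * a + 1 / a := by positivity
        linarith
      exact h3.trans (mul_le_mul_of_nonneg_left h2 (by linarith))
    · have h1 : (2 : ℝ) ≤ (p : ℝ) ^ δ := by
        have h2 : (2 : ℝ) ^ (1 / δ) ≤ p := hM.trans (by exact_mod_cast not_lt.1 h)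
        calc (2 : ℝ) = ((2 : ℝ) ^ (1 / δ)) ^ δ := by
              rw [← Real.rpow_mul (by norm_num), one_div_mul_cancel hδ.ne', Real.rpow_one]
          _ ≤ _ := Real.rpow_le_rpow (by positivity) h2 hδ.le
      rw [one_mul]
      calc ((e + 1 : ℕ) : ℝ) ≤ ((2 ^ e : ℕ) : ℝ) := by exact_mod_cast Nat.lt_two_pow_self
        _ = 2 ^ e := by push_cast; rfl
        _ ≤ _ := pow_le_pow_left₀ (by norm_num) h1 e
  rw [Nat.card_divisors hn0, Nat.cast_prod]
  refine (prod_le_prod (fun _ _ => Nat.cast_nonneg _) hfac).trans ?_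
  rw [prod_mul_distrib]
  have e1 : ∏ p ∈ n.primeFactors, (if p < M then K else 1) ≤ K ^ M := by
    rw [prod_ite, prod_const, prod_const_one, mul_one]
    refine pow_le_pow_right₀ hK1 ?_
    calc _ ≤ #(range M) := card_le_card fun x hx => by
          simp only [mem_filter] at hx; simpa using hx.2
      _ = M := card_range M
  have e2 : ∏ p ∈ n.primeFactors, ((p : ℝ) ^ δ) ^ n.factorization p = (n : ℝ) ^ δ := by
    have h1 : ∀ p ∈ n.primeFactors, ((p : ℝ) ^ δ) ^ n.factorization p =
        ((p : ℝ) ^ n.factorization p) ^ δ := fun p _ => by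
      rw [← Real.rpow_natCast, ← Real.rpow_natCast, ← Real.rpow_mul (by positivity),
        ← Real.rpow_mul (by positivity), mul_comm]
    rw [prod_congr rfl h1, Real.finsetProd_rpow _ _ (fun _ _ => by positivity)]
    congr 1
    conv_rhs => rw [← Nat.prod_factorization_pow_eq_self hn0]
    rw [Nat.prod_factorization_eq_prod_primeFactors]
    push_cast; rfl
  rw [e2]
  exact mul_le_mul_of_nonneg_right e1 (by positivity)

lemma ec_add (x y : ℝ) : ec (x + y) = ec x * ec y := by
  unfold ec
  rw [← Complex.exp_add]
  congr 1; push_cast; ring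

lemma conj_ec (x : ℝ) : (starRingEnd ℂ) (ec x) = ec (-x) := by
  unfold ec
  rw [← Complex.exp_conj]
  congr 1
  simp [Complex.conj_ofNat]

lemma ec_sum {ι : Type*} (T : Finset ι) (f : ι → ℝ) : ec (∑ i ∈ T, f i) = ∏ i ∈ T, ec (f i) := by
  unfold ec
  rw [← Complex.exp_sum]
  congr 1
  push_cast
  rw [mul_sum]

lemma integral_ec_mul (m : ℤ) : ∫ α in (0 : ℝ)..1, ec (α * m) = if m = 0 then 1 else 0 := by
  unfold ec
  split_ifs with h
  · simp [h]
  · have hc : (2 * Real.pi * Complex.I * m : ℂ) ≠ 0 := by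
      have := Real.pi_ne_zero
      simp [h, this]
    have h1 : (fun α : ℝ => Complex.exp (2 * Real.pi * Complex.I * ((α * m : ℝ) : ℂ))) =
        fun α : ℝ => Complex.exp ((2 * Real.pi * Complex.I * m : ℂ) * α) := by
      funext α; congr 1; push_cast; ring
    rw [h1, integral_exp_mul_complex hc]
    have h2 : Complex.exp (2 * Real.pi * Complex.I * m * ((1 : ℝ) : ℂ)) = 1 := by
      rw [Complex.exp_eq_one_iff]
      exact ⟨m, by push_cast; ring⟩
    rw [h2]; simp

lemma continuous_ec_mul (c : ℝ) : Continuous fun α : ℝ => ec (α * c) := by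
  unfold ec
  fun_prop

lemma gk_eq_sum_int (k : ℕ) (X α : ℝ) :
    gk k X α = ∑ x ∈ Icc (1 : ℤ) ⌊X⌋₊, ec (α * (x : ℝ) ^ k) := by
  unfold gk
  refine sum_nbij' (fun x => (x : ℤ)) Int.toNat ?_ ?_ ?_ ?_ ?_
  · intro x hx; simp only [mem_Icc] at hx ⊢; omega
  · intro x hx; simp only [mem_Icc] at hx ⊢; omega
  · intro x hx; simp
  · intro x hx; simp only [mem_Icc] at hx; simp; omega
  · intro x hx; simp

lemma gk_pow_eq (s k : ℕ) (X α : ℝ) :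
    gk k X α ^ s = ∑ x ∈ Fintype.piFinset fun _ : Fin s => Icc (1 : ℤ) ⌊X⌋₊,
      ec (α * ((∑ i, x i ^ k : ℤ) : ℝ)) := by
  rw [gk_eq_sum_int]
  have := Finset.prod_univ_sum (fun _ : Fin s => Icc (1 : ℤ) ⌊X⌋₊)
    (fun _ x => ec (α * (x : ℝ) ^ k))
  rw [prod_const, card_univ, Fintype.card_fin] at this
  rw [this]
  refine sum_congr rfl fun x _ => ?_
  rw [← ec_sum, ← mul_sum]
  push_cast; rfl

/-- The moments of the Weyl sum count solutions of the underlying equation. -/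
lemma Iint_eq_powEnergy (s k : ℕ) (X : ℝ) :
    Iint s k X = powEnergy {k} fun _ : Fin s => Icc (1 : ℤ) ⌊X⌋₊ := by
  have hpt : ∀ α : ℝ, ((‖gk k X α‖ ^ (2 * s) : ℝ) : ℂ) =
      ∑ z ∈ (Fintype.piFinset fun _ : Fin s => Icc (1 : ℤ) ⌊X⌋₊) ×ˢ
        (Fintype.piFinset fun _ : Fin s => Icc (1 : ℤ) ⌊X⌋₊),
        ec (α * ((∑ i, z.1 i ^ k - ∑ i, z.2 i ^ k : ℤ) : ℝ)) := by
    intro α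
    rw [pow_mul, Complex.ofReal_pow, Complex.ofReal_pow, ← Complex.mul_conj', mul_pow, ← map_pow,
      gk_pow_eq, map_sum, sum_mul_sum, ← sum_product']
    refine sum_congr rfl fun z _ => ?_
    rw [conj_ec, ← ec_add]
    congr 1; push_cast; ring
  have h : ((Iint s k X : ℝ) : ℂ) =
      ((powEnergy {k} fun _ : Fin s => Icc (1 : ℤ) ⌊X⌋₊ : ℕ) : ℂ) := by
    unfold Iint
    rw [← intervalIntegral.integral_ofReal]
    simp_rw [hpt]
    rw [intervalIntegral.integral_finsetSum
      fun z _ => (continuous_ec_mul _).intervalIntegrable _ _]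
    simp_rw [integral_ec_mul]
    rw [sum_ite, sum_const_zero, add_zero, sum_const, nsmul_eq_mul, mul_one]
    unfold powEnergy
    simp [sub_eq_zero]
  exact_mod_cast h

lemma powEnergy_mul_left {k s : ℕ} {c : ℤ} (hc : c ≠ 0) (A : Finset ℤ) (B : Finset ℤ)
    (hB : ∀ x ∈ B, ∃ y ∈ A, x = c * y) :
    powEnergy {k} (fun _ : Fin s => B) ≤ powEnergy {k} fun _ : Fin s => A := by
  choose! f hf using hB
  unfold powEnergy
  refine card_le_card_of_injOn (fun z => (fun i => f (z.1 i), fun i => f (z.2 i))) ?_ ?_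
  · intro z hz
    simp only [coe_filter, mem_product, Fintype.mem_piFinset, Set.mem_ofPred_eq, mem_singleton,
      forall_eq] at hz ⊢
    obtain ⟨⟨h1, h2⟩, h3⟩ := hz
    refine ⟨⟨fun i => (hf _ (h1 i)).1, fun i => (hf _ (h2 i)).1⟩, ?_⟩
    refine mul_left_cancel₀ (pow_ne_zero k hc) ?_
    rw [mul_sum, mul_sum]
    simp_rw [← mul_pow]
    simpa only [← (hf _ (h1 _)).2, ← (hf _ (h2 _)).2] using h3
  · intro z hz z' hz' h
    simp only [coe_filter, mem_product, Fintype.mem_piFinset, Set.mem_ofPred_eq] at hz hz'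
    simp only [Prod.mk.injEq] at h
    refine Prod.ext (funext fun i => ?_) (funext fun i => ?_)
    · rw [(hf _ (hz.1.1 i)).2, (hf _ (hz'.1.1 i)).2, congrFun h.1 i]
    · rw [(hf _ (hz.1.2 i)).2, (hf _ (hz'.1.2 i)).2, congrFun h.2 i]

/-- Reduction to variables coprime to `p`. -/
lemma powEnergy_le_classEnergy {p : ℕ} (hp : p.Prime) (k n : ℕ) {s : ℕ} (hs : 1 ≤ s) :
    powEnergy {k} (fun _ : Fin s => Icc (1 : ℤ) ((p : ℤ) ^ n)) ≤
      (n + 1) ^ (2 * s) * classEnergy k p n 1 0 s := by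
  have hR : ∀ x ∈ Icc (1 : ℤ) ((p : ℤ) ^ n), padicValInt p x ∈ range (n + 1) := by
    intro x hx
    rw [mem_Icc] at hx
    have h1 : (p : ℤ) ^ padicValInt p x ∣ x := padicValInt_dvd x
    have h2 : (p : ℤ) ^ padicValInt p x ≤ (p : ℤ) ^ n := (Int.le_of_dvd (by omega) h1).trans hx.2
    have h3 : p ^ padicValInt p x ≤ p ^ n := by exact_mod_cast h2
    have := (Nat.pow_le_pow_iff_right hp.one_lt).1 h3
    simp; omega
  have hE : classEnergy k p n 1 0 s = powEnergy {k} fun _ : Fin s => resSet p n 0 0 := by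
    simp [classEnergy, degs]
  refine (powEnergy_split_const {k} _ (padicValInt p) (range (n + 1)) hR s hs).trans ?_
  have hb : ∀ b ∈ range (n + 1),
      powEnergy {k} (fun _ : Fin s => {x ∈ Icc (1 : ℤ) ((p : ℤ) ^ n) | padicValInt p x = b}) ≤
        classEnergy k p n 1 0 s := by
    intro b _
    rw [hE]
    refine powEnergy_mul_left (c := (p : ℤ) ^ b)
      (pow_ne_zero _ (by exact_mod_cast hp.ne_zero)) _ _ ?_
    intro x hx
    simp only [mem_filter, mem_Icc] at hx
    obtain ⟨⟨h1, h2⟩, h3⟩ := hx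
    have hd : (p : ℤ) ^ b ∣ x := h3 ▸ padicValInt_dvd x
    obtain ⟨y, hy⟩ := hd
    have hpb : (1 : ℤ) ≤ (p : ℤ) ^ b := one_le_pow₀ (by exact_mod_cast hp.one_le)
    have hy1 : 1 ≤ y := by
      by_contra hcon
      nlinarith
    refine ⟨y, ?_, hy⟩
    simp only [resSet, mem_filter, mem_Icc, pow_zero, one_dvd, and_true]
    refine ⟨⟨hy1, by nlinarith⟩, fun hpy => ?_⟩
    have : (p : ℤ) ^ (b + 1) ∣ x := by
      rw [hy, pow_succ]; exact mul_dvd_mul_left _ hpy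
    have hf : Fact p.Prime := ⟨hp⟩
    rw [padicValInt_dvd_iff] at this
    omega
  refine (Nat.mul_le_mul_left _ (sum_le_sum hb)).trans ?_
  rw [sum_const, card_range, smul_eq_mul, ← mul_assoc, ← pow_succ]
  have : 2 * s - 1 + 1 = 2 * s := by omega
  rw [this]

lemma Jcount_eq_vinoCount (τ w : ℕ) {X : ℝ} (hX : 0 ≤ X) :
    Jcount τ w X = vinoCount τ w ⌊X⌋₊ := by
  unfold Jcount vinoCount powEnergy
  rw [← Set.ncard_coe_finset]
  congr 1
  have hle : ∀ x : ℤ, (x : ℝ) ≤ X ↔ x ≤ (⌊X⌋₊ : ℤ) := fun x => by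
    rw [Int.natCast_floor_eq_floor hX, Int.le_floor]
  ext z
  simp only [Set.mem_ofPred_eq, coe_filter, mem_product, Fintype.mem_piFinset, mem_Icc, hle,
    sum_sub_distrib, sub_eq_zero, and_assoc]

lemma vinoCount_le_pow (τ w Y : ℕ) : vinoCount τ w Y ≤ Y ^ (2 * τ) := by
  unfold vinoCount powEnergy
  refine (card_filter_le _ _).trans ?_
  rw [card_product, Fintype.card_piFinset]
  simp only [Int.card_Icc, prod_const, card_univ, Fintype.card_fin]
  rw [← pow_add, two_mul]
  simp

lemma exists_Jcount_le (τ w : ℕ) {δ : ℝ} (hδ : 0 < δ) :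
    ∃ C X₀ : ℝ, 0 < C ∧ ∀ X : ℝ, X₀ ≤ X → (Jcount τ w X : ℝ) ≤
      C * X ^ (2 * (τ : ℝ) - (w : ℝ) * ((w : ℝ) + 1) / 2 + etaExp τ w + δ) := by
  set S : Set ℝ := {η : ℝ | 0 < η ∧ ∀ ε : ℝ, 0 < ε → ∃ C X₀ : ℝ, 0 < C ∧ ∀ X : ℝ, X₀ ≤ X →
    (Jcount τ w X : ℝ) ≤ C * X ^ (2 * (τ : ℝ) - (w : ℝ) * ((w : ℝ) + 1) / 2 + η + ε)} with hS
  have hne : S.Nonempty := by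
    refine ⟨(w : ℝ) * ((w : ℝ) + 1) / 2 + 1, by positivity, fun ε hε =>
      ⟨1, 1, one_pos, fun X hX => ?_⟩⟩
    rw [Jcount_eq_vinoCount τ w (by linarith), one_mul]
    calc ((vinoCount τ w ⌊X⌋₊ : ℕ) : ℝ) ≤ ((⌊X⌋₊ ^ (2 * τ) : ℕ) : ℝ) := by
          exact_mod_cast vinoCount_le_pow τ w _
      _ = (⌊X⌋₊ : ℝ) ^ (2 * τ) := by push_cast; rfl
      _ ≤ X ^ (2 * τ) := pow_le_pow_left₀ (by positivity) (Nat.floor_le (by linarith)) _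
      _ = X ^ ((2 * τ : ℕ) : ℝ) := (Real.rpow_natCast _ _).symm
      _ ≤ _ := Real.rpow_le_rpow_of_exponent_le hX (by push_cast; linarith)
  have hlt : sInf S < etaExp τ w + δ / 2 := by
    have : etaExp τ w = sInf S := rfl
    linarith
  obtain ⟨η, hη, hηlt⟩ := exists_lt_of_csInf_lt hne hlt
  obtain ⟨C, X₀, hC, h⟩ := hη.2 (δ / 2) (by positivity)
  refine ⟨C, max X₀ 1, hC, fun X hX => (h X ((le_max_left _ _).trans hX)).trans ?_⟩
  refine mul_le_mul_of_nonneg_left ?_ hC.le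
  exact Real.rpow_le_rpow_of_exponent_le ((le_max_right _ _).trans hX) (by linarith)

lemma exists_vinoCount_le (τ w : ℕ) {δ : ℝ} (hδ : 0 < δ) :
    ∃ C : ℝ, 0 < C ∧ ∀ Y : ℕ, 1 ≤ Y → (vinoCount τ w Y : ℝ) ≤
      C * (Y : ℝ) ^ (2 * (τ : ℝ) - (w : ℝ) * ((w : ℝ) + 1) / 2 + etaExp τ w + δ) := by
  obtain ⟨C, X₀, hC, h⟩ := exists_Jcount_le τ w hδ
  set E := 2 * (τ : ℝ) - (w : ℝ) * ((w : ℝ) + 1) / 2 + etaExp τ w + δ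
  obtain ⟨M, hM⟩ := exists_nat_ge X₀
  have hnn : ∀ Y ∈ range M, 0 ≤ (vinoCount τ w Y : ℝ) / (Y : ℝ) ^ E := fun Y _ => by positivity
  refine ⟨C + ∑ Y ∈ range M, (vinoCount τ w Y : ℝ) / (Y : ℝ) ^ E,
    add_pos_of_pos_of_nonneg hC (sum_nonneg hnn), fun Y hY => ?_⟩
  have hpos : 0 < (Y : ℝ) ^ E := Real.rpow_pos_of_pos (by exact_mod_cast hY) _
  rcases lt_or_ge Y M with hlt | hge
  · rw [← div_le_iff₀ hpos]
    have := single_le_sum hnn (mem_range.2 hlt)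
    linarith
  · have h1 := h Y (hM.trans (by exact_mod_cast hge))
    rw [Jcount_eq_vinoCount τ w (Nat.cast_nonneg _), Nat.floor_natCast] at h1
    refine h1.trans (mul_le_mul_of_nonneg_right ?_ hpos.le)
    have := sum_nonneg hnn
    linarith

lemma two_mul_triangle (r : ℕ) : 2 * (r * (r - 1) / 2) = r * (r - 1) :=
  Nat.mul_div_cancel' (Nat.even_mul_pred_self r).two_dvd

/-- The moment of the Weyl sum over `[1, p ^ (r h)]` in terms of Vinogradov systems over
`[1, 2 p ^ h]`. -/
lemma exists_powEnergy_le_vinoCount {k r s : ℕ} (hr : 1 ≤ r) (hrk : r < k)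
    (hk : 2 ≤ k) (hs : r * (r - 1) / 2 < s) :
    ∃ K D : ℕ, 1 ≤ K ∧ ∀ p : ℕ, p.Prime → k < p → ∃ C : ℕ, ∀ h Δ : ℕ, 1 ≤ h → 2 ∣ r * h →
      (∀ i, 1 ≤ i → i < r → i * (i + 1) ∣ r * h) →
      (∀ b : ℕ, 1 ≤ b → b ≤ (s - r * (r - 1) / 2) * (2 * p ^ h) ^ k → 2 * #b.divisors ≤ Δ) →
      p ^ h * powEnergy {k} (fun _ : Fin s => Icc (1 : ℤ) ((p : ℤ) ^ (r * h))) ≤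
        C * D * K ^ (r * h) * (p ^ h) ^ ((2 * s - 1) * (r - 1) + r * (r - 1) / 2 +
          ∑ i ∈ range (k - 1 - r), (i + 1)) *
        ((p ^ h) ^ (k - 1) * vinoCount (s - r * (r - 1) / 2) k (2 * p ^ h) +
          Δ * vinoCount (s - r * (r - 1) / 2) (k - 1) (2 * p ^ h)) := by
  obtain ⟨K, hK, hiter⟩ := exists_classEnergy_iterate k s r hr hrk hs
  set τ := s - r * (r - 1) / 2 with hτ
  have hτ1 : 1 ≤ τ := by omega
  refine ⟨2 ^ (2 * s) * K, (2 * τ + 1) ^ (k - 1 - r) * (4 * (4 + 8 * τ * 2 ^ (k - 1))),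
    Nat.mul_pos (by positivity) hK, fun p hp hkp => ?_⟩
  obtain ⟨C, -, hC⟩ := hiter p hp hkp
  refine ⟨C, fun h Δ hh h2 hdvd hΔ => ?_⟩
  set n := r * h with hn
  have hn1 : 1 ≤ n := Nat.mul_pos hr hh
  have hdiv : n / r = h := by rw [hn]; exact Nat.mul_div_cancel_left h hr
  have hsub : n - n / r = (r - 1) * h := by rw [hdiv, hn, Nat.sub_mul, one_mul]
  have h1 := hC n hn1 h2 hdvd
  rw [hsub] at h1
  have hexp : (2 * s - 1) * ((r - 1) * h) + (r - 1) * (n / 2) =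
      h * ((2 * s - 1) * (r - 1) + r * (r - 1) / 2) := by
    have e1 : 2 * (n / 2) = n := Nat.mul_div_cancel' h2
    have e2 := two_mul_triangle r
    have e3 : (r - 1) * (n / 2) = h * (r * (r - 1) / 2) := by
      refine Nat.eq_of_mul_eq_mul_left (two_pos) ?_
      calc 2 * ((r - 1) * (n / 2)) = (r - 1) * (2 * (n / 2)) := by ring
        _ = h * (r * (r - 1)) := by rw [e1, hn]; ring
        _ = h * (2 * (r * (r - 1) / 2)) := by rw [e2]
        _ = 2 * (h * (r * (r - 1) / 2)) := by ring
    rw [e3]; ring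
  rw [hexp, pow_mul p] at h1
  have h3 := classEnergy_le_vinoCount hp hkp hk hr hrk h hτ1 hΔ
  have h4 := powEnergy_le_classEnergy hp k n (s := s) (by omega)
  have h5 : (n + 1) ^ (2 * s) ≤ (2 ^ (2 * s)) ^ n := by
    rw [← pow_mul, mul_comm (2 * s) n, pow_mul 2]
    exact Nat.pow_le_pow_left Nat.lt_two_pow_self _
  set L := p ^ h with hL
  set W := L ^ (k - 1) * vinoCount τ k (2 * L) + Δ * vinoCount τ (k - 1) (2 * L)
  set A := (2 * s - 1) * (r - 1) + r * (r - 1) / 2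
  set D := (2 * τ + 1) ^ (k - 1 - r) * (4 * (4 + 8 * τ * 2 ^ (k - 1)))
  set G := ∑ i ∈ range (k - 1 - r), (i + 1)
  calc L * powEnergy {k} (fun _ : Fin s => Icc (1 : ℤ) ((p : ℤ) ^ n))
      ≤ L * ((2 ^ (2 * s)) ^ n * (C * K ^ n * L ^ A * classEnergy k p n r ((r - 1) * h) τ)) := by
        gcongr
        exact h4.trans (Nat.mul_le_mul h5 h1)
    _ = (2 ^ (2 * s)) ^ n * (C * K ^ n * L ^ A) *
        (L * classEnergy k p n r ((r - 1) * h) τ) := by ring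
    _ ≤ (2 ^ (2 * s)) ^ n * (C * K ^ n * L ^ A) * (D * L ^ G * W) := by gcongr
    _ = _ := by rw [mul_pow, pow_add]; ring

lemma two_mul_sum_range_succ (m : ℕ) : 2 * ∑ i ∈ range m, (i + 1) = m * (m + 1) := by
  induction m with
  | zero => simp
  | succ m ih => rw [sum_range_succ, mul_add, ih]; ring

lemma exists_prime_le_rpow (k : ℕ) (K : ℝ) {δ : ℝ} (hδ : 0 < δ) :
    ∃ p : ℕ, p.Prime ∧ k < p ∧ K ≤ (p : ℝ) ^ δ := by
  have h : Filter.Tendsto (fun x : ℕ => (x : ℝ) ^ δ) Filter.atTop Filter.atTop :=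
    (tendsto_rpow_atTop hδ).comp tendsto_natCast_atTop_atTop
  obtain ⟨M, hM⟩ := Filter.eventually_atTop.1 (h.eventually_ge_atTop K)
  obtain ⟨p, hp, hpp⟩ := Nat.exists_infinite_primes (max M (k + 1))
  exact ⟨p, hpp, by have := (le_max_right _ _).trans hp; omega, hM p ((le_max_left _ _).trans hp)⟩

lemma rpow_le_of_le_mul {X Y Q : ℝ} (hX : 0 < X) (hXY : X ≤ Y) (hYQ : Y ≤ Q * X) (a : ℝ) :
    Y ^ a ≤ Q ^ |a| * X ^ a := by
  have ht : 1 ≤ Y / X := (one_le_div hX).2 hXY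
  have htQ : Y / X ≤ Q := (div_le_iff₀ hX).2 hYQ
  have hY : Y = Y / X * X := (div_mul_cancel₀ Y hX.ne').symm
  conv_lhs => rw [hY, Real.mul_rpow (by linarith) hX.le]
  refine mul_le_mul_of_nonneg_right ?_ (by positivity)
  exact (Real.rpow_le_rpow_of_exponent_le ht (le_abs_self a)).trans
    (Real.rpow_le_rpow (by linarith) htQ (abs_nonneg a))

lemma exists_dvd_multiple (r : ℕ) :
    ∃ H : ℕ, 1 ≤ H ∧ 2 ∣ H ∧ ∀ i, 1 ≤ i → i < r → i * (i + 1) ∣ H := by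
  refine ⟨2 * ∏ i ∈ Ico 1 r, i * (i + 1), ?_, dvd_mul_right _ _, fun i h1 h2 => ?_⟩
  · refine Nat.mul_pos two_pos (prod_pos fun i hi => ?_)
    have := (mem_Ico.1 hi).1
    positivity
  · exact (dvd_prod_of_mem (fun i => i * (i + 1)) (mem_Ico.2 ⟨h1, h2⟩)).mul_left 2

lemma exponent_identity {k r s : ℕ} (hr : 1 ≤ r) (hrk : r < k) (hs : r * (r - 1) / 2 < s) :
    (((2 * s - 1) * (r - 1) + r * (r - 1) / 2 + ∑ i ∈ range (k - 1 - r), (i + 1) : ℕ) : ℝ) +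
      2 * ((s - r * (r - 1) / 2 : ℕ) : ℝ) = r * (2 * s - k) + 1 + (k : ℝ) * (k - 1) / 2 := by
  have h1 : (2 : ℝ) * ((r * (r - 1) / 2 : ℕ) : ℝ) = r * (r - 1) := by
    have := two_mul_triangle r
    have h := congrArg (Nat.cast (R := ℝ)) this
    push_cast [Nat.cast_sub hr] at h ⊢
    exact h
  have h2 : (2 : ℝ) * ((∑ i ∈ range (k - 1 - r), (i + 1) : ℕ) : ℝ) = (k - 1 - r) * (k - r) := by
    have h := congrArg (Nat.cast (R := ℝ)) (two_mul_sum_range_succ (k - 1 - r))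
    rw [Nat.cast_mul, Nat.cast_mul, Nat.cast_add, Nat.cast_sub (by omega : r ≤ k - 1),
      Nat.cast_sub (by omega : 1 ≤ k)] at h
    push_cast at h ⊢
    linarith
  rw [Nat.cast_add, Nat.cast_add, Nat.cast_mul, Nat.cast_sub hs.le,
    Nat.cast_sub (by omega : 1 ≤ 2 * s), Nat.cast_sub hr]
  push_cast at h1 h2 ⊢
  linarith

/-- The estimate along the powers of a suitable integer. -/
lemma exists_powEnergy_pow_le {k r s : ℕ} (hr : 1 ≤ r) (hrk : r < k) (hk : 2 ≤ k)
    (hs : r * (r - 1) / 2 < s) {ε : ℝ} (hε : 0 < ε) :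
    ∃ Q : ℕ, 2 ≤ Q ∧ ∃ C : ℝ, 0 < C ∧ ∀ m : ℕ, 1 ≤ m →
      (powEnergy {k} (fun _ : Fin s => Icc (1 : ℤ) ((Q ^ m : ℕ) : ℤ)) : ℝ) ≤
        C * (((Q : ℝ) ^ m) ^ (2 * (s : ℝ) - k + ε + (etastar r s k - 1 / r)) +
          ((Q : ℝ) ^ m) ^ (2 * (s : ℝ) - k + ε + etastar r s (k - 1))) := by
  obtain ⟨K, D, hK, hmain⟩ := exists_powEnergy_le_vinoCount hr hrk hk hs
  have hr0 : (0 : ℝ) < r := by exact_mod_cast hr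
  have hk0 : (0 : ℝ) < k := by exact_mod_cast (by omega : 0 < k)
  obtain ⟨p, hp, hkp, hKp⟩ := exists_prime_le_rpow k (K : ℝ) (δ := ε / 4) (by positivity)
  obtain ⟨C, hC⟩ := hmain p hp hkp
  have hident := exponent_identity hr hrk hs
  set τ := s - r * (r - 1) / 2 with hτ
  have hτ1 : 1 ≤ τ := by omega
  set A := (2 * s - 1) * (r - 1) + r * (r - 1) / 2 + ∑ i ∈ range (k - 1 - r), (i + 1)
  set δ : ℝ := r * ε / 4 with hδ
  have hδ0 : 0 < δ := by positivity
  obtain ⟨c₁, hc₁, hJ₁⟩ := exists_vinoCount_le τ k hδ0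
  obtain ⟨c₂, hc₂, hJ₂⟩ := exists_vinoCount_le τ (k - 1) hδ0
  obtain ⟨c₃, hc₃, hd⟩ := exists_card_divisors_le (δ := δ / k) (by positivity)
  obtain ⟨H, hH, hH2, hHd⟩ := exists_dvd_multiple r
  set E₁ : ℝ := 2 * (τ : ℝ) - (k : ℝ) * ((k : ℝ) + 1) / 2 + etaExp τ k + δ with hE₁
  set E₂ : ℝ := 2 * (τ : ℝ) - ((k - 1 : ℕ) : ℝ) * (((k - 1 : ℕ) : ℝ) + 1) / 2 +
    etaExp τ (k - 1) + δ with hE₂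
  set b₁ : ℝ := c₁ * 2 ^ E₁ with hb₁
  set b₂ : ℝ := c₂ * 2 ^ E₂ with hb₂
  set b₃ : ℝ := 2 * (c₃ * (τ * 2 ^ k : ℝ) ^ (δ / k)) with hb₃
  have hb₁0 : 0 < b₁ := by positivity
  have hb₂0 : 0 < b₂ := by positivity
  have hb₃0 : 0 < b₃ := by positivity
  refine ⟨p ^ (r * H), ?_, C * D * (b₁ + b₃ * b₂) + 1, by positivity, fun m hm => ?_⟩
  · calc 2 ≤ p := hp.two_le
      _ = p ^ 1 := (pow_one p).symm
      _ ≤ p ^ (r * H) := Nat.pow_le_pow_right hp.pos (Nat.mul_pos hr hH)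
  set h := H * m with hh
  have hh1 : 1 ≤ h := Nat.mul_pos hH hm
  set L := p ^ h with hL
  have hL1 : 1 ≤ L := Nat.one_le_pow _ _ hp.pos
  set x : ℝ := (L : ℝ) with hx
  have hx1 : 1 ≤ x := by rw [hx]; exact_mod_cast hL1
  have hx0 : 0 < x := by linarith
  have hQ : (p ^ (r * H)) ^ m = p ^ (r * h) := by rw [← pow_mul, hh, mul_assoc]
  have hQx : ((p ^ (r * H) : ℕ) : ℝ) ^ m = x ^ (r : ℝ) := by
    rw [Real.rpow_natCast, hx, hL, ← Nat.cast_pow, hQ, mul_comm, pow_mul, Nat.cast_pow]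
  rw [hQx, hQ, ← Real.rpow_mul hx0.le, ← Real.rpow_mul hx0.le]
  set Δ := ⌊b₃ * x ^ δ⌋₊ with hΔ
  have hΔle : (Δ : ℝ) ≤ b₃ * x ^ δ := Nat.floor_le (by positivity)
  have hΔd : ∀ b : ℕ, 1 ≤ b → b ≤ τ * (2 * L) ^ k → 2 * #b.divisors ≤ Δ := by
    intro b hb1 hb2
    refine Nat.le_floor ?_
    have h1 : (b : ℝ) ≤ (τ * 2 ^ k : ℝ) * x ^ k := by
      calc (b : ℝ) ≤ ((τ * (2 * L) ^ k : ℕ) : ℝ) := by exact_mod_cast hb2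
        _ = _ := by push_cast; ring
    have h2 : (b : ℝ) ^ (δ / k) ≤ (τ * 2 ^ k : ℝ) ^ (δ / k) * x ^ δ := by
      refine (Real.rpow_le_rpow (by positivity) h1 (by positivity)).trans ?_
      rw [Real.mul_rpow (by positivity) (by positivity), ← Real.rpow_natCast x k,
        ← Real.rpow_mul hx0.le, mul_div_cancel₀ _ hk0.ne']
    calc ((2 * #b.divisors : ℕ) : ℝ) = 2 * (#b.divisors : ℝ) := by push_cast; rfl
      _ ≤ 2 * (c₃ * ((τ * 2 ^ k : ℝ) ^ (δ / k) * x ^ δ)) := by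
          have := (hd b hb1).trans (mul_le_mul_of_nonneg_left h2 (by linarith))
          linarith
      _ = _ := by rw [hb₃]; ring
  have hdvd : ∀ {d}, d ∣ H → d ∣ r * h := fun hd => (hd.mul_right m).mul_left r
  have hbound := hC h Δ hh1 (hdvd hH2) (fun i h1 h2 => hdvd (hHd i h1 h2)) hΔd
  set I := powEnergy {k} fun _ : Fin s => Icc (1 : ℤ) ((p : ℤ) ^ (r * h)) with hI
  have hIcast : powEnergy {k} (fun _ : Fin s => Icc (1 : ℤ) ((p ^ (r * h) : ℕ) : ℤ)) = I := by
    rw [hI]; push_cast; rfl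
  rw [hIcast]
  have hbR : x * (I : ℝ) ≤ C * D * (K : ℝ) ^ (r * h) * x ^ A *
      (x ^ (k - 1) * (vinoCount τ k (2 * L) : ℝ) + Δ * (vinoCount τ (k - 1) (2 * L) : ℝ)) := by
    have h1 := (Nat.cast_le (α := ℝ)).2 hbound
    push_cast at h1
    simpa [hx, hL] using h1
  have hKn : (K : ℝ) ^ (r * h) ≤ x ^ δ := by
    calc (K : ℝ) ^ (r * h) ≤ ((p : ℝ) ^ (ε / 4)) ^ (r * h) := pow_le_pow_left₀ (by positivity) hKp _
      _ = x ^ δ := by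
        rw [hx, hL, Nat.cast_pow, ← Real.rpow_natCast, ← Real.rpow_natCast,
          ← Real.rpow_mul (by positivity), ← Real.rpow_mul (by positivity), hδ]
        congr 1; push_cast; ring
  have hV : ∀ {w : ℕ} {c E : ℝ}, ((vinoCount τ w (2 * L) : ℕ) : ℝ) ≤ c * ((2 * L : ℕ) : ℝ) ^ E →
      (vinoCount τ w (2 * L) : ℝ) ≤ c * 2 ^ E * x ^ E := by
    intro w c E hw
    refine hw.trans (le_of_eq ?_)
    push_cast
    rw [Real.mul_rpow (by norm_num) (by positivity), mul_assoc]
  have hV₁ := hV (hJ₁ (2 * L) (by omega))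
  have hV₂ := hV (hJ₂ (2 * L) (by omega))
  have hfin : x * (I : ℝ) ≤ C * D * x ^ δ * x ^ A *
      (x ^ (k - 1) * (b₁ * x ^ E₁) + (b₃ * x ^ δ) * (b₂ * x ^ E₂)) := by
    refine hbR.trans ?_
    gcongr
  set F₁ : ℝ := r * (2 * (s : ℝ) - k + ε + (etastar r s k - 1 / r)) with hF₁
  set F₂ : ℝ := r * (2 * (s : ℝ) - k + ε + etastar r s (k - 1)) with hF₂
  have hk1 : ((k - 1 : ℕ) : ℝ) = k - 1 := by rw [Nat.cast_sub (by omega)]; simp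
  have hη : ∀ w, (r : ℝ) * etastar r s w = etaExp τ w := fun w => by
    unfold etastar; rw [mul_div_cancel₀ _ hr0.ne']
  have hrr : (r : ℝ) * (1 / r) = 1 := mul_one_div_cancel hr0.ne'
  have hF₁' : F₁ = r * (2 * s - k) + 4 * δ + etaExp τ k - 1 := by
    rw [hF₁, ← hη, hδ]; linear_combination -hrr
  have hF₂' : F₂ = r * (2 * s - k) + 4 * δ + etaExp τ (k - 1) := by
    rw [hF₂, ← hη, hδ]; ring
  have hT₁ : x ^ δ * x ^ A * (x ^ (k - 1) * x ^ E₁) ≤ x * x ^ F₁ := by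
    calc _ = x ^ (δ + A + (((k - 1 : ℕ) : ℝ) + E₁)) := by
          rw [Real.rpow_add hx0 (δ + A), Real.rpow_add hx0 δ, Real.rpow_add hx0 _ E₁,
            Real.rpow_natCast, Real.rpow_natCast]
      _ ≤ x ^ (1 + F₁) := by
          refine Real.rpow_le_rpow_of_exponent_le hx1 ?_
          rw [hF₁', hE₁, hk1]
          linarith
      _ = _ := by rw [Real.rpow_add hx0, Real.rpow_one]
  have hT₂ : x ^ δ * x ^ A * (x ^ δ * x ^ E₂) ≤ x * x ^ F₂ := by
    calc _ = x ^ (δ + A + (δ + E₂)) := by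
          rw [Real.rpow_add hx0 (δ + A), Real.rpow_add hx0 δ A, Real.rpow_add hx0 δ E₂,
            Real.rpow_natCast]
      _ ≤ x ^ (1 + F₂) := by
          refine Real.rpow_le_rpow_of_exponent_le hx1 ?_
          rw [hF₂', hE₂, hk1]
          linarith
      _ = _ := by rw [Real.rpow_add hx0, Real.rpow_one]
  clear_value F₁ F₂ E₁ E₂ δ x
  have hfin2 : x * (I : ℝ) ≤ x * ((C * D * (b₁ + b₃ * b₂) + 1) * (x ^ F₁ + x ^ F₂)) := by
    have hCD : (0 : ℝ) ≤ C * D := by positivity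
    have p₁ : 0 ≤ x ^ F₁ := by positivity
    have p₂ : 0 ≤ x ^ F₂ := by positivity
    calc x * (I : ℝ) ≤ _ := hfin
      _ = C * D * b₁ * (x ^ δ * x ^ A * (x ^ (k - 1) * x ^ E₁)) +
          C * D * (b₃ * b₂) * (x ^ δ * x ^ A * (x ^ δ * x ^ E₂)) := by ring
      _ ≤ C * D * b₁ * (x * x ^ F₁) + C * D * (b₃ * b₂) * (x * x ^ F₂) := by gcongr
      _ = x * (C * D * b₁ * x ^ F₁ + C * D * (b₃ * b₂) * x ^ F₂) := by ring
      _ ≤ _ := by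
        refine mul_le_mul_of_nonneg_left ?_ hx0.le
        have q₁ : 0 ≤ C * D * b₁ * x ^ F₂ := by positivity
        have q₂ : 0 ≤ C * D * (b₃ * b₂) * x ^ F₁ := by positivity
        have e : (C * D * (b₁ + b₃ * b₂) + 1) * (x ^ F₁ + x ^ F₂) =
            C * D * b₁ * x ^ F₁ + C * D * (b₃ * b₂) * x ^ F₂ +
              (C * D * b₁ * x ^ F₂ + C * D * (b₃ * b₂) * x ^ F₁ + x ^ F₁ + x ^ F₂) := by ring
        rw [e]
        linarith
  exact le_of_mul_le_mul_left hfin2 hx0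

end WeylMoment

/-- Theorem 8.5: for 1 ≤ r ≤ k-1 one has
I_s(X) ≤ C X^{2s-k+ε} (X^{η*_r(s,k)-1/r} + X^{η*_r(s,k-1)}). -/
theorem theorem8_5 (k r s : ℕ) (hk : 3 ≤ k) (hr1 : 1 ≤ r) (hrk : r ≤ k - 1)
    (hs : r*(r-1)/2 < s) (ε : ℝ) (hε : 0 < ε) :
    ∃ C : ℝ, 0 < C ∧ ∃ X₀ : ℝ, ∀ X : ℝ, X₀ ≤ X →
      Iint s k X ≤
        C * X ^ (2*(s:ℝ) - (k:ℝ) + ε) *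
          (X ^ (etastar r s k - 1/(r:ℝ)) + X ^ (etastar r s (k-1))) := by
  obtain ⟨Q, hQ, C, hC, h⟩ := WeylMoment.exists_powEnergy_pow_le (k := k) hr1 (by omega)
    (by omega) hs hε
  set E := 2*(s:ℝ) - (k:ℝ) + ε
  set u := etastar r s k - 1/(r:ℝ)
  set v := etastar r s (k-1)
  have hQ1 : (1:ℝ) < Q := by exact_mod_cast hQ
  have hQ0 : (0:ℝ) < Q := by linarith
  refine ⟨C * ((Q:ℝ) ^ |E + u| + (Q:ℝ) ^ |E + v|), by positivity, 1, fun X hX => ?_⟩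
  have hX0 : 0 < X := by linarith
  obtain ⟨m, hm1, hm2⟩ := exists_nat_pow_near hX hQ1
  have hup : (Q:ℝ) ^ (m+1) ≤ Q * X := by
    rw [pow_succ']
    exact mul_le_mul_of_nonneg_left hm1 hQ0.le
  have hfloor : ⌊X⌋₊ ≤ Q ^ (m+1) := by
    have h1 : (⌊X⌋₊:ℝ) ≤ (Q:ℝ) ^ (m+1) := (Nat.floor_le hX0.le).trans hm2.le
    exact_mod_cast h1
  have hu := WeylMoment.rpow_le_of_le_mul hX0 hm2.le hup (E + u)
  have hv := WeylMoment.rpow_le_of_le_mul hX0 hm2.le hup (E + v)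
  have pu : 0 ≤ X ^ (E + u) := by positivity
  have pv : 0 ≤ X ^ (E + v) := by positivity
  have qu : 0 ≤ (Q:ℝ) ^ |E + u| := by positivity
  have qv : 0 ≤ (Q:ℝ) ^ |E + v| := by positivity
  rw [WeylMoment.Iint_eq_powEnergy]
  have hmono : WeylMoment.powEnergy {k} (fun _ : Fin s => Finset.Icc (1:ℤ) ⌊X⌋₊) ≤
      WeylMoment.powEnergy {k} (fun _ : Fin s => Finset.Icc (1:ℤ) ((Q ^ (m+1) : ℕ) : ℤ)) :=
    WeylMoment.powEnergy_mono fun _ => Finset.Icc_subset_Icc_right (by exact_mod_cast hfloor)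
  calc (WeylMoment.powEnergy {k} (fun _ : Fin s => Finset.Icc (1:ℤ) ⌊X⌋₊) : ℝ)
      ≤ C * (((Q:ℝ) ^ (m+1)) ^ (E + u) + ((Q:ℝ) ^ (m+1)) ^ (E + v)) :=
        (Nat.cast_le.2 hmono).trans (h (m+1) (by omega))
    _ ≤ C * ((Q:ℝ) ^ |E + u| * X ^ (E + u) + (Q:ℝ) ^ |E + v| * X ^ (E + v)) := by gcongr
    _ ≤ C * (((Q:ℝ) ^ |E + u| + (Q:ℝ) ^ |E + v|) * (X ^ (E + u) + X ^ (E + v))) := by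
        refine mul_le_mul_of_nonneg_left ?_ hC.le
        nlinarith [mul_nonneg qu pv, mul_nonneg qv pu]
    _ = _ := by rw [Real.rpow_add hX0 E u, Real.rpow_add hX0 E v]; ring
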